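/- arXiv:2410.22576 — 10 statements merged into one kernel-verified Lean document; each statement's English description precedes it below -/
import Mathlib

section
/- Let h : ℝ^N → [0,∞) be a convex function, let c(x,y) = h(y − x), and let μ, ν be Borel probability measures on ℝ^N with μ absolutely continuous with respect to Lebesgue measure and with finite minimal transport cost for c. Let π be an optimal transport plan from μ to ν for the cost c, let (π_z)_{z ∈ ℝ^N} be the disintegration of π with respect to the projection onto the first coordinate, and for each z define the probability measure π̃_z by π̃_z(B) = π_z(B + z) for every Borel set B ⊆ ℝ^N. Then the set E = {z ∈ ℝ^N : there exist x, y ∈ supp(π̃_z) with (x,y) ∈ H_h} has μ-measure zero. -/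
open MeasureTheory Metric Set
open scoped ENNReal

noncomputable section

abbrev Euc (N : ℕ) := EuclideanSpace ℝ (Fin N)

/-- An admissible transport plan (coupling) between `μ` and `ν`. -/
def IsCoupling {N : ℕ} (μ ν : Measure (Euc N)) (π : Measure (Euc N × Euc N)) : Prop :=
  IsProbabilityMeasure π ∧ π.map Prod.fst = μ ∧ π.map Prod.snd = ν

/-- Total cost of a transport plan. -/
noncomputable def planCost {N : ℕ} (c : Euc N → Euc N → ℝ)
    (π : Measure (Euc N × Euc N)) : ℝ≥0∞ :=
  ∫⁻ p, ENNReal.ofReal (c p.1 p.2) ∂π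

/-- Minimal transport cost between `μ` and `ν` for the cost `c`. -/
noncomputable def minCost {N : ℕ} (c : Euc N → Euc N → ℝ)
    (μ ν : Measure (Euc N)) : ℝ≥0∞ :=
  ⨅ π ∈ {π : Measure (Euc N × Euc N) | IsCoupling μ ν π}, planCost c π

/-- `π` is an optimal transport plan from `μ` to `ν` for the cost `c`. -/
def IsOptimalPlan {N : ℕ} (c : Euc N → Euc N → ℝ) (μ ν : Measure (Euc N))
    (π : Measure (Euc N × Euc N)) : Prop :=
  IsCoupling μ ν π ∧ planCost c π = minCost c μ ν

/-- Secondary functional: the integral of the squared Euclidean distance. -/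
noncomputable def secondaryCost {N : ℕ} (π : Measure (Euc N × Euc N)) : ℝ≥0∞ :=
  ∫⁻ p, ENNReal.ofReal (dist p.1 p.2 ^ 2) ∂π

/-- `π` belongs to `Π₂(μ,ν)`: it is optimal for `c` and minimises the secondary
functional among optimal plans. -/
def IsSecondaryOptimal {N : ℕ} (c : Euc N → Euc N → ℝ) (μ ν : Measure (Euc N))
    (π : Measure (Euc N × Euc N)) : Prop :=
  IsOptimalPlan c μ ν π ∧
    ∀ π', IsOptimalPlan c μ ν π' → secondaryCost π ≤ secondaryCost π'

/-- A plan is induced by a map if it is the pushforward of `μ` under `x ↦ (x, T x)`. -/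
def InducedByMap {N : ℕ} (μ : Measure (Euc N)) (π : Measure (Euc N × Euc N)) : Prop :=
  ∃ T : Euc N → Euc N, AEMeasurable T μ ∧ π = μ.map (fun x => (x, T x))

/-- The set of strict convexity of a convex function `h`. -/
def strictConvexitySet {N : ℕ} (h : Euc N → ℝ) : Set (Euc N × Euc N) :=
  {p | ∀ t : ℝ, t ∈ Set.Ioo (0 : ℝ) 1 →
    h (t • p.1 + (1 - t) • p.2) < t * h p.1 + (1 - t) * h p.2}

/-- The (topological) support of a measure: points all of whose neighbourhoods
have positive measure. -/
def msupport {N : ℕ} (m : Measure (Euc N)) : Set (Euc N) :=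
  {x | ∀ U ∈ nhds x, 0 < m U}

/-!
An optimal plan charges no pair of points whose targets could be exchanged at a lower cost, so the
support `Γ` of `π` is 2-monotone: `h (w - z) + h (w' - z') ≤ h (w' - z) + h (w - z')` whenever
`(z, w), (z', w') ∈ Γ`. Fix a pair `(x, y)` of strict convexity and put `v = (x - y) / 2`. For every
small `s > 0` and every `(x', y')` near `(x, y)`, convexity gives
`h (x' - s • v) + h (y' + s • v) < h x' + h y'`, so 2-monotonicity forbids two base points
differing by `s • v` from which `Γ` transports along displacements near `x` and near `y`. By
Steinhaus' theorem the closed set of such base points is Lebesgue null, and countably many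
neighbourhoods cover the set of pairs of strict convexity.
-/

section Exchange

variable {X Y : Type*}

/-- The total cost of the two transports in a pair of source-target pairs. -/
def pairCost {M : Type*} [Add M] (c : X × Y → M) (w : (X × Y) × (X × Y)) : M :=
  c w.1 + c w.2

/-- The pair of source-target pairs obtained by exchanging the two targets. -/
def exchangeTargets (w : (X × Y) × (X × Y)) : (X × Y) × (X × Y) :=
  ((w.1.1, w.2.2), (w.2.1, w.1.2))

/-- `c`-cyclical monotonicity restricted to cycles of length two. -/
def IsTwoMonotone {M : Type*} [Add M] [LE M] (c : X × Y → M) (Γ : Set (X × Y)) : Prop :=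
  ∀ p ∈ Γ, ∀ q ∈ Γ, pairCost c (p, q) ≤ pairCost c (exchangeTargets (p, q))

theorem IsTwoMonotone.of_ofReal {c : X × Y → ℝ} {Γ : Set (X × Y)} (hc : ∀ p, 0 ≤ c p)
    (hΓ : IsTwoMonotone (fun p => ENNReal.ofReal (c p)) Γ) : IsTwoMonotone c Γ := by
  intro p hp q hq
  have hle := hΓ p hp q hq
  simp only [pairCost] at hle ⊢
  rwa [← ENNReal.ofReal_add (hc _) (hc _), ← ENNReal.ofReal_add (hc _) (hc _),
    ENNReal.ofReal_le_ofReal_iff (add_nonneg (hc _) (hc _))] at hle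

variable [MeasurableSpace X] [MeasurableSpace Y]

/-- Optimality of `π` for the Monge-Kantorovich problem with cost `c` between its own marginals. -/
def IsCostMinimizing (c : X × Y → ℝ≥0∞) (π : Measure (X × Y)) : Prop :=
  ∀ π' : Measure (X × Y), π'.fst = π.fst → π'.snd = π.snd → ∫⁻ p, c p ∂π ≤ ∫⁻ p, c p ∂π'

/-- Draw two independent source-target pairs from `π`, rearrange them by `T`, and keep either of the
two resulting pairs with probability one half. This is a competitor of `π` as soon as `T` only
redistributes the targets. -/
def rearrangedPlan (π : Measure (X × Y)) (T : (X × Y) × (X × Y) → (X × Y) × (X × Y)) :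
    Measure (X × Y) :=
  (2⁻¹ : ℝ≥0∞) • (((π.prod π).map T).fst + ((π.prod π).map T).snd)

theorem measurable_pairCost {c : X × Y → ℝ≥0∞} (hc : Measurable c) : Measurable (pairCost c) :=
  (hc.comp measurable_fst).add (hc.comp measurable_snd)

theorem measurable_exchangeTargets :
    Measurable (exchangeTargets : (X × Y) × (X × Y) → (X × Y) × (X × Y)) := by
  unfold exchangeTargets
  fun_prop

variable {π : Measure (X × Y)} {T : (X × Y) × (X × Y) → (X × Y) × (X × Y)}

theorem lintegral_rearrangedPlan (hT : Measurable T) {f : X × Y → ℝ≥0∞} (hf : Measurable f) :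
    ∫⁻ p, f p ∂(rearrangedPlan π T) = 2⁻¹ * ∫⁻ w, pairCost f (T w) ∂(π.prod π) := by
  rw [rearrangedPlan, lintegral_smul_measure, lintegral_add_measure, Measure.fst, Measure.snd,
    lintegral_map hf measurable_fst, lintegral_map hf measurable_snd,
    ← lintegral_add_left (f := fun w : (X × Y) × (X × Y) => f w.1) (hf.comp measurable_fst),
    ← lintegral_map (measurable_pairCost hf) hT]
  rfl

theorem rearrangedPlan_id [IsProbabilityMeasure π] : rearrangedPlan π id = π := by
  rw [rearrangedPlan, Measure.map_id, Measure.fst_prod, Measure.snd_prod, ← two_smul ℝ≥0∞ π,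
    smul_smul, ENNReal.inv_mul_cancel two_ne_zero ENNReal.ofNat_ne_top, one_smul]

theorem lintegral_eq_lintegral_pairCost [IsProbabilityMeasure π] {f : X × Y → ℝ≥0∞}
    (hf : Measurable f) : ∫⁻ p, f p ∂π = 2⁻¹ * ∫⁻ w, pairCost f w ∂(π.prod π) := by
  simpa only [rearrangedPlan_id, id] using lintegral_rearrangedPlan (π := π) measurable_id hf

theorem map_rearrangedPlan [IsProbabilityMeasure π] (hT : Measurable T) {Z : Type*}
    [MeasurableSpace Z] {g : X × Y → Z} (hg : Measurable g)
    (hgT : ∀ (f : Z → ℝ≥0∞) w, pairCost (f ∘ g) (T w) = pairCost (f ∘ g) w) :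
    (rearrangedPlan π T).map g = π.map g := by
  refine Measure.ext_of_lintegral _ fun f hf => ?_
  have hfg : Measurable (f ∘ g) := hf.comp hg
  calc ∫⁻ z, f z ∂(rearrangedPlan π T).map g = ∫⁻ p, (f ∘ g) p ∂(rearrangedPlan π T) :=
        lintegral_map hf hg
    _ = ∫⁻ p, (f ∘ g) p ∂π := by
        rw [lintegral_rearrangedPlan hT hfg, lintegral_eq_lintegral_pairCost hfg]
        simp only [hgT]
    _ = ∫⁻ z, f z ∂π.map g := (lintegral_map hf hg).symm

theorem IsCostMinimizing.ae_pairCost_le_exchangeTargets [IsProbabilityMeasure π]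
    {c : X × Y → ℝ≥0∞} (hopt : IsCostMinimizing c π) (hc : Measurable c)
    (hfin : ∫⁻ p, c p ∂π ≠ ∞) :
    ∀ᵐ w ∂(π.prod π), pairCost c w ≤ pairCost c (exchangeTargets w) := by
  classical
  have hpair : Measurable (pairCost c) := measurable_pairCost hc
  let S : Set ((X × Y) × (X × Y)) := {w | pairCost c (exchangeTargets w) < pairCost c w}
  have hS : MeasurableSet S :=
    measurableSet_lt (hpair.comp measurable_exchangeTargets) hpair
  let T := S.piecewise exchangeTargets id
  have hT : Measurable T := measurable_exchangeTargets.piecewise hS measurable_id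
  have hT_le (w) : pairCost c (T w) ≤ pairCost c w := by
    by_cases hw : w ∈ S
    · simpa only [T, S.piecewise_eq_of_mem _ _ hw] using le_of_lt hw
    · simp only [T, S.piecewise_eq_of_notMem _ _ hw, id, le_refl]
  have hT_fst : (rearrangedPlan π T).fst = π.fst := by
    refine map_rearrangedPlan hT measurable_fst fun f w => ?_
    by_cases hw : w ∈ S <;> simp [T, hw, pairCost, exchangeTargets]
  have hT_snd : (rearrangedPlan π T).snd = π.snd := by
    refine map_rearrangedPlan hT measurable_snd fun f w => ?_
    by_cases hw : w ∈ S <;> simp [T, hw, pairCost, exchangeTargets, add_comm]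
  have hcost := hopt _ hT_fst hT_snd
  rw [lintegral_rearrangedPlan hT hc, lintegral_eq_lintegral_pairCost hc,
    ENNReal.mul_le_mul_iff_right (by simp) (by simp)] at hcost
  have hpair_fin : ∫⁻ w, pairCost c w ∂(π.prod π) ≠ ∞ := fun htop =>
    hfin (by rw [lintegral_eq_lintegral_pairCost hc, htop, ENNReal.mul_top (by simp)])
  have hT_eq : (fun w => pairCost c (T w)) =ᵐ[π.prod π] pairCost c :=
    ae_eq_of_ae_le_of_lintegral_le (.of_forall hT_le)
      (ne_top_of_le_ne_top hpair_fin (lintegral_mono hT_le)) hpair.aemeasurable hcost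
  filter_upwards [hT_eq] with w hw
  by_contra! hlt
  have hTw : T w = exchangeTargets w := S.piecewise_eq_of_mem _ _ hlt
  exact hlt.ne (hTw ▸ hw)

end Exchange

section Support

variable {X Y : Type*} [MeasurableSpace X] [TopologicalSpace Y] [MeasurableSpace Y]

theorem support_map_subset_of_ae_mem [OpensMeasurableSpace Y] {m : Measure X} {f : X → Y}
    (hf : AEMeasurable f m) {D : Set Y} (hD : IsClosed D) (hmem : ∀ᵐ x ∂m, f x ∈ D) :
    (m.map f).support ⊆ D :=
  Measure.support_subset_of_isClosed hD ((ae_map_iff hf hD.measurableSet).2 hmem)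

variable [TopologicalSpace X]

theorem prod_support_subset_support_prod {μ : Measure X} {ν : Measure Y} [SFinite ν] :
    μ.support ×ˢ ν.support ⊆ (μ.prod ν).support := by
  rintro ⟨x, y⟩ ⟨hx, hy⟩
  refine ((nhds_basis_opens x).prod_nhds (nhds_basis_opens y)).mem_measureSupport.2 ?_
  rintro ⟨U, V⟩ ⟨⟨hxU, hU⟩, hyV, hV⟩
  rw [Measure.prod_prod]
  exact ENNReal.mul_pos ((Measure.mem_support_iff_forall x).1 hx U (hU.mem_nhds hxU)).ne'
    ((Measure.mem_support_iff_forall y).1 hy V (hV.mem_nhds hyV)).ne'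

theorem IsCostMinimizing.isTwoMonotone_support [OpensMeasurableSpace (X × Y)]
    {π : Measure (X × Y)} [IsProbabilityMeasure π] {c : X × Y → ℝ≥0∞}
    (hopt : IsCostMinimizing c π) (hc : Continuous c) (hfin : ∫⁻ p, c p ∂π ≠ ∞) :
    IsTwoMonotone c π.support := by
  have hclosed : IsClosed {w : (X × Y) × (X × Y) | pairCost c w ≤ pairCost c (exchangeTargets w)} :=
    isClosed_le (by unfold pairCost; fun_prop) (by unfold pairCost exchangeTargets; fun_prop)
  intro p hp q hq
  exact Measure.support_subset_of_isClosed hclosed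
    (hopt.ae_pairCost_le_exchangeTargets hc.measurable hfin)
    (prod_support_subset_support_prod ⟨hp, hq⟩)

end Support

section Disintegration

variable {X Y : Type*} [MeasurableSpace X] [MeasurableSpace Y]

/-- `κ` is a disintegration of `π` over its first marginal. As `z ↦ κ z` is not required to be
measurable, the right-hand side is in general a lower integral. -/
def IsDisintegration (κ : X → Measure Y) (π : Measure (X × Y)) : Prop :=
  ∀ s, MeasurableSet s → π s = ∫⁻ z, κ z {w | (z, w) ∈ s} ∂π.fst

theorem IsDisintegration.ae_ae_mem {κ : X → Measure Y} [∀ z, IsProbabilityMeasure (κ z)]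
    {π : Measure (X × Y)} [IsProbabilityMeasure π] (hκ : IsDisintegration κ π) {s : Set (X × Y)}
    (hs : MeasurableSet s) (hmem : ∀ᵐ p ∂π, p ∈ s) : ∀ᵐ z ∂π.fst, ∀ᵐ w ∂κ z, (z, w) ∈ s := by
  have hlint : ∫⁻ z, κ z {w | (z, w) ∈ s} ∂π.fst = 1 := by
    rw [← hκ s hs, ← prob_compl_eq_zero_iff hs]
    exact hmem
  have hone : (fun z => κ z {w | (z, w) ∈ s}) =ᵐ[π.fst] fun _ => 1 :=
    ae_eq_of_ae_le_of_lintegral_le (.of_forall fun _ => prob_le_one)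
      (by simp [hlint]) aemeasurable_const (by simp [hlint])
  filter_upwards [hone] with z hz
  exact (prob_compl_eq_zero_iff (measurable_prodMk_left hs)).2 hz

theorem IsDisintegration.ae_translate_support_subset {E : Type*} [AddCommGroup E]
    [TopologicalSpace E] [IsTopologicalAddGroup E] [SecondCountableTopology E] [MeasurableSpace E]
    [BorelSpace E] {κ : E → Measure E} [∀ z, IsProbabilityMeasure (κ z)]
    {π : Measure (E × E)} [IsProbabilityMeasure π] (hκ : IsDisintegration κ π) :
    ∀ᵐ z ∂π.fst, ∀ x ∈ ((κ z).map (· - z)).support, (z, z + x) ∈ π.support := by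
  filter_upwards [hκ.ae_ae_mem Measure.isClosed_support.measurableSet Measure.support_mem_ae]
    with z hz
  have hclosed : IsClosed {x | (z, z + x) ∈ π.support} :=
    Measure.isClosed_support.preimage (f := fun x => (z, z + x)) (by fun_prop)
  have hmem : ∀ᵐ w ∂κ z, w - z ∈ {x | (z, z + x) ∈ π.support} := by
    simpa only [mem_ofPred_eq, add_sub_cancel] using hz
  exact support_map_subset_of_ae_mem (measurable_sub_const z).aemeasurable hclosed hmem

end Disintegration

section StrictConvexity

variable {E : Type*} [AddCommGroup E] [Module ℝ E] {h : E → ℝ}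

/-- The pairs at whose midpoint `h` lies strictly below its chord; for convex `h` these are the
pairs of strict convexity. -/
def midpointStrictPairs (h : E → ℝ) : Set (E × E) :=
  {p | h (midpoint ℝ p.1 p.2) < (h p.1 + h p.2) / 2}

theorem map_add_smul_le_of_convexOn {D : Set E} (hconv : ConvexOn ℝ D h) {x v : E} (hx : x ∈ D)
    (hxv : x + v ∈ D) {s : ℝ} (hs : s ∈ Icc 0 1) :
    h (x + s • v) ≤ (1 - s) * h x + s * h (x + v) := by
  have hle := hconv.2 hx hxv (sub_nonneg.2 hs.2) hs.1 (by ring)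
  rwa [show (1 - s) • x + s • (x + v) = x + s • v by module] at hle

theorem map_sub_smul_add_map_add_smul_lt_of_convexOn {D : Set E} (hconv : ConvexOn ℝ D h)
    {x y v : E} (hx : x ∈ D) (hxv : x - v ∈ D) (hy : y ∈ D) (hyv : y + v ∈ D)
    (hlt : h (x - v) + h (y + v) < h x + h y) {s : ℝ} (hs : s ∈ Ioc 0 1) :
    h (x - s • v) + h (y + s • v) < h x + h y := by
  have hle_x : h (x - s • v) ≤ (1 - s) * h x + s * h (x - v) := by
    rw [sub_eq_add_neg] at hxv ⊢
    rw [← smul_neg, sub_eq_add_neg x v]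
    exact map_add_smul_le_of_convexOn hconv hx hxv ⟨hs.1.le, hs.2⟩
  have hle_y := map_add_smul_le_of_convexOn hconv hy hyv ⟨hs.1.le, hs.2⟩
  calc h (x - s • v) + h (y + s • v)
      ≤ (1 - s) * (h x + h y) + s * (h (x - v) + h (y + v)) := by linarith
    _ < (1 - s) * (h x + h y) + s * (h x + h y) := by gcongr; exact hs.1
    _ = h x + h y := by ring

theorem exists_eventually_map_sub_add_map_add_lt [TopologicalSpace E] [IsTopologicalAddGroup E]
    (hcont : Continuous h) {p : E × E} (hp : p ∈ midpointStrictPairs h) :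
    ∃ v : E, ∀ᶠ q in nhds p, h (q.1 - v) + h (q.2 + v) < h q.1 + h q.2 := by
  let v := p.1 - midpoint ℝ p.1 p.2
  have hfst : p.1 - v = midpoint ℝ p.1 p.2 := sub_sub_cancel _ _
  have hsnd : p.2 + v = midpoint ℝ p.1 p.2 := by
    rw [← add_sub_assoc, sub_eq_iff_eq_add, midpoint_add_self, add_comm]
  have hlt : h (p.1 - v) + h (p.2 + v) < h p.1 + h p.2 := by
    have hmid : h (midpoint ℝ p.1 p.2) < (h p.1 + h p.2) / 2 := hp
    rw [hfst, hsnd]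
    linarith
  exact ⟨v, (isOpen_lt (by fun_prop) (by fun_prop)).mem_nhds hlt⟩

end StrictConvexity

section BranchingPoints

variable {E : Type*}

/-- The base points `z` from which `Γ` transports along both displacements of some pair in `K`,
that is to both `z + q.1` and `z + q.2` for some `q ∈ K`. -/
def branchingPoints [Add E] (Γ K : Set (E × E)) : Set E :=
  {z | ∃ q ∈ K, (z, z + q.1) ∈ Γ ∧ (z, z + q.2) ∈ Γ}

theorem branchingPoints_mono [Add E] (Γ : Set (E × E)) {K L : Set (E × E)}
    (hKL : K ⊆ L) : branchingPoints Γ K ⊆ branchingPoints Γ L :=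
  fun _ ⟨q, hq, hΓ⟩ => ⟨q, hKL hq, hΓ⟩

theorem branchingPoints_sUnion [Add E] (Γ : Set (E × E)) (S : Set (Set (E × E))) :
    branchingPoints Γ (⋃₀ S) = ⋃ K ∈ S, branchingPoints Γ K := by
  ext z
  simp only [branchingPoints, mem_sUnion, mem_iUnion, mem_ofPred_eq]
  grind

theorem isClosed_branchingPoints [Add E] [TopologicalSpace E] [ContinuousAdd E]
    {Γ K : Set (E × E)} (hΓ : IsClosed Γ) (hK : IsCompact K) :
    IsClosed (branchingPoints Γ K) := by
  have : CompactSpace K := isCompact_iff_compactSpace.1 hK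
  let T : Set (E × K) := {w | (w.1, w.1 + w.2.1.1) ∈ Γ ∧ (w.1, w.1 + w.2.1.2) ∈ Γ}
  have hT : IsClosed T :=
    (hΓ.preimage (f := fun w : E × K => (w.1, w.1 + w.2.1.1)) (by fun_prop)).inter
      (hΓ.preimage (f := fun w : E × K => (w.1, w.1 + w.2.1.2)) (by fun_prop))
  have himage : Prod.fst '' T = branchingPoints Γ K := by
    ext z
    exact ⟨fun ⟨⟨_, q⟩, hq, hz⟩ => hz ▸ ⟨q.1, q.2, hq⟩,
      fun ⟨q, hqK, hq⟩ => ⟨(z, ⟨q, hqK⟩), hq, rfl⟩⟩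
  exact himage ▸ isClosedMap_fst_of_compactSpace T hT

theorem IsTwoMonotone.sub_ne_of_mem_branchingPoints [AddCommGroup E] {h : E → ℝ}
    {Γ : Set (E × E)} (hΓ : IsTwoMonotone (fun p => h (p.2 - p.1)) Γ) {K₁ K₂ : Set E} {v : E}
    (hlt : ∀ x ∈ K₁, ∀ y ∈ K₂, h (x - v) + h (y + v) < h x + h y) {z z' : E}
    (hz : z ∈ branchingPoints Γ (K₁ ×ˢ K₂)) (hz' : z' ∈ branchingPoints Γ (K₁ ×ˢ K₂)) :
    z' - z ≠ v := by
  rintro rfl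
  obtain ⟨⟨x, _⟩, ⟨hx, _⟩, hzx, _⟩ := hz
  obtain ⟨⟨_, y⟩, ⟨_, hy⟩, _, hzy⟩ := hz'
  have hmono := hΓ _ hzx _ hzy
  simp only [pairCost, exchangeTargets, add_sub_cancel_left] at hmono
  rw [show z' + y - z = y + (z' - z) by abel, show z + x - z' = x - (z' - z) by abel] at hmono
  linarith [hlt x hx y hy]

variable [NormedAddCommGroup E] [NormedSpace ℝ E] [FiniteDimensional ℝ E]
  [MeasurableSpace E] [BorelSpace E] {vol : Measure E} [vol.IsAddHaarMeasure]

open scoped Pointwise in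
theorem addHaar_eq_zero_of_forall_sub_ne_smul {A : Set E} (hA : MeasurableSet A) (v : E)
    (hsub : ∀ z ∈ A, ∀ z' ∈ A, ∀ s ∈ Ioc (0 : ℝ) 1, z' - z ≠ s • v) : vol A = 0 := by
  by_contra hne
  have hsteinhaus : ∀ᶠ x in nhds (0 : E), x ∈ A - A :=
    Measure.sub_mem_nhds_zero_of_addHaar_pos vol A hA (pos_iff_ne_zero.2 hne)
  have htendsto : Filter.Tendsto (fun s : ℝ => s • v) (nhdsWithin 0 (Ioi 0)) (nhds 0) := by
    have hcont : Continuous fun s : ℝ => s • v := by fun_prop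
    simpa only [zero_smul] using (hcont.tendsto 0).mono_left nhdsWithin_le_nhds
  obtain ⟨s, ⟨z', hz', z, hz, hzs⟩, hs⟩ :=
    ((htendsto.eventually hsteinhaus).and (Ioc_mem_nhdsGT one_pos)).exists
  exact hsub z hz z' hz' s hs hzs

variable {h : E → ℝ} {Γ : Set (E × E)}

theorem exists_mem_nhds_addHaar_branchingPoints_eq_zero (hconv : ConvexOn ℝ univ h)
    (hΓ : IsClosed Γ) (hmono : IsTwoMonotone (fun p => h (p.2 - p.1)) Γ) {p : E × E}
    (hp : p ∈ midpointStrictPairs h) : ∃ K ∈ nhds p, vol (branchingPoints Γ K) = 0 := by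
  obtain ⟨v, hlt⟩ :=
    exists_eventually_map_sub_add_map_add_lt hconv.locallyLipschitz.continuous hp
  obtain ⟨r, hr, hball⟩ := nhds_basis_closedBall.mem_iff.1 hlt
  refine ⟨closedBall p r, closedBall_mem_nhds p hr,
    addHaar_eq_zero_of_forall_sub_ne_smul
      (isClosed_branchingPoints hΓ (isCompact_closedBall p r)).measurableSet v ?_⟩
  rw [← closedBall_prod_same] at hball ⊢
  exact fun z hz z' hz' s hs => hmono.sub_ne_of_mem_branchingPoints
    (fun x hx y hy => map_sub_smul_add_map_add_smul_lt_of_convexOn hconv (mem_univ _) (mem_univ _)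
      (mem_univ _) (mem_univ _) (hball (mk_mem_prod hx hy)) hs) hz hz'

theorem addHaar_branchingPoints_midpointStrictPairs_eq_zero (hconv : ConvexOn ℝ univ h)
    (hΓ : IsClosed Γ) (hmono : IsTwoMonotone (fun p => h (p.2 - p.1)) Γ) :
    vol (branchingPoints Γ (midpointStrictPairs h)) = 0 := by
  refine (HereditarilyLindelofSpace.isLindelof (midpointStrictPairs h)).induction_on
    (p := fun K => vol (branchingPoints Γ K) = 0)
    (fun K L hKL hL => measure_mono_null (branchingPoints_mono Γ hKL) hL) (fun S hS hnull => ?_)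
    fun p hp => ?_
  · rwa [branchingPoints_sUnion, measure_biUnion_null_iff hS]
  · obtain ⟨K, hK, hnull⟩ :=
      exists_mem_nhds_addHaar_branchingPoints_eq_zero (vol := vol) hconv hΓ hmono hp
    exact ⟨K, mem_nhdsWithin_of_mem_nhds hK, hnull⟩

theorem strict_convexity_pairs_null_general (hconv : ConvexOn ℝ univ h) (hnonneg : ∀ x, 0 ≤ h x)
    {π : Measure (E × E)} [IsProbabilityMeasure π] (hac : π.fst ≪ vol)
    (hfin : ∫⁻ p, ENNReal.ofReal (h (p.2 - p.1)) ∂π ≠ ∞)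
    (hopt : IsCostMinimizing (fun p => ENNReal.ofReal (h (p.2 - p.1))) π)
    {κ : E → Measure E} [∀ z, IsProbabilityMeasure (κ z)] (hκ : IsDisintegration κ π) :
    π.fst {z | ∃ x ∈ ((κ z).map (· - z)).support, ∃ y ∈ ((κ z).map (· - z)).support,
      (x, y) ∈ midpointStrictPairs h} = 0 := by
  have hcont : Continuous h := hconv.locallyLipschitz.continuous
  have hcost : Continuous fun p : E × E => ENNReal.ofReal (h (p.2 - p.1)) :=
    ENNReal.continuous_ofReal.comp (by fun_prop)
  have hmono : IsTwoMonotone (fun p => h (p.2 - p.1)) π.support :=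
    .of_ofReal (fun _ => hnonneg _) (hopt.isTwoMonotone_support hcost hfin)
  have hnull : π.fst (branchingPoints π.support (midpointStrictPairs h)) = 0 :=
    hac (addHaar_branchingPoints_midpointStrictPairs_eq_zero hconv Measure.isClosed_support hmono)
  rw [measure_eq_zero_iff_ae_notMem] at hnull ⊢
  filter_upwards [hnull, hκ.ae_translate_support_subset] with z hz hsupp
  rintro ⟨x, hx, y, hy, hxy⟩
  exact hz ⟨(x, y), hxy, hsupp x hx, hsupp y hy⟩

end BranchingPoints

section EuclideanPlans

variable {N : ℕ}

theorem strictConvexitySet_subset_midpointStrictPairs (h : Euc N → ℝ) :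
    strictConvexitySet h ⊆ midpointStrictPairs h := by
  intro p hp
  have hlt := hp (1 / 2) (by norm_num)
  rw [show (1 / 2 : ℝ) • p.1 + (1 - 1 / 2 : ℝ) • p.2 = midpoint ℝ p.1 p.2 by
    rw [midpoint_eq_smul_add, invOf_eq_inv]; module] at hlt
  change h (midpoint ℝ p.1 p.2) < (h p.1 + h p.2) / 2
  linarith

theorem msupport_eq_support (m : Measure (Euc N)) : msupport m = m.support :=
  Set.ext fun x => (Measure.mem_support_iff_forall x).symm

theorem IsOptimalPlan.isCostMinimizing {c : Euc N → Euc N → ℝ} {μ ν : Measure (Euc N)}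
    {π : Measure (Euc N × Euc N)} (hopt : IsOptimalPlan c μ ν π) :
    IsCostMinimizing (fun p => ENNReal.ofReal (c p.1 p.2)) π := by
  obtain ⟨⟨_, hfst, hsnd⟩, hcost⟩ := hopt
  intro π' hfst' hsnd'
  have hprob : IsProbabilityMeasure π' := ⟨by rw [← Measure.fst_univ, hfst', measure_univ]⟩
  exact hcost.trans_le (iInf₂_le π' ⟨hprob, hfst'.trans hfst, hsnd'.trans hsnd⟩)

end EuclideanPlans

theorem strict_convexity_pairs_null {N : ℕ} (h : Euc N → ℝ)
    (hconv : ConvexOn ℝ Set.univ h) (hnonneg : ∀ x, 0 ≤ h x)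
    (μ ν : Measure (Euc N)) [IsProbabilityMeasure μ] [IsProbabilityMeasure ν]
    (hac : μ ≪ volume)
    (hfin : minCost (fun x y => h (y - x)) μ ν ≠ ⊤)
    (π : Measure (Euc N × Euc N))
    (hopt : IsOptimalPlan (fun x y => h (y - x)) μ ν π)
    -- `(πz z)` is the disintegration of `π` with respect to the first projection:
    (πz : Euc N → Measure (Euc N))
    (hπzprob : ∀ z, IsProbabilityMeasure (πz z))
    (hdisint : ∀ s : Set (Euc N × Euc N), MeasurableSet s →
      π s = ∫⁻ z, πz z {w | (z, w) ∈ s} ∂μ) :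
    -- `π̃_z := (πz z).map (· - z)`, i.e. `π̃_z B = π_z (B + z)`
    μ {z | ∃ x ∈ msupport ((πz z).map (fun w => w - z)),
           ∃ y ∈ msupport ((πz z).map (fun w => w - z)),
           (x, y) ∈ strictConvexitySet h} = 0 := by
  have hmin := hopt.isCostMinimizing
  obtain ⟨⟨_, rfl, _⟩, hcost⟩ := hopt
  have hnull := strict_convexity_pairs_null_general hconv hnonneg hac (hcost.trans_ne hfin) hmin
    hdisint
  simp only [msupport_eq_support]
  refine measure_mono_null ?_ hnull
  rintro z ⟨x, hx, y, hy, hxy⟩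
  exact ⟨x, hx, y, hy, strictConvexitySet_subset_midpointStrictPairs h hxy⟩
end
end

section
/- Let h : ℝ^N → [0,∞) be a strictly convex function, let c(x,y) = h(y − x), and let μ, ν be Borel probability measures on ℝ^N with μ absolutely continuous with respect to Lebesgue measure and with finite minimal transport cost for c. Then the set of optimal transport plans from μ to ν has a unique element, and this unique optimal plan is induced by a map, i.e. it equals (id, T)_# μ for some μ-measurable map T : ℝ^N → ℝ^N. -/
open MeasureTheory Metric Set
open scoped ENNReal

noncomputable section

/-!
An optimal plan `π` of finite cost is supported on a set where exchanging the targets of two pairs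
never lowers the cost: otherwise, exchanging a small amount of mass near the two pairs would produce
a cheaper plan. Write `Γ` for this support.

Suppose that the fiber of `Γ` over `x` contains two points `y₀ ≠ y₁`. For almost every `x`, a
density point argument produces, for small `t > 0`, points `(x + t v, y) ∈ Γ` with `y` close to `y₀`
and `v` close to `y₁ - y₀`. Strict convexity makes the decrease of `h` along `-v` strictly larger at
`y₁ - x` than at `y - x`, so exchanging the targets of `(x, y₁)` and `(x + t v, y)` lowers the cost,
a contradiction. Hence almost every fiber has at most one point and `π` is carried by a graph.

Optimal plans form a convex set, so the midpoint of two of them is carried by a graph as well; both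
are then carried by that same graph and coincide.
-/

open Filter ProbabilityTheory
open scoped Topology

section Plans

variable {X Y : Type*} [MeasurableSpace X] [MeasurableSpace Y]
  {c : X × Y → ℝ≥0∞} {μ : Measure X} {ν : Measure Y} {π : Measure (X × Y)}

/-- The transport plans from `μ` to `ν`, between arbitrary measurable spaces. Their common total
mass is not required to be `1`. -/
def transportPlans (μ : Measure X) (ν : Measure Y) : Set (Measure (X × Y)) :=
  {π | π.fst = μ ∧ π.snd = ν}

/-- The minimal transport cost from `μ` to `ν`, for a cost with values in `[0, ∞]`; it is `∞` when
there is no transport plan. -/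
def transportCost (c : X × Y → ℝ≥0∞) (μ : Measure X) (ν : Measure Y) : ℝ≥0∞ :=
  ⨅ π ∈ transportPlans μ ν, ∫⁻ p, c p ∂π

/-- The transport plans from `μ` to `ν` attaining the minimal cost, possibly with the value `∞`. -/
def optimalPlans (c : X × Y → ℝ≥0∞) (μ : Measure X) (ν : Measure Y) : Set (Measure (X × Y)) :=
  {π ∈ transportPlans μ ν | ∫⁻ p, c p ∂π = transportCost c μ ν}

theorem transportCost_le_lintegral (hπ : π ∈ transportPlans μ ν) :
    transportCost c μ ν ≤ ∫⁻ p, c p ∂π :=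
  iInf₂_le π hπ

theorem convex_optimalPlans : Convex ℝ≥0∞ (optimalPlans c μ ν) := by
  rintro π₀ ⟨⟨hfst₀, hsnd₀⟩, hcost₀⟩ π₁ ⟨⟨hfst₁, hsnd₁⟩, hcost₁⟩ a b - - hab
  simp only [Measure.fst, Measure.snd] at hfst₀ hfst₁ hsnd₀ hsnd₁
  refine ⟨⟨?_, ?_⟩, ?_⟩
  · rw [Measure.fst, Measure.map_add _ _ measurable_fst, Measure.map_smul, Measure.map_smul,
      hfst₀, hfst₁, ← add_smul, hab, one_smul]
  · rw [Measure.snd, Measure.map_add _ _ measurable_snd, Measure.map_smul, Measure.map_smul,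
      hsnd₀, hsnd₁, ← add_smul, hab, one_smul]
  · rw [lintegral_add_measure, lintegral_smul_measure, lintegral_smul_measure, hcost₀, hcost₁,
      ← add_smul, hab, one_smul]

theorem mem_optimalPlans_of_le [IsFiniteMeasure π] (hπ : π ∈ optimalPlans c μ ν)
    (hfin : ∫⁻ p, c p ∂π ≠ ∞) {γ : Measure (X × Y)} (hγ : γ ≤ π) :
    γ ∈ optimalPlans c γ.fst γ.snd := by
  have : IsFiniteMeasure γ := ⟨(hγ univ).trans_lt (measure_lt_top π univ)⟩
  refine ⟨⟨rfl, rfl⟩, le_antisymm (le_iInf₂ fun γ' hγ' => ?_)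
    (transportCost_le_lintegral ⟨rfl, rfl⟩)⟩
  have hdecomp : π - γ + γ = π := Measure.sub_add_cancel_of_le hγ
  have hplan : π - γ + γ' ∈ transportPlans μ ν := by
    rw [← hπ.1.1, ← hπ.1.2]
    constructor
    · rw [Measure.fst_add, hγ'.1, ← Measure.fst_add, hdecomp]
    · rw [Measure.snd_add, hγ'.2, ← Measure.snd_add, hdecomp]
  have hle : ∫⁻ p, c p ∂(π - γ + γ) ≤ ∫⁻ p, c p ∂(π - γ + γ') := by
    rw [hdecomp, hπ.2]
    exact transportCost_le_lintegral hplan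
  rw [← hdecomp, lintegral_add_measure] at hfin
  rw [lintegral_add_measure, lintegral_add_measure] at hle
  exact (ENNReal.add_le_add_iff_left (ENNReal.add_ne_top.1 hfin).1).1 hle

theorem lintegral_map_add_map {Z : Type*} [MeasurableSpace Z] {P : Measure Z} {c : X → ℝ≥0∞}
    (hc : Measurable c) {f g : Z → X} (hf : Measurable f) (hg : Measurable g) :
    ∫⁻ x, c x ∂(P.map f + P.map g) = ∫⁻ z, c (f z) + c (g z) ∂P := by
  rw [lintegral_add_measure, lintegral_map hc hf, lintegral_map hc hg,
    lintegral_add_left (f := fun z => c (f z)) (hc.comp hf)]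

theorem lintegral_le_lintegral_swap (hc : Measurable c) {P : Measure ((X × Y) × (X × Y))}
    (hP : P.fst + P.snd ∈ optimalPlans c μ ν) :
    ∫⁻ z, c z.1 + c z.2 ∂P ≤ ∫⁻ z, c (z.1.1, z.2.2) + c (z.2.1, z.1.2) ∂P := by
  set f : (X × Y) × (X × Y) → X × Y := fun z => (z.1.1, z.2.2)
  set g : (X × Y) × (X × Y) → X × Y := fun z => (z.2.1, z.1.2)
  have hf : Measurable f := by fun_prop
  have hg : Measurable g := by fun_prop
  have hplan : P.map f + P.map g ∈ transportPlans μ ν := by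
    rw [← hP.1.1, ← hP.1.2]
    simp only [transportPlans, mem_ofPred_eq, Measure.fst_add, Measure.snd_add]
    simp only [Measure.fst, Measure.snd, Measure.map_map measurable_fst,
      Measure.map_map measurable_snd, hf, hg, measurable_fst, measurable_snd]
    exact ⟨rfl, add_comm _ _⟩
  rw [← lintegral_map_add_map hc measurable_fst measurable_snd, ← lintegral_map_add_map hc hf hg]
  exact hP.2.trans_le (transportCost_le_lintegral hplan)

end Plans

section Existence

theorem lowerSemicontinuous_lintegral {Ω : Type*} [TopologicalSpace Ω] [MeasurableSpace Ω]
    [OpensMeasurableSpace Ω] {f : Ω → ℝ≥0∞} (hf : Continuous f) :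
    LowerSemicontinuous fun π : ProbabilityMeasure Ω => ∫⁻ x, f x ∂(π : Measure Ω) := by
  have hne_top (n : ℕ) (x : Ω) : min (f x) n ≠ ∞ := ne_top_of_le_ne_top (by simp) (min_le_right _ _)
  have hle (n : ℕ) (x : Ω) : (min (f x) n).toNNReal ≤ (n : NNReal) :=
    ENNReal.toNNReal_mono (by simp) (min_le_right _ _)
  let g (n : ℕ) : BoundedContinuousFunction Ω NNReal :=
    BoundedContinuousFunction.mkOfBound
      ⟨fun x => (min (f x) n).toNNReal, ENNReal.continuousOn_toNNReal.comp_continuous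
        (hf.min continuous_const) (hne_top n)⟩ n fun x y =>
        abs_sub_le_of_nonneg_of_le NNReal.zero_le_coe (mod_cast hle n x) NNReal.zero_le_coe
          (mod_cast hle n y)
  have hg (n : ℕ) (x : Ω) : (g n x : ℝ≥0∞) = min (f x) n := ENNReal.coe_toNNReal (hne_top n x)
  have hsup : (fun π : ProbabilityMeasure Ω => ∫⁻ x, f x ∂(π : Measure Ω)) =
      fun π : ProbabilityMeasure Ω => ⨆ n, ∫⁻ x, g n x ∂(π : Measure Ω) := by
    funext π
    simp only [hg]
    rw [← lintegral_iSup (fun n => hf.measurable.min measurable_const)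
      fun m n hmn x => min_le_min le_rfl (by exact_mod_cast hmn)]
    simp only [← inf_iSup_eq, ENNReal.iSup_natCast, inf_top_eq]
  rw [hsup]
  exact lowerSemicontinuous_iSup fun n =>
    (ProbabilityMeasure.continuous_lintegral_boundedContinuousFunction (g n)).lowerSemicontinuous

variable {X Y : Type*} [MeasurableSpace X] [TopologicalSpace X] [PolishSpace X] [BorelSpace X]
  [MeasurableSpace Y] [TopologicalSpace Y] [PolishSpace Y] [BorelSpace Y]
  (μ : Measure X) (ν : Measure Y) [IsProbabilityMeasure μ] [IsProbabilityMeasure ν]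

theorem isCompact_transportPlans :
    IsCompact {π : ProbabilityMeasure (X × Y) | (π : Measure (X × Y)) ∈ transportPlans μ ν} := by
  set S := {π : ProbabilityMeasure (X × Y) | (π : Measure (X × Y)) ∈ transportPlans μ ν}
  have hS : S = {π | π.map (f := Prod.fst) measurable_fst.aemeasurable = ⟨μ, inferInstance⟩} ∩
      {π | π.map (f := Prod.snd) measurable_snd.aemeasurable = ⟨ν, inferInstance⟩} := by
    ext π
    exact ⟨fun hπ => ⟨Subtype.ext hπ.1, Subtype.ext hπ.2⟩,
      fun hπ => ⟨congrArg Subtype.val hπ.1, congrArg Subtype.val hπ.2⟩⟩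
  have hclosed : IsClosed S := by
    rw [hS]
    exact (isClosed_singleton.preimage (ProbabilityMeasure.continuous_map continuous_fst)).inter
      (isClosed_singleton.preimage (ProbabilityMeasure.continuous_map continuous_snd))
  have htight : IsTightMeasureSet {(π : Measure (X × Y)) | π ∈ S} := by
    apply IsTightMeasureSet.prodMk
    · refine (isTightMeasureSet_singleton (μ := μ)).subset ?_
      rintro _ ⟨_, ⟨π, hπ, rfl⟩, rfl⟩
      exact hπ.1
    · refine (isTightMeasureSet_singleton (μ := ν)).subset ?_
      rintro _ ⟨_, ⟨π, hπ, rfl⟩, rfl⟩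
      exact hπ.2
  exact hclosed.closure_eq ▸ isCompact_closure_of_isTightMeasureSet htight

theorem optimalPlans_nonempty {c : X × Y → ℝ≥0∞} (hc : Continuous c) :
    (optimalPlans c μ ν).Nonempty := by
  have hne : {π : ProbabilityMeasure (X × Y) |
      (π : Measure (X × Y)) ∈ transportPlans μ ν}.Nonempty :=
    ⟨⟨μ.prod ν, inferInstance⟩, Measure.fst_prod, Measure.snd_prod⟩
  obtain ⟨π, hπ, hmin⟩ :=
    ((lowerSemicontinuous_lintegral hc).lowerSemicontinuousOn _).exists_isMinOn hne
      (isCompact_transportPlans μ ν)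
  refine ⟨π, hπ, le_antisymm (le_iInf₂ fun π' hπ' => ?_) (transportCost_le_lintegral hπ)⟩
  have : IsProbabilityMeasure π' := ⟨by rw [← Measure.fst_univ, hπ'.1, measure_univ]⟩
  exact hmin (a := ⟨π', this⟩) hπ'

end Existence

section Monotonicity

/-- Two-point cyclical monotonicity: exchanging the targets of two pairs in `Γ` does not decrease
their total cost. -/
def SwapMonotoneOn {X Y M : Type*} [Add M] [LE M] (c : X × Y → M) (Γ : Set (X × Y)) : Prop :=
  ∀ p ∈ Γ, ∀ q ∈ Γ, c p + c q ≤ c (p.1, q.2) + c (q.1, p.2)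

theorem swapMonotoneOn_of_ofReal {X Y : Type*} {c : X × Y → ℝ} (hc : 0 ≤ c) {Γ : Set (X × Y)}
    (hΓ : SwapMonotoneOn (fun p => ENNReal.ofReal (c p)) Γ) : SwapMonotoneOn c Γ := by
  intro p hp q hq
  have h := hΓ p hp q hq
  rwa [← ENNReal.ofReal_add (hc _) (hc _), ← ENNReal.ofReal_add (hc _) (hc _),
    ENNReal.ofReal_le_ofReal_iff (add_nonneg (hc _) (hc _))] at h

theorem exists_ne_zero_fst_add_snd_le {Z : Type*} [MeasurableSpace Z] {π : Measure Z}
    [IsFiniteMeasure π] {U V : Set Z} (hU : MeasurableSet U) (hV : MeasurableSet V) (hU0 : π U ≠ 0)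
    (hV0 : π V ≠ 0) :
    ∃ P : Measure (Z × Z), P ≠ 0 ∧ P.fst + P.snd ≤ π ∧ ∀ᵐ z ∂P, z ∈ U ×ˢ V := by
  -- The marginals of `π|U × π|V` are `π V • π|U` and `π U • π|V`, so this weight makes their sum
  -- at most `π`.
  let w : ℝ≥0∞ := (π U + π V)⁻¹
  have hw : w * (π V + π U) = 1 := by
    rw [add_comm]
    exact ENNReal.inv_mul_cancel (by simp [hU0]) (by simp)
  refine ⟨w • (π.restrict U).prod (π.restrict V), ?_, ?_, ?_⟩
  · refine Measure.measure_univ_ne_zero.1 ?_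
    rw [← univ_prod_univ, Measure.smul_apply, Measure.prod_prod, Measure.restrict_apply_univ,
      Measure.restrict_apply_univ]
    simp [w, hU0, hV0]
  · simp only [Measure.fst, Measure.snd, Measure.map_smul, Measure.map_fst_prod,
      Measure.map_snd_prod, Measure.restrict_apply_univ]
    refine Measure.le_iff.2 fun s _ => ?_
    calc w * (π V * π.restrict U s) + w * (π U * π.restrict V s)
        ≤ w * (π V * π s) + w * (π U * π s) := by
          gcongr <;> exact Measure.restrict_le_self
      _ = w * (π V + π U) * π s := by ring
      _ = π s := by rw [hw, one_mul]
  · rw [Measure.prod_restrict]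
    exact Measure.ae_smul_measure (ae_restrict_mem (hU.prod hV)) _

variable {X Y : Type*} [MeasurableSpace X] [TopologicalSpace X] [OpensMeasurableSpace X]
  [MeasurableSpace Y] [TopologicalSpace Y] [OpensMeasurableSpace Y]
  [SecondCountableTopologyEither X Y] {c : X × Y → ℝ≥0∞} {μ : Measure X} {ν : Measure Y}
  {π : Measure (X × Y)}

theorem swapMonotoneOn_support [IsFiniteMeasure π] (hc : Continuous c) (hπ : π ∈ optimalPlans c μ ν)
    (hfin : ∫⁻ p, c p ∂π ≠ ∞) : SwapMonotoneOn c π.support := by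
  intro p hp q hq
  by_contra! hlt
  have hopen : IsOpen
      {z : (X × Y) × (X × Y) | c (z.1.1, z.2.2) + c (z.2.1, z.1.2) < c z.1 + c z.2} :=
    isOpen_lt (by fun_prop) (by fun_prop)
  obtain ⟨U, V, hU, hV, hpU, hqV, hUV⟩ := isOpen_prod_iff.1 hopen p q hlt
  have hU0 : π U ≠ 0 := ((Measure.mem_support_iff_forall p).1 hp U (hU.mem_nhds hpU)).ne'
  have hV0 : π V ≠ 0 := ((Measure.mem_support_iff_forall q).1 hq V (hV.mem_nhds hqV)).ne'
  obtain ⟨P, hP0, hle, hPUV⟩ :=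
    exists_ne_zero_fst_add_snd_le hU.measurableSet hV.measurableSet hU0 hV0
  have hswap : ∫⁻ z, c z.1 + c z.2 ∂P ≤ ∫⁻ z, c (z.1.1, z.2.2) + c (z.2.1, z.1.2) ∂P :=
    lintegral_le_lintegral_swap hc.measurable (mem_optimalPlans_of_le hπ hfin hle)
  have hPfin : ∫⁻ z, c z.1 + c z.2 ∂P ≠ ∞ := by
    rw [← lintegral_map_add_map hc.measurable measurable_fst measurable_snd]
    exact ne_top_of_le_ne_top hfin (lintegral_mono' hle le_rfl)
  have hlt_ae := hPUV.mono hUV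
  refine hswap.not_gt (lintegral_strict_mono hP0 (by fun_prop) ?_ hlt_ae)
  exact ne_top_of_le_ne_top hPfin (lintegral_mono_ae (hlt_ae.mono fun z hz => hz.le))

end Monotonicity

section Convexity

variable {E : Type*} [AddCommGroup E] [Module ℝ E] {h : E → ℝ}

theorem convexOn_comp_sub_smul (hconv : ConvexOn ℝ univ h) (p v : E) :
    ConvexOn ℝ univ fun t : ℝ => h (p - t • v) := by
  have hline := hconv.comp_affineMap (AffineMap.lineMap p (p - v) : ℝ →ᵃ[ℝ] E)
  simpa [Function.comp_def, AffineMap.lineMap_apply, sub_eq_neg_add] using hline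

theorem mul_sub_le_sub_of_convexOn (hconv : ConvexOn ℝ univ h) (p v : E) {s t : ℝ} (hs : 0 < s)
    (hst : s ≤ t) : s / t * (h p - h (p - t • v)) ≤ h p - h (p - s • v) := by
  have hsecant := (convexOn_comp_sub_smul hconv p v).secant_mono (mem_univ 0) (mem_univ s)
    (mem_univ t) hs.ne' (hs.trans_le hst).ne' hst
  simp only [zero_smul, sub_zero] at hsecant
  rw [div_le_div_iff₀ hs (hs.trans_le hst)] at hsecant
  rw [div_mul_eq_mul_div, div_le_iff₀ (hs.trans_le hst)]
  linarith

theorem sub_le_mul_sub_of_convexOn (hconv : ConvexOn ℝ univ h) (q v : E) {s t : ℝ} (hs : 0 < s)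
    (ht : 0 < t) : h q - h (q - s • v) ≤ s / t * (h (q + t • v) - h q) := by
  have hslope := (convexOn_comp_sub_smul hconv q v).slope_mono_adjacent (mem_univ (-t))
    (mem_univ s) (neg_lt_zero.2 ht) hs
  simp only [zero_smul, sub_zero, neg_smul, sub_neg_eq_add, zero_add] at hslope
  rw [div_le_div_iff₀ ht hs] at hslope
  rw [div_mul_eq_mul_div, le_div_iff₀ ht]
  linarith

theorem eventually_forall_sub_lt_sub_of_strictConvexOn [TopologicalSpace E]
    [IsTopologicalAddGroup E] [ContinuousSMul ℝ E] (hconv : StrictConvexOn ℝ univ h)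
    (hcont : Continuous h) {p q : E} (hpq : p ≠ q) :
    ∀ᶠ z in 𝓝 (q, p - q), ∀ t ∈ Ioc (0 : ℝ) (1 / 2),
      h z.1 - h (z.1 - t • z.2) < h p - h (p - t • z.2) := by
  have hmid : h (q + (1 / 2 : ℝ) • (p - q)) - h q < h p - h (p - (1 / 2 : ℝ) • (p - q)) := by
    have hlt := hconv.2 (mem_univ p) (mem_univ q) hpq one_half_pos one_half_pos (add_halves 1)
    have hq : q + (1 / 2 : ℝ) • (p - q) = (1 / 2 : ℝ) • p + (1 / 2 : ℝ) • q := by module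
    have hp : p - (1 / 2 : ℝ) • (p - q) = (1 / 2 : ℝ) • p + (1 / 2 : ℝ) • q := by module
    rw [hp, hq]
    simp only [smul_eq_mul] at hlt
    linarith
  have hopen : IsOpen {z : E × E |
      h (z.1 + (1 / 2 : ℝ) • z.2) - h z.1 < h p - h (p - (1 / 2 : ℝ) • z.2)} :=
    isOpen_lt (by fun_prop) (by fun_prop)
  filter_upwards [hopen.mem_nhds hmid] with ⟨q', v⟩ hz t ⟨ht, ht'⟩
  calc h q' - h (q' - t • v) ≤ t / (1 / 2) * (h (q' + (1 / 2 : ℝ) • v) - h q') :=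
        sub_le_mul_sub_of_convexOn hconv.convexOn q' v ht one_half_pos
    _ < t / (1 / 2) * (h p - h (p - (1 / 2 : ℝ) • v)) := mul_lt_mul_of_pos_left hz (by positivity)
    _ ≤ h p - h (p - t • v) := mul_sub_le_sub_of_convexOn hconv.convexOn p v ht ht'

theorem continuous_ofReal_comp_sub {E : Type*} [NormedAddCommGroup E] [NormedSpace ℝ E]
    [FiniteDimensional ℝ E] {h : E → ℝ} (hconv : ConvexOn ℝ univ h) :
    Continuous fun p : E × E => ENNReal.ofReal (h (p.2 - p.1)) :=
  ENNReal.continuous_ofReal.comp (hconv.locallyLipschitz.continuous.comp (by fun_prop))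

end Convexity

section Density

variable {E : Type*} [NormedAddCommGroup E] [NormedSpace ℝ E] [FiniteDimensional ℝ E]
  [MeasurableSpace E] [BorelSpace E] (vol : Measure E) [vol.IsAddHaarMeasure]

theorem ae_restrict_eventually_exists_add_smul_mem (s : Set E) :
    ∀ᵐ x ∂vol.restrict s, ∀ v, ∀ V ∈ 𝓝 v, ∀ᶠ t in 𝓝[>] (0 : ℝ), ∃ w ∈ V, x + t • w ∈ s := by
  filter_upwards [Besicovitch.ae_tendsto_measure_inter_div vol s] with x hx v V hV
  obtain ⟨W, hWV, hW, hvW⟩ := _root_.mem_nhds_iff.1 hV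
  filter_upwards [Measure.eventually_nonempty_inter_smul_of_density_one vol s x hx W
    hW.measurableSet (hW.measure_pos vol ⟨v, hvW⟩).ne'] with t ht
  obtain ⟨_, hys, _, rfl, _, ⟨w, hw, rfl⟩, rfl⟩ := ht
  exact ⟨w, hWV hw, hys⟩

theorem ae_eventually_exists_add_smul_mem_fiber {Y : Type*} [TopologicalSpace Y]
    [SecondCountableTopology Y] (Γ : Set (E × Y)) :
    ∀ᵐ x ∂vol, ∀ y, (x, y) ∈ Γ → ∀ v, ∀ W ∈ 𝓝 (y, v),
      ∀ᶠ t in 𝓝[>] (0 : ℝ), ∃ z ∈ W, (x + t • z.2, z.1) ∈ Γ := by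
  -- Density points of the projections of `Γ ∩ (E × b)`, with `b` in a countable basis of `Y`, give
  -- a single null set that works for every `y` in the fiber.
  let B := TopologicalSpace.countableBasis Y
  have hdense : ∀ᵐ x ∂vol, ∀ b ∈ B, x ∈ Prod.fst '' (Γ ∩ Prod.snd ⁻¹' b) → ∀ v, ∀ V ∈ 𝓝 v,
      ∀ᶠ t in 𝓝[>] (0 : ℝ), ∃ w ∈ V, x + t • w ∈ Prod.fst '' (Γ ∩ Prod.snd ⁻¹' b) :=
    (ae_ball_iff (TopologicalSpace.countable_countableBasis Y)).2 fun b _ =>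
      ae_imp_of_ae_restrict (ae_restrict_eventually_exists_add_smul_mem vol _)
  filter_upwards [hdense] with x hx y hxy v W hW
  obtain ⟨U, hU, V, hV, hUVW⟩ := mem_nhds_prod_iff.1 hW
  obtain ⟨b, hbB, hyb, hbU⟩ := (TopologicalSpace.isBasis_countableBasis Y).mem_nhds_iff.1 hU
  filter_upwards [hx b hbB ⟨(x, y), ⟨hxy, hyb⟩, rfl⟩ v V hV]
  rintro t ⟨w, hwV, ⟨x', y'⟩, ⟨hΓ, hy'b⟩, rfl⟩
  exact ⟨(y', w), hUVW ⟨hbU hy'b, hwV⟩, hΓ⟩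

theorem ae_subsingleton_fiber_of_swapMonotoneOn {h : E → ℝ} (hconv : StrictConvexOn ℝ univ h)
    {Γ : Set (E × E)} (hΓ : SwapMonotoneOn (fun p => h (p.2 - p.1)) Γ) :
    ∀ᵐ x ∂vol, {y | (x, y) ∈ Γ}.Subsingleton := by
  have hcont : Continuous h := hconv.convexOn.locallyLipschitz.continuous
  filter_upwards [ae_eventually_exists_add_smul_mem_fiber vol Γ] with x hx y₀ h₀ y₁ h₁
  by_contra hne
  have hshift : Tendsto (fun z : E × E => (z.1 - x, z.2)) (𝓝 (y₀, y₁ - y₀))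
      (𝓝 (y₀ - x, (y₁ - x) - (y₀ - x))) := by
    rw [sub_sub_sub_cancel_right]
    exact Continuous.tendsto (by fun_prop) _
  have hincr := hshift.eventually (eventually_forall_sub_lt_sub_of_strictConvexOn hconv hcont
    (sub_left_injective.ne (Ne.symm hne)))
  obtain ⟨t, ⟨⟨y, v⟩, hz, hmem⟩, ht⟩ :=
    ((hx y₀ h₀ (y₁ - y₀) _ hincr).and (Ioc_mem_nhdsGT one_half_pos)).exists
  have hlt : h (y - x) - h (y - x - t • v) < h (y₁ - x) - h (y₁ - x - t • v) := hz t ht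
  have hle : h (y₁ - x) + h (y - (x + t • v)) ≤ h (y - x) + h (y₁ - (x + t • v)) :=
    hΓ (x, y₁) h₁ (x + t • v, y) hmem
  simp only [sub_add_eq_sub_sub] at hle
  linarith

end Density

section Graph

variable {X Y : Type*} [MeasurableSpace X] [MeasurableSpace Y] {μ : Measure X}
  {π : Measure (X × Y)} {T : X → Y}

theorem eq_map_graph_of_ae_eq (hT : Measurable T) (h : ∀ᵐ p ∂π, p.2 = T p.1) :
    π = π.fst.map fun x => (x, T x) := by
  have hid : id =ᵐ[π] fun p => (p.1, T p.1) := h.mono fun p hp => Prod.ext rfl hp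
  calc π = π.map id := Measure.map_id.symm
    _ = π.map fun p => (p.1, T p.1) := Measure.map_congr hid
    _ = π.fst.map fun x => (x, T x) :=
      (Measure.map_map (measurable_id.prodMk hT) measurable_fst).symm

theorem ae_map_graph_eq [MeasurableEq Y] (hT : Measurable T) :
    ∀ᵐ p ∂μ.map (fun x => (x, T x)), p.2 = T p.1 :=
  (ae_map_iff (by fun_prop) (measurableSet_eq_fun measurable_snd (hT.comp measurable_fst))).2
    (ae_of_all _ fun _ => rfl)

theorem fst_map_graph (hT : Measurable T) : (μ.map fun x => (x, T x)).fst = μ := by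
  rw [Measure.fst, Measure.map_map measurable_fst (by fun_prop)]
  exact Measure.map_id

theorem subsingleton_of_convex_of_forall_eq_map_graph [MeasurableEq Y]
    {S : Set (Measure (X × Y))} (hS : Convex ℝ≥0∞ S)
    (hgraph : ∀ π ∈ S, ∃ T : X → Y, Measurable T ∧ π = μ.map fun x => (x, T x)) :
    S.Subsingleton := by
  intro π₀ h₀ π₁ h₁
  have hfst : ∀ π ∈ S, π.fst = μ := by
    intro π hπ
    obtain ⟨T, hT, rfl⟩ := hgraph π hπ
    exact fst_map_graph hT
  obtain ⟨T, hT, hmid⟩ := hgraph _ (hS h₀ h₁ zero_le zero_le ENNReal.inv_two_add_inv_two)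
  have hae := ae_map_graph_eq (μ := μ) hT
  rw [← hmid, ae_add_measure_iff, Measure.ae_ennreal_smul_measure_iff (by simp),
    Measure.ae_ennreal_smul_measure_iff (by simp)] at hae
  rw [eq_map_graph_of_ae_eq hT hae.1, eq_map_graph_of_ae_eq hT hae.2, hfst π₀ h₀, hfst π₁ h₁]

theorem isZeroOneMeasure_dirac (x : X) : IsZeroOneMeasure (Measure.dirac x) where
  zero_one₀ s hs := by
    rw [Measure.dirac_apply' x hs]
    exact indicator_eq_zero_or_self s 1 x

theorem exists_deterministic_ae_eq [StandardBorelSpace Y] [Nonempty Y] {κ : Kernel X Y}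
    [IsMarkovKernel κ] (hκ : ∀ᵐ x ∂μ, ∃ y, κ x = Measure.dirac y) :
    ∃ (T : X → Y) (hT : Measurable T), κ =ᵐ[μ] Kernel.deterministic T hT := by
  classical
  obtain ⟨s, hs, hsm, hκs⟩ : ∃ s ∈ ae μ, MeasurableSet s ∧ ∀ x ∈ s, ∃ y, κ x = Measure.dirac y :=
    hκ.exists_measurable_mem
  let κ' := Kernel.piecewise hsm κ (Kernel.const X (Measure.dirac (Classical.arbitrary Y)))
  have hdet : IsDeterministic κ' := by
    refine (Kernel.isDeterministic_iff_isZeroOneMeasure κ').2 fun x => ?_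
    by_cases hx : x ∈ s
    · obtain ⟨y, hy⟩ := hκs x hx
      simp only [κ', Kernel.piecewise_apply, hx, if_true, hy]
      exact isZeroOneMeasure_dirac y
    · simp only [κ', Kernel.piecewise_apply, hx, if_false, Kernel.const_apply]
      exact isZeroOneMeasure_dirac _
  obtain ⟨T, hT, hκ'⟩ := Kernel.IsDeterministic.exists_eq_deterministic κ'
  refine ⟨T, hT, ?_⟩
  filter_upwards [hs] with x hx
  rw [← hκ', Kernel.piecewise_apply, if_pos hx]

theorem exists_eq_map_graph_of_ae_subsingleton_fiber [StandardBorelSpace Y] [Nonempty Y]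
    [IsFiniteMeasure π] {Γ : Set (X × Y)} (hπΓ : ∀ᵐ p ∂π, p ∈ Γ)
    (hΓ : ∀ᵐ x ∂π.fst, {y | (x, y) ∈ Γ}.Subsingleton) :
    ∃ T : X → Y, Measurable T ∧ π = π.fst.map fun x => (x, T x) := by
  have hfiber : ∀ᵐ x ∂π.fst, ∀ᵐ y ∂π.condKernel x, (x, y) ∈ Γ :=
    Measure.ae_ae_of_ae_compProd (by rwa [π.disintegrate])
  have hdirac : ∀ᵐ x ∂π.fst, ∃ y, π.condKernel x = Measure.dirac y := by
    filter_upwards [hfiber, hΓ] with x hx hsub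
    obtain ⟨y, hy⟩ := hx.exists
    have hconst : id =ᵐ[π.condKernel x] fun _ => y := hx.mono fun z hz => hsub hz hy
    refine ⟨y, ?_⟩
    rw [← Measure.map_id (μ := π.condKernel x), Measure.map_congr hconst, Measure.map_const,
      measure_univ, one_smul]
  obtain ⟨T, hT, hκ⟩ := exists_deterministic_ae_eq hdirac
  refine ⟨T, hT, ?_⟩
  rw [← Measure.compProd_deterministic hT, ← Measure.compProd_congr hκ, π.disintegrate]

end Graph

section Euclidean

variable {N : ℕ} {μ ν : Measure (Euc N)}

theorem isCoupling_iff_mem_transportPlans [IsProbabilityMeasure μ] {π : Measure (Euc N × Euc N)} :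
    IsCoupling μ ν π ↔ π ∈ transportPlans μ ν :=
  ⟨And.right, fun hπ => ⟨⟨by rw [← Measure.fst_univ, hπ.1, measure_univ]⟩, hπ⟩⟩

theorem minCost_eq_transportCost [IsProbabilityMeasure μ] (c : Euc N → Euc N → ℝ) :
    minCost c μ ν = transportCost (fun p => ENNReal.ofReal (c p.1 p.2)) μ ν := by
  simp only [minCost, transportCost, planCost, mem_ofPred_eq, isCoupling_iff_mem_transportPlans]

theorem isOptimalPlan_iff_mem_optimalPlans [IsProbabilityMeasure μ] {c : Euc N → Euc N → ℝ}
    {π : Measure (Euc N × Euc N)} : IsOptimalPlan c μ ν π ↔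
      π ∈ optimalPlans (fun p => ENNReal.ofReal (c p.1 p.2)) μ ν := by
  rw [IsOptimalPlan, isCoupling_iff_mem_transportPlans, minCost_eq_transportCost]
  rfl

end Euclidean

section Main

variable {E : Type*} [NormedAddCommGroup E] [NormedSpace ℝ E] [FiniteDimensional ℝ E]
  [MeasurableSpace E] [BorelSpace E] {h : E → ℝ} {vol : Measure E} [vol.IsAddHaarMeasure]
  {μ ν : Measure E}

theorem exists_eq_map_graph_of_mem_optimalPlans (hconv : StrictConvexOn ℝ univ h)
    (hnonneg : 0 ≤ h) [IsFiniteMeasure μ] (hac : μ ≪ vol)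
    (hfin : transportCost (fun p => ENNReal.ofReal (h (p.2 - p.1))) μ ν ≠ ∞) {π : Measure (E × E)}
    (hπ : π ∈ optimalPlans (fun p => ENNReal.ofReal (h (p.2 - p.1))) μ ν) :
    ∃ T : E → E, Measurable T ∧ π = μ.map fun x => (x, T x) := by
  have hfst : π.fst = μ := hπ.1.1
  subst hfst
  have : IsFiniteMeasure π := ⟨Measure.fst_univ (ρ := π) ▸ measure_lt_top π.fst univ⟩
  have hmono : SwapMonotoneOn (fun p => h (p.2 - p.1)) π.support :=
    swapMonotoneOn_of_ofReal (fun p => hnonneg _)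
      (swapMonotoneOn_support (continuous_ofReal_comp_sub hconv.convexOn) hπ (hπ.2.trans_ne hfin))
  exact exists_eq_map_graph_of_ae_subsingleton_fiber Measure.support_mem_ae
    (hac.ae_le (ae_subsingleton_fiber_of_swapMonotoneOn vol hconv hmono))

theorem strictlyConvex_unique_optimal_map_general (hconv : StrictConvexOn ℝ univ h)
    (hnonneg : 0 ≤ h) [IsProbabilityMeasure μ] [IsProbabilityMeasure ν] (hac : μ ≪ vol)
    (hfin : transportCost (fun p => ENNReal.ofReal (h (p.2 - p.1))) μ ν ≠ ∞) :
    ∃ T : E → E, Measurable T ∧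
      optimalPlans (fun p => ENNReal.ofReal (h (p.2 - p.1))) μ ν = {μ.map fun x => (x, T x)} := by
  have hgraph := fun π => exists_eq_map_graph_of_mem_optimalPlans (π := π) hconv hnonneg hac hfin
  obtain ⟨π, hπ⟩ := optimalPlans_nonempty μ ν (continuous_ofReal_comp_sub hconv.convexOn)
  obtain ⟨T, hT, rfl⟩ := hgraph π hπ
  exact ⟨T, hT, (subsingleton_of_convex_of_forall_eq_map_graph convex_optimalPlans
    hgraph).eq_singleton_of_mem hπ⟩

end Main

theorem strictlyConvex_unique_optimal_map {N : ℕ} (h : Euc N → ℝ)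
    (hconv : StrictConvexOn ℝ Set.univ h) (hnonneg : ∀ x, 0 ≤ h x)
    (μ ν : Measure (Euc N)) [IsProbabilityMeasure μ] [IsProbabilityMeasure ν]
    (hac : μ ≪ volume)
    (hfin : minCost (fun x y => h (y - x)) μ ν ≠ ⊤) :
    ∃ π, IsOptimalPlan (fun x y => h (y - x)) μ ν π ∧
      (∀ π', IsOptimalPlan (fun x y => h (y - x)) μ ν π' → π' = π) ∧
      InducedByMap μ π := by
  rw [minCost_eq_transportCost] at hfin
  obtain ⟨T, hT, hopt⟩ := strictlyConvex_unique_optimal_map_general hconv hnonneg hac hfin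
  simp only [isOptimalPlan_iff_mem_optimalPlans, hopt]
  exact ⟨_, rfl, fun _ => id, T, hT.aemeasurable, rfl⟩
end
end

section
/- Let ‖·‖ be a strictly convex norm on ℝ^N and let 1 < p < ∞. Consider the cost c(x,y) = ‖y − x‖^p, and let μ, ν be Borel probability measures on ℝ^N with finite p-th order moments such that μ is absolutely continuous with respect to Lebesgue measure. Then the set of optimal transport plans from μ to ν has a unique element, and this unique optimal plan is induced by a map. -/
open MeasureTheory Metric Set
open scoped ENNReal

noncomputable section

/-!
For `p > 1` the `p`-th power `h` of a strictly convex norm is a strictly convex function. An optimal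
plan `π` of finite cost cannot be improved by exchanging the targets of two pairs drawn
independently from `π`, so on its support every such exchange weakly raises the cost `h (y - x)`.
Suppose that the fibre of the support over `x` contains `y₁ ≠ y₂`. If `x` is a density point of the
sources of the pairs whose target is close to `y₁`, some of these sources have the form `x + t • v`
with `t > 0` small and `v` close to `y₂ - y₁`; exchanging such a pair with `(x, y₂)` lowers the
cost, by strict convexity of `h`. Almost every `x` is such a density point, hence every optimal plan
is induced by a map. In particular so is the midpoint of two optimal plans, and plans that are
absolutely continuous with respect to one carried by a graph, with the same first marginal, are
equal to it.
-/

open Filter Topology ProbabilityTheory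
open scoped NNReal

section Compactness

variable {X Y : Type*} [TopologicalSpace X] [MeasurableSpace X] [TopologicalSpace Y]
  [MeasurableSpace Y]

theorem lowerSemicontinuous_lintegral_probabilityMeasure [OpensMeasurableSpace X]
    {f : X → ℝ≥0∞} (hf : Continuous f) :
    LowerSemicontinuous fun P : ProbabilityMeasure X ↦ ∫⁻ x, f x ∂(P : Measure X) := by
  have htop (k : ℕ) (x : X) : min (f x) k ≠ ∞ :=
    ne_top_of_le_ne_top (ENNReal.natCast_ne_top k) (min_le_right _ _)
  let g (k : ℕ) : BoundedContinuousFunction X ℝ≥0 :=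
    .mkOfBound ⟨fun x ↦ (min (f x) k).toNNReal, ENNReal.continuousOn_toNNReal.comp_continuous
      (hf.min continuous_const) (htop k)⟩ k fun x y ↦ by
        have hIcc (x : X) : ((min (f x) k).toNNReal : ℝ) ∈ Icc (0 : ℝ) k :=
          ⟨NNReal.coe_nonneg _, by
            exact_mod_cast ENNReal.toNNReal_mono (by simp) (min_le_right _ _)⟩
        exact (Real.dist_le_of_mem_Icc (hIcc x) (hIcc y)).trans_eq (sub_zero _)
  have hsup (P : ProbabilityMeasure X) :
      ∫⁻ x, f x ∂(P : Measure X) = ⨆ k, ∫⁻ x, g k x ∂(P : Measure X) := by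
    have hg (k : ℕ) (x : X) : (g k x : ℝ≥0∞) = f x ⊓ k := ENNReal.coe_toNNReal (htop k x)
    simp_rw [hg]
    rw [← lintegral_iSup (fun k ↦ hf.measurable.min measurable_const)
      fun k l hkl x ↦ min_le_min_left _ (by exact_mod_cast hkl)]
    simp_rw [← inf_iSup_eq, ENNReal.iSup_natCast, inf_top_eq]
  simp_rw [hsup]
  exact lowerSemicontinuous_iSup fun k ↦
    (ProbabilityMeasure.continuous_lintegral_boundedContinuousFunction (g k)).lowerSemicontinuous

theorem isCompact_setOf_fst_eq_and_snd_eq [PolishSpace X] [BorelSpace X] [PolishSpace Y]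
    [BorelSpace Y] (μ : Measure X) (ν : Measure Y) [IsProbabilityMeasure μ]
    [IsProbabilityMeasure ν] :
    IsCompact {P : ProbabilityMeasure (X × Y) |
      (P : Measure (X × Y)).fst = μ ∧ (P : Measure (X × Y)).snd = ν} := by
  set S := {P : ProbabilityMeasure (X × Y) |
    (P : Measure (X × Y)).fst = μ ∧ (P : Measure (X × Y)).snd = ν}
  have hclosed : IsClosed S := by
    let Pμ : ProbabilityMeasure X := ⟨μ, inferInstance⟩
    let Pν : ProbabilityMeasure Y := ⟨ν, inferInstance⟩
    have hfst := (isClosed_singleton (x := Pμ)).preimage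
      (ProbabilityMeasure.continuous_map (continuous_fst : Continuous (Prod.fst : X × Y → X)))
    have hsnd := (isClosed_singleton (x := Pν)).preimage
      (ProbabilityMeasure.continuous_map (continuous_snd : Continuous (Prod.snd : X × Y → Y)))
    convert hfst.inter hsnd using 1
    ext P
    exact ⟨fun h ↦ ⟨Subtype.ext h.1, Subtype.ext h.2⟩,
      fun h ↦ ⟨congrArg Subtype.val h.1, congrArg Subtype.val h.2⟩⟩
  have htight : IsTightMeasureSet {π | ∃ P ∈ S, (P : Measure (X × Y)) = π} := by
    apply IsTightMeasureSet.prodMk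
    · refine (isTightMeasureSet_singleton (μ := μ)).subset ?_
      rintro _ ⟨_, ⟨P, hP, rfl⟩, rfl⟩
      exact hP.1
    · refine (isTightMeasureSet_singleton (μ := ν)).subset ?_
      rintro _ ⟨_, ⟨P, hP, rfl⟩, rfl⟩
      exact hP.2
  exact hclosed.closure_eq ▸ isCompact_closure_of_isTightMeasureSet htight

end Compactness

section Exchange

theorem setLIntegral_prod_self_comp_swap {Z : Type*} [MeasurableSpace Z] (π : Measure Z)
    [SFinite π] {B : Set (Z × Z)} (hB : Prod.swap ⁻¹' B = B) (f : Z × Z → ℝ≥0∞) :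
    ∫⁻ q in B, f q.swap ∂π.prod π = ∫⁻ q in B, f q ∂π.prod π := by
  have h := (Measure.measurePreserving_swap (μ := π) (ν := π)).setLIntegral_comp_preimage_emb
    MeasurableEquiv.prodComm.measurableEmbedding f B
  rwa [hB] at h

variable {X Y : Type*} [MeasurableSpace X] [MeasurableSpace Y]

/-- The competitor of a plan `π` in which targets are exchanged along `B`: draw two independent
pairs `z`, `w` from `π` and keep `z`, except that if `(z, w) ∈ B` its target is replaced by that
of `w`. When `B` is symmetric, the marginals of `π` are preserved. -/
def exchangePlan (π : Measure (X × Y)) (B : Set ((X × Y) × (X × Y))) :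
    Measure (X × Y) :=
  open Classical in
  (π.prod π).map fun q ↦ (q.1.1, if q ∈ B then q.2.2 else q.1.2)

variable {π : Measure (X × Y)} {B : Set ((X × Y) × (X × Y))}

theorem lintegral_exchangePlan (hB : MeasurableSet B) {f : X × Y → ℝ≥0∞} (hf : Measurable f) :
    ∫⁻ z, f z ∂exchangePlan π B =
      ∫⁻ q in B, f (q.1.1, q.2.2) ∂π.prod π + ∫⁻ q in Bᶜ, f q.1 ∂π.prod π := by
  classical
  rw [exchangePlan, lintegral_map hf (by
    exact (by fun_prop : Measurable fun q : (X × Y) × (X × Y) ↦ q.1.1).prodMk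
      (.ite hB (by fun_prop) (by fun_prop))), ← lintegral_piecewise hB]
  congr 1 with q
  by_cases hq : q ∈ B <;> simp [hq]

variable [IsProbabilityMeasure π]

theorem fst_exchangePlan (hB : MeasurableSet B) : (exchangePlan π B).fst = π.fst := by
  refine Measure.ext_of_lintegral _ fun f hf ↦ ?_
  have hf' : Measurable fun z : X × Y ↦ f z.1 := hf.comp measurable_fst
  rw [Measure.fst, Measure.fst, lintegral_map hf measurable_fst, lintegral_map hf measurable_fst]
  calc ∫⁻ z, f z.1 ∂exchangePlan π B
      = ∫⁻ q in B, f q.1.1 ∂π.prod π + ∫⁻ q in Bᶜ, f q.1.1 ∂π.prod π :=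
        lintegral_exchangePlan hB hf'
    _ = ∫⁻ q, f q.1.1 ∂π.prod π := lintegral_add_compl _ hB
    _ = ∫⁻ z, f z.1 ∂π := measurePreserving_fst.lintegral_comp hf'

theorem snd_exchangePlan (hB : MeasurableSet B) (hswap : Prod.swap ⁻¹' B = B) :
    (exchangePlan π B).snd = π.snd := by
  refine Measure.ext_of_lintegral _ fun f hf ↦ ?_
  have hf' : Measurable fun z : X × Y ↦ f z.2 := hf.comp measurable_snd
  rw [Measure.snd, Measure.snd, lintegral_map hf measurable_snd, lintegral_map hf measurable_snd]
  calc ∫⁻ z, f z.2 ∂exchangePlan π B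
      = ∫⁻ q in B, f q.2.2 ∂π.prod π + ∫⁻ q in Bᶜ, f q.1.2 ∂π.prod π :=
        lintegral_exchangePlan hB hf'
    _ = ∫⁻ q in B, f q.1.2 ∂π.prod π + ∫⁻ q in Bᶜ, f q.1.2 ∂π.prod π := by
        congr 1
        exact setLIntegral_prod_self_comp_swap π hswap fun q ↦ f q.1.2
    _ = ∫⁻ q, f q.1.2 ∂π.prod π := lintegral_add_compl _ hB
    _ = ∫⁻ z, f z.2 ∂π := measurePreserving_fst.lintegral_comp hf'

theorem ae_prod_le_exchange_of_forall_lintegral_le {c : X → Y → ℝ≥0∞}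
    (hc : Measurable fun z : X × Y ↦ c z.1 z.2) (hfin : ∫⁻ z, c z.1 z.2 ∂π ≠ ∞)
    (hmin : ∀ π' : Measure (X × Y), π'.fst = π.fst → π'.snd = π.snd →
      ∫⁻ z, c z.1 z.2 ∂π ≤ ∫⁻ z, c z.1 z.2 ∂π') :
    ∀ᵐ q ∂π.prod π,
      c q.1.1 q.1.2 + c q.2.1 q.2.2 ≤ c q.1.1 q.2.2 + c q.2.1 q.1.2 := by
  let stay (q : (X × Y) × (X × Y)) : ℝ≥0∞ := c q.1.1 q.1.2
  let cross (q : (X × Y) × (X × Y)) : ℝ≥0∞ := c q.1.1 q.2.2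
  have hstay : Measurable stay := hc.comp measurable_fst
  have hcross : Measurable cross :=
    hc.comp (by fun_prop : Measurable fun q : (X × Y) × (X × Y) ↦ (q.1.1, q.2.2))
  let B : Set ((X × Y) × (X × Y)) := {q | cross q + cross q.swap < stay q + stay q.swap}
  have hB : MeasurableSet B := measurableSet_lt (by fun_prop) (by fun_prop)
  have hswap : Prod.swap ⁻¹' B = B := by
    ext q
    simp only [B, mem_preimage, mem_ofPred_eq, Prod.swap_swap, add_comm]
  have hsplit : ∫⁻ q in B, stay q ∂π.prod π + ∫⁻ q in Bᶜ, stay q ∂π.prod π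
      = ∫⁻ z, c z.1 z.2 ∂π := by
    rw [lintegral_add_compl _ hB, ← (measurePreserving_fst (μ := π) (ν := π)).lintegral_comp hc]
  have hstay_le : ∫⁻ q in B, stay q ∂π.prod π ≤ ∫⁻ q in B, cross q ∂π.prod π := by
    have h := hmin _ (fst_exchangePlan hB) (snd_exchangePlan hB hswap)
    rw [lintegral_exchangePlan hB hc, ← hsplit] at h
    rw [← hsplit, ENNReal.add_ne_top] at hfin
    exact (ENNReal.add_le_add_iff_right hfin.2).1 h
  have hdouble {f : (X × Y) × (X × Y) → ℝ≥0∞} (hf : Measurable f) :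
      ∫⁻ q in B, f q + f q.swap ∂π.prod π = 2 * ∫⁻ q in B, f q ∂π.prod π := by
    rw [lintegral_add_left hf, setLIntegral_prod_self_comp_swap π hswap, two_mul]
  have hdouble_stay_ne_top : ∫⁻ q in B, stay q + stay q.swap ∂π.prod π ≠ ∞ := by
    rw [hdouble hstay]
    exact ENNReal.mul_ne_top (by simp) (ne_top_of_le_ne_top hfin (hsplit ▸ le_self_add))
  have hnull : (π.prod π) B = 0 := by
    by_contra hpos
    have hlt : ∫⁻ q in B, cross q + cross q.swap ∂π.prod π <
        ∫⁻ q in B, stay q + stay q.swap ∂π.prod π :=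
      setLIntegral_strict_mono hB hpos (by fun_prop)
        (ne_top_of_le_ne_top hdouble_stay_ne_top (setLIntegral_mono (by fun_prop) fun q hq ↦ hq.le))
        (.of_forall fun q hq ↦ hq)
    rw [hdouble hcross, hdouble hstay] at hlt
    exact hlt.not_ge (by gcongr)
  filter_upwards [measure_eq_zero_iff_ae_notMem.1 hnull] with q hq using not_lt.1 hq

end Exchange

section CMonotone

/-- The two-point case of `c`-cyclical monotonicity of a set of pairs: exchanging the targets of
two of its pairs never lowers the total cost. -/
def IsCMonotone {X Y M : Type*} [Add M] [LE M] (c : X → Y → M) (Γ : Set (X × Y)) : Prop :=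
  ∀ z ∈ Γ, ∀ w ∈ Γ, c z.1 z.2 + c w.1 w.2 ≤ c z.1 w.2 + c w.1 z.2

variable {X Y : Type*} [TopologicalSpace X] [MeasurableSpace X] [TopologicalSpace Y]
  [MeasurableSpace Y]

theorem support_prod_support_subset (μ : Measure X) (ν : Measure Y) [SFinite ν] :
    μ.support ×ˢ ν.support ⊆ (μ.prod ν).support := by
  rintro ⟨x, y⟩ ⟨hx, hy⟩
  rw [Measure.mem_support_iff_forall] at hx hy ⊢
  intro W hW
  obtain ⟨U, hU, V, hV, hUV⟩ := mem_nhds_prod_iff.1 hW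
  calc 0 < μ U * ν V := ENNReal.mul_pos (hx U hU).ne' (hy V hV).ne'
    _ = μ.prod ν (U ×ˢ V) := (Measure.prod_prod U V).symm
    _ ≤ μ.prod ν W := measure_mono hUV

theorem isCMonotone_support_of_forall_lintegral_le [OpensMeasurableSpace (X × Y)]
    {π : Measure (X × Y)} [IsProbabilityMeasure π] {c : X → Y → ℝ≥0∞}
    (hc : Continuous fun z : X × Y ↦ c z.1 z.2) (hfin : ∫⁻ z, c z.1 z.2 ∂π ≠ ∞)
    (hmin : ∀ π' : Measure (X × Y), π'.fst = π.fst → π'.snd = π.snd →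
      ∫⁻ z, c z.1 z.2 ∂π ≤ ∫⁻ z, c z.1 z.2 ∂π') :
    IsCMonotone c π.support := by
  have hclosed : IsClosed {q : (X × Y) × (X × Y) |
      c q.1.1 q.1.2 + c q.2.1 q.2.2 ≤ c q.1.1 q.2.2 + c q.2.1 q.1.2} :=
    isClosed_le ((hc.comp continuous_fst).add (hc.comp continuous_snd))
      ((hc.comp (by fun_prop : Continuous fun q : (X × Y) × (X × Y) ↦ (q.1.1, q.2.2))).add
        (hc.comp (by fun_prop : Continuous fun q : (X × Y) × (X × Y) ↦ (q.2.1, q.1.2))))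
  have hsupp := Measure.support_subset_of_isClosed hclosed
    (ae_prod_le_exchange_of_forall_lintegral_le hc.measurable hfin hmin)
  intro z hz w hw
  have hzw : (z, w) ∈ (π.prod π).support := support_prod_support_subset π π ⟨hz, hw⟩
  exact hsupp hzw

end CMonotone

section Fibers

theorem ae_forall_eventually_exists_add_smul_mem {E Y : Type*} [NormedAddCommGroup E]
    [NormedSpace ℝ E] [FiniteDimensional ℝ E] [MeasurableSpace E] [BorelSpace E]
    (μ : Measure E) [μ.IsAddHaarMeasure] [TopologicalSpace Y] [SecondCountableTopology Y]
    (Γ : Set (E × Y)) :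
    ∀ᵐ x ∂μ, ∀ y, (x, y) ∈ Γ → ∀ U ∈ 𝓝 y, ∀ v, ∀ V ∈ 𝓝 v,
      ∀ᶠ t in 𝓝[>] (0 : ℝ), ∃ y' ∈ U, ∃ v' ∈ V, (x + t • v', y') ∈ Γ := by
  let A (U : Set Y) : Set E := Prod.fst '' (Γ ∩ Prod.snd ⁻¹' U)
  have hdensity : ∀ᵐ x ∂μ, ∀ U ∈ TopologicalSpace.countableBasis Y, x ∈ A U →
      Tendsto (fun r ↦ μ (A U ∩ closedBall x r) / μ (closedBall x r)) (𝓝[>] 0) (𝓝 1) := by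
    rw [ae_ball_iff (TopologicalSpace.countable_countableBasis Y)]
    exact fun U _ ↦ ae_imp_of_ae_restrict (Besicovitch.ae_tendsto_measure_inter_div μ (A U))
  filter_upwards [hdensity] with x hx y hxy U hU v V hV
  obtain ⟨U', hU'basis, hyU', hU'U⟩ :=
    (TopologicalSpace.isBasis_countableBasis Y).mem_nhds_iff.1 hU
  have hVpos : μ (interior V) ≠ 0 :=
    (isOpen_interior.measure_pos μ ⟨v, mem_interior_iff_mem_nhds.2 hV⟩).ne'
  have hev := Measure.eventually_nonempty_inter_smul_of_density_one μ (A U') x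
    (hx U' hU'basis ⟨(x, y), ⟨hxy, hyU'⟩, rfl⟩) _ isOpen_interior.measurableSet hVpos
  filter_upwards [hev] with t ht
  obtain ⟨_, ⟨⟨x', y'⟩, ⟨hxy', hy'⟩, rfl⟩, x₀, hx₀, _, ⟨v', hv', rfl⟩, hx'⟩ := ht
  obtain rfl : x₀ = x := hx₀
  have hx' : x₀ + t • v' = x' := hx'
  exact ⟨y', hU'U hy', v', interior_subset hv', hx' ▸ hxy'⟩

theorem add_le_add_of_le_of_convexOn {E : Type*} [AddCommGroup E] [Module ℝ E] {h : E → ℝ}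
    (hconv : ConvexOn ℝ univ h) {a b v : E} {s t : ℝ} (ht : 0 < t) (hts : t < s)
    (hstep : h (a - t • v) + h b ≤ h (b - t • v) + h a) :
    h a + h b ≤ h (a + s • v) + h (b - s • v) := by
  have hline (x : E) : ConvexOn ℝ univ fun τ : ℝ ↦ h (x + τ • v) := by
    simpa [Function.comp_def, AffineMap.lineMap_apply, add_comm] using
      hconv.comp_affineMap (AffineMap.lineMap x (x + v))
  have ha : (h a - h (a - t • v)) / t ≤ (h (a + s • v) - h a) / s := by
    simpa [← sub_eq_add_neg] using (hline a).slope_mono_adjacent (mem_univ (-t)) (mem_univ s)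
      (neg_lt_zero.2 ht) (ht.trans hts)
  have hb : (h b - h (b - s • v)) / s ≤ (h b - h (b - t • v)) / t := by
    have := (hline b).secant_mono (mem_univ 0) (mem_univ (-s)) (mem_univ (-t)) (by linarith)
      (by linarith) (by linarith)
    simpa [← sub_eq_add_neg, div_neg, ← neg_div] using this
  have hab : (h b - h (b - t • v)) / t ≤ (h a - h (a - t • v)) / t := by
    gcongr ?_ / t; linarith
  have := (div_le_div_iff_of_pos_right (ht.trans hts)).1 (hb.trans (hab.trans ha))
  linarith

theorem IsCMonotone.ae_subsingleton_fiber {E : Type*} [NormedAddCommGroup E] [NormedSpace ℝ E]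
    [FiniteDimensional ℝ E] [MeasurableSpace E] [BorelSpace E] (μ : Measure E)
    [μ.IsAddHaarMeasure] {h : E → ℝ} (hh : StrictConvexOn ℝ univ h) {Γ : Set (E × E)}
    (hΓ : IsCMonotone (fun x y ↦ h (y - x)) Γ) :
    ∀ᵐ x ∂μ, (Prod.mk x ⁻¹' Γ).Subsingleton := by
  filter_upwards [ae_forall_eventually_exists_add_smul_mem μ Γ] with x hx y₁ hy₁ y₂ hy₂
  by_contra hne
  have hcont : Continuous h := hh.convexOn.locallyLipschitz.continuous
  -- `(y₁, y₂ - y₁)` violates strictly and stably the conclusion of `add_le_add_of_le_of_convexOn`,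
  -- whose hypothesis is the exchange inequality of `(x, y₂)` and a nearby pair `(x + t • v, y')`.
  let W : Set (E × E) := {q | h (q.1 - x + (1 / 2 : ℝ) • q.2) + h (y₂ - x - (1 / 2 : ℝ) • q.2)
    < h (q.1 - x) + h (y₂ - x)}
  have hW : IsOpen W := isOpen_lt (by fun_prop) (by fun_prop)
  have hmem : (y₁, y₂ - y₁) ∈ W := by
    have hmid := hh.2 (mem_univ (y₁ - x)) (mem_univ (y₂ - x)) (sub_left_injective.ne hne)
      one_half_pos one_half_pos (add_halves 1)
    rw [smul_eq_mul, smul_eq_mul] at hmid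
    have h₁ : y₁ - x + (1 / 2 : ℝ) • (y₂ - y₁)
        = (1 / 2 : ℝ) • (y₁ - x) + (1 / 2 : ℝ) • (y₂ - x) := by module
    have h₂ : y₂ - x - (1 / 2 : ℝ) • (y₂ - y₁)
        = (1 / 2 : ℝ) • (y₁ - x) + (1 / 2 : ℝ) • (y₂ - x) := by module
    simp only [W, mem_ofPred_eq, h₁, h₂]
    linarith
  obtain ⟨U, hU, V, hV, hUV⟩ := mem_nhds_prod_iff.1 (hW.mem_nhds hmem)
  obtain ⟨t, ⟨y', hy', v, hv, hmemΓ⟩, ht, ht'⟩ :=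
    ((hx y₁ hy₁ U hU _ V hV).and (Ioo_mem_nhdsGT one_half_pos)).exists
  have hmemW : (y', v) ∈ W := hUV ⟨hy', hv⟩
  have hlt : h (y' - x + (1 / 2 : ℝ) • v) + h (y₂ - x - (1 / 2 : ℝ) • v)
      < h (y' - x) + h (y₂ - x) := hmemW
  refine hlt.not_ge (add_le_add_of_le_of_convexOn hh.convexOn ht ht' ?_)
  simpa [sub_sub] using hΓ _ hmemΓ _ hy₂

end Fibers

section Maps

variable {X Y : Type*} [MeasurableSpace X] [MeasurableSpace Y]

theorem exists_eq_dirac_of_ae_mem {m : Measure Y} [IsProbabilityMeasure m] {s : Set Y}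
    (hs : s.Subsingleton) (hm : ∀ᵐ y ∂m, y ∈ s) : ∃ y, m = Measure.dirac y := by
  obtain ⟨y, hy⟩ := hm.exists
  refine ⟨y, ?_⟩
  calc m = m.map id := Measure.map_id.symm
    _ = m.map fun _ ↦ y := Measure.map_congr (hm.mono fun z hz ↦ hs hz hy)
    _ = Measure.dirac y := by simp

theorem exists_measurable_forall_eq_dirac [StandardBorelSpace Y] [Nonempty Y] (κ : Kernel X Y) :
    ∃ T : X → Y, Measurable T ∧ ∀ x, (∃ y, κ x = Measure.dirac y) → κ x = Measure.dirac (T x) := by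
  have he := measurableEmbedding_embeddingReal Y
  -- Embedded in `ℝ`, a Dirac mass is recovered from its barycentre, which depends measurably on it.
  refine ⟨fun x ↦ he.invFun (∫ y, embeddingReal Y y ∂κ x), ?_, ?_⟩
  · exact he.measurable_invFun.comp
      (StronglyMeasurable.integral_kernel he.measurable.stronglyMeasurable).measurable
  · rintro x ⟨y, hy⟩
    simp only [hy, integral_dirac, he.leftInverse_invFun y]

theorem exists_measurable_eq_map_of_ae_mem [StandardBorelSpace Y] [Nonempty Y]
    {π : Measure (X × Y)} [IsFiniteMeasure π] {Γ : Set (X × Y)} (hπ : ∀ᵐ z ∂π, z ∈ Γ)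
    (hΓ : ∀ᵐ x ∂π.fst, (Prod.mk x ⁻¹' Γ).Subsingleton) :
    ∃ T : X → Y, Measurable T ∧ π = π.fst.map fun x ↦ (x, T x) := by
  obtain ⟨T, hT, hdirac⟩ := exists_measurable_forall_eq_dirac π.condKernel
  have hdis : π.fst ⊗ₘ π.condKernel = π := π.disintegrate π.condKernel
  have hκ : π.condKernel =ᵐ[π.fst] Kernel.deterministic T hT := by
    rw [← hdis] at hπ
    filter_upwards [Measure.ae_ae_of_ae_compProd hπ, hΓ] with x hx hsub
    rw [hdirac x (exists_eq_dirac_of_ae_mem hsub hx), Kernel.deterministic_apply]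
  refine ⟨T, hT, ?_⟩
  calc π = π.fst ⊗ₘ π.condKernel := hdis.symm
    _ = π.fst ⊗ₘ Kernel.deterministic T hT := Measure.compProd_congr hκ
    _ = π.fst.map fun x ↦ (x, T x) := Measure.compProd_deterministic hT

theorem eq_map_of_absolutelyContinuous_map [MeasurableEq Y] {π : Measure (X × Y)} {μ : Measure X}
    {T : X → Y} (hT : AEMeasurable T μ) (hfst : π.fst = μ)
    (hac : π ≪ μ.map fun x ↦ (x, T x)) : π = μ.map fun x ↦ (x, T x) := by
  subst hfst
  have hmk : (fun x ↦ (x, T x)) =ᵐ[π.fst] fun x ↦ (x, hT.mk T x) :=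
    hT.ae_eq_mk.mono fun x hx ↦ by simp [← hx]
  rw [Measure.map_congr hmk] at hac ⊢
  have hmeas : Measurable fun x ↦ (x, hT.mk T x) := measurable_id.prodMk hT.measurable_mk
  have hgraph : ∀ᵐ z ∂π, z = (z.1, hT.mk T z.1) := by
    have hmap : ∀ᵐ z ∂π.fst.map fun x ↦ (x, hT.mk T x), z.2 = hT.mk T z.1 :=
      (ae_map_iff hmeas.aemeasurable (measurableSet_eq_fun measurable_snd
        (hT.measurable_mk.comp measurable_fst))).2 (.of_forall fun _ ↦ rfl)
    have hsnd : ∀ᵐ z ∂π, z.2 = hT.mk T z.1 := hac.ae_le hmap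
    exact hsnd.mono fun z hz ↦ Prod.ext rfl hz
  calc π = π.map id := Measure.map_id.symm
    _ = π.map ((fun x ↦ (x, hT.mk T x)) ∘ Prod.fst) := Measure.map_congr hgraph
    _ = π.fst.map fun x ↦ (x, hT.mk T x) := (Measure.map_map hmeas measurable_fst).symm

end Maps

section SeminormPow

variable {E : Type*} [AddCommGroup E] [Module ℝ E] {q : Seminorm ℝ E}

theorem eq_of_sameRay_of_seminorm_eq (hq : ∀ x, q x = 0 → x = 0) {x y : E} (hxy : SameRay ℝ x y)
    (heq : q x = q y) : x = y := by
  obtain ⟨a, b, ha, hb, -, hx, hy⟩ := hxy.exists_eq_smul_add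
  have hab : a * q (x + y) = b * q (x + y) := by
    calc a * q (x + y) = q (a • (x + y)) := by rw [map_smul_eq_mul, Real.norm_of_nonneg ha]
      _ = q (b • (x + y)) := by rw [← hx, ← hy, heq]
      _ = b * q (x + y) := by rw [map_smul_eq_mul, Real.norm_of_nonneg hb]
  rcases mul_eq_mul_right_iff.1 hab with rfl | hzero
  · exact hx.trans hy.symm
  · rw [hq _ hzero, smul_zero] at hx hy
    exact hx.trans hy.symm

theorem strictConvexOn_seminorm_rpow (hq : ∀ x, q x = 0 → x = 0)
    (hstrict : ∀ x y, ¬ SameRay ℝ x y →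
      ∀ t ∈ Ioo (0 : ℝ) 1, q (t • x + (1 - t) • y) < t * q x + (1 - t) * q y)
    {p : ℝ} (hp : 1 < p) : StrictConvexOn ℝ univ fun x ↦ q x ^ p := by
  have : 0 < p := by linarith
  refine ⟨convex_univ, fun x _ y _ hxy a b ha hb hab ↦ ?_⟩
  by_cases hray : SameRay ℝ x y
  · have hne : q x ≠ q y := fun heq ↦ hxy (eq_of_sameRay_of_seminorm_eq hq hray heq)
    calc q (a • x + b • y) ^ p ≤ (a • q x + b • q y) ^ p := by
          gcongr
          exact q.convexOn.2 (mem_univ x) (mem_univ y) ha.le hb.le hab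
      _ < a • q x ^ p + b • q y ^ p :=
          (strictConvexOn_rpow hp).2 (apply_nonneg q x) (apply_nonneg q y) hne ha hb hab
  · obtain rfl : b = 1 - a := by linarith
    calc q (a • x + (1 - a) • y) ^ p < (a • q x + (1 - a) • q y) ^ p := by
          gcongr
          exact hstrict x y hray a ⟨ha, by linarith⟩
      _ ≤ a • q x ^ p + (1 - a) • q y ^ p :=
          (convexOn_rpow hp.le).2 (apply_nonneg q x) (apply_nonneg q y) ha.le hb.le hab

theorem ofReal_seminorm_sub_rpow_le (q : Seminorm ℝ E) {p : ℝ} (hp : 1 ≤ p) (x y : E) :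
    ENNReal.ofReal (q (y - x) ^ p) ≤
      2 ^ (p - 1) * (ENNReal.ofReal (q x ^ p) + ENNReal.ofReal (q y ^ p)) := by
  have hp0 : 0 ≤ p := by linarith
  simp_rw [← ENNReal.ofReal_rpow_of_nonneg (apply_nonneg q _) hp0]
  calc ENNReal.ofReal (q (y - x)) ^ p ≤ (ENNReal.ofReal (q x) + ENNReal.ofReal (q y)) ^ p := by
        rw [← ENNReal.ofReal_add (apply_nonneg q x) (apply_nonneg q y), add_comm]
        gcongr
        exact map_sub_le_add q y x
    _ ≤ _ := ENNReal.rpow_add_le_mul_rpow_add_rpow _ _ hp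

end SeminormPow

section OptimalPlans

variable {N : ℕ} {c : Euc N → Euc N → ℝ} {μ ν : Measure (Euc N)} {π π' : Measure (Euc N × Euc N)}

theorem isCoupling_of_fst_eq_of_snd_eq [IsProbabilityMeasure μ] (hfst : π.fst = μ)
    (hsnd : π.snd = ν) : IsCoupling μ ν π :=
  ⟨⟨by rw [← Measure.fst_univ, hfst, measure_univ]⟩, hfst, hsnd⟩

theorem minCost_le_planCost (hπ : IsCoupling μ ν π) : minCost c μ ν ≤ planCost c π :=
  biInf_le (planCost c) hπ

theorem exists_isOptimalPlan (μ ν : Measure (Euc N)) [IsProbabilityMeasure μ]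
    [IsProbabilityMeasure ν] (hc : Continuous fun z : Euc N × Euc N ↦ c z.1 z.2) :
    ∃ π, IsOptimalPlan c μ ν π := by
  have hlsc := lowerSemicontinuous_lintegral_probabilityMeasure (ENNReal.continuous_ofReal.comp hc)
  have hne : {P : ProbabilityMeasure (Euc N × Euc N) |
      (P : Measure (Euc N × Euc N)).fst = μ ∧ (P : Measure (Euc N × Euc N)).snd = ν}.Nonempty :=
    ⟨⟨μ.prod ν, inferInstance⟩, Measure.fst_prod, Measure.snd_prod⟩
  obtain ⟨P, ⟨hfst, hsnd⟩, hmin⟩ := (hlsc.lowerSemicontinuousOn _).exists_isMinOn hne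
    (isCompact_setOf_fst_eq_and_snd_eq μ ν)
  have hP : IsCoupling μ ν (P : Measure (Euc N × Euc N)) := ⟨inferInstance, hfst, hsnd⟩
  refine ⟨P, hP, (le_iInf₂ fun π hπ ↦ ?_).antisymm (minCost_le_planCost hP)⟩
  exact isMinOn_iff.1 hmin ⟨π, hπ.1⟩ hπ.2

theorem IsOptimalPlan.isCMonotone_support (hπ : IsOptimalPlan c μ ν π)
    (hc : Continuous fun z : Euc N × Euc N ↦ c z.1 z.2) (hc0 : ∀ x y, 0 ≤ c x y)
    (hfin : minCost c μ ν < ⊤) : IsCMonotone c π.support := by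
  have : IsProbabilityMeasure π := hπ.1.1
  have hmin (π' : Measure (Euc N × Euc N)) (hfst : π'.fst = π.fst) (hsnd : π'.snd = π.snd) :
      planCost c π ≤ planCost c π' := by
    have hμ : IsProbabilityMeasure μ := hπ.1.2.1 ▸ Measure.isProbabilityMeasure_map (by fun_prop)
    exact hπ.2.trans_le (minCost_le_planCost
      (isCoupling_of_fst_eq_of_snd_eq (hfst.trans hπ.1.2.1) (hsnd.trans hπ.1.2.2)))
  have hmono := isCMonotone_support_of_forall_lintegral_le (π := π)
    (c := fun x y ↦ ENNReal.ofReal (c x y)) (ENNReal.continuous_ofReal.comp hc)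
    (hπ.2.trans_lt hfin).ne hmin
  intro z hz w hw
  have hzw := hmono z hz w hw
  rwa [← ENNReal.ofReal_add (hc0 _ _) (hc0 _ _), ← ENNReal.ofReal_add (hc0 _ _) (hc0 _ _),
    ENNReal.ofReal_le_ofReal_iff (add_nonneg (hc0 _ _) (hc0 _ _))] at hzw

theorem IsCoupling.smul_add_smul (hπ : IsCoupling μ ν π) (hπ' : IsCoupling μ ν π') {a b : ℝ≥0∞}
    (hab : a + b = 1) : IsCoupling μ ν (a • π + b • π') := by
  obtain ⟨_, hfst, hsnd⟩ := hπ
  obtain ⟨_, hfst', hsnd'⟩ := hπ'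
  refine ⟨⟨by simp [hab]⟩, ?_, ?_⟩
  · rw [Measure.map_add _ _ measurable_fst, Measure.map_smul, Measure.map_smul, hfst, hfst',
      ← add_smul, hab, one_smul]
  · rw [Measure.map_add _ _ measurable_snd, Measure.map_smul, Measure.map_smul, hsnd, hsnd',
      ← add_smul, hab, one_smul]

theorem IsOptimalPlan.smul_add_smul (hπ : IsOptimalPlan c μ ν π) (hπ' : IsOptimalPlan c μ ν π')
    {a b : ℝ≥0∞} (hab : a + b = 1) : IsOptimalPlan c μ ν (a • π + b • π') := by
  refine ⟨hπ.1.smul_add_smul hπ'.1 hab, ?_⟩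
  calc planCost c (a • π + b • π') = a * planCost c π + b * planCost c π' := by
        simp only [planCost, lintegral_add_measure, lintegral_smul_measure, smul_eq_mul]
    _ = minCost c μ ν := by rw [hπ.2, hπ'.2, ← add_mul, hab, one_mul]

theorem IsOptimalPlan.eq_of_forall_inducedByMap
    (hmap : ∀ ρ, IsOptimalPlan c μ ν ρ → InducedByMap μ ρ) (hπ : IsOptimalPlan c μ ν π)
    (hπ' : IsOptimalPlan c μ ν π') : π = π' := by
  have htwo : (2⁻¹ : ℝ≥0∞) ≠ 0 := by simp
  obtain ⟨T, hT, hρ⟩ := hmap _ (hπ.smul_add_smul hπ' ENNReal.inv_two_add_inv_two)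
  have hle : π ≪ μ.map fun x ↦ (x, T x) := hρ ▸
    (Measure.absolutelyContinuous_smul htwo).trans (Measure.absolutelyContinuous_of_le
      (Measure.le_add_right le_rfl))
  have hle' : π' ≪ μ.map fun x ↦ (x, T x) := hρ ▸
    (Measure.absolutelyContinuous_smul htwo).trans (Measure.absolutelyContinuous_of_le
      (Measure.le_add_left le_rfl))
  rw [eq_map_of_absolutelyContinuous_map hT hπ.1.2.1 hle,
    eq_map_of_absolutelyContinuous_map hT hπ'.1.2.1 hle']

theorem IsOptimalPlan.inducedByMap {h : Euc N → ℝ} (hh : StrictConvexOn ℝ univ h)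
    (h0 : ∀ x, 0 ≤ h x) (hac : μ ≪ volume) (hfin : minCost (fun x y ↦ h (y - x)) μ ν < ⊤)
    (hπ : IsOptimalPlan (fun x y ↦ h (y - x)) μ ν π) : InducedByMap μ π := by
  have : IsProbabilityMeasure π := hπ.1.1
  have hcont : Continuous h := hh.convexOn.locallyLipschitz.continuous
  have hmono := hπ.isCMonotone_support (by fun_prop) (fun _ _ ↦ h0 _) hfin
  have hfst : π.fst = μ := hπ.1.2.1
  obtain ⟨T, hT, hTπ⟩ := exists_measurable_eq_map_of_ae_mem Measure.support_mem_ae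
    (hfst ▸ hac.ae_le (hmono.ae_subsingleton_fiber volume hh))
  exact ⟨T, hT.aemeasurable, hfst ▸ hTπ⟩

theorem minCost_seminorm_rpow_lt_top (q : Seminorm ℝ (Euc N)) {p : ℝ} (hp : 1 ≤ p)
    [IsProbabilityMeasure μ] [IsProbabilityMeasure ν]
    (hμ : ∫⁻ x, ENNReal.ofReal (q x ^ p) ∂μ < ⊤) (hν : ∫⁻ x, ENNReal.ofReal (q x ^ p) ∂ν < ⊤) :
    minCost (fun x y ↦ q (y - x) ^ p) μ ν < ⊤ := by
  have hq : Continuous q := q.convexOn.locallyLipschitz.continuous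
  have hmeas : Measurable fun x ↦ ENNReal.ofReal (q x ^ p) := by fun_prop
  calc minCost (fun x y ↦ q (y - x) ^ p) μ ν
      ≤ ∫⁻ z, ENNReal.ofReal (q (z.2 - z.1) ^ p) ∂μ.prod ν :=
        minCost_le_planCost (isCoupling_of_fst_eq_of_snd_eq Measure.fst_prod Measure.snd_prod)
    _ ≤ ∫⁻ z, 2 ^ (p - 1) * (ENNReal.ofReal (q z.1 ^ p) + ENNReal.ofReal (q z.2 ^ p)) ∂μ.prod ν :=
        lintegral_mono fun z ↦ ofReal_seminorm_sub_rpow_le q hp z.1 z.2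
    _ = 2 ^ (p - 1) *
          (∫⁻ x, ENNReal.ofReal (q x ^ p) ∂μ + ∫⁻ y, ENNReal.ofReal (q y ^ p) ∂ν) := by
        rw [lintegral_const_mul _ (by fun_prop), lintegral_add_left (by fun_prop),
          measurePreserving_fst.lintegral_comp hmeas, measurePreserving_snd.lintegral_comp hmeas]
    _ < ⊤ := ENNReal.mul_lt_top (ENNReal.rpow_lt_top_of_nonneg (by linarith) (by simp))
        (ENNReal.add_lt_top.2 ⟨hμ, hν⟩)

end OptimalPlans

theorem strictlyConvexNorm_Lp_unique_optimal_map_general {N : ℕ} {h : Euc N → ℝ}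
    (hh : StrictConvexOn ℝ univ h) (h0 : ∀ x, 0 ≤ h x) (μ ν : Measure (Euc N))
    [IsProbabilityMeasure μ] [IsProbabilityMeasure ν] (hac : μ ≪ volume)
    (hfin : minCost (fun x y ↦ h (y - x)) μ ν < ⊤) :
    ∃ π, IsOptimalPlan (fun x y ↦ h (y - x)) μ ν π ∧
      (∀ π', IsOptimalPlan (fun x y ↦ h (y - x)) μ ν π' → π' = π) ∧ InducedByMap μ π := by
  have hmap (ρ) (hρ : IsOptimalPlan (fun x y ↦ h (y - x)) μ ν ρ) : InducedByMap μ ρ :=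
    hρ.inducedByMap hh h0 hac hfin
  have hcont : Continuous h := hh.convexOn.locallyLipschitz.continuous
  obtain ⟨π, hπ⟩ := exists_isOptimalPlan (c := fun x y ↦ h (y - x)) μ ν (by fun_prop)
  exact ⟨π, hπ, fun π' hπ' ↦ hπ'.eq_of_forall_inducedByMap hmap hπ, hmap π hπ⟩

theorem strictlyConvexNorm_Lp_unique_optimal_map {N : ℕ} (n : Euc N → ℝ)
    (hn0 : ∀ x, n x = 0 ↔ x = 0)
    (hhom : ∀ (a : ℝ) (x : Euc N), n (a • x) = |a| * n x)
    (htri : ∀ x y : Euc N, n (x + y) ≤ n x + n y)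
    (hstrict : ∀ x y : Euc N, ¬ SameRay ℝ x y →
      ∀ t ∈ Set.Ioo (0 : ℝ) 1, n (t • x + (1 - t) • y) < t * n x + (1 - t) * n y)
    (p : ℝ) (hp : 1 < p)
    (μ ν : Measure (Euc N)) [IsProbabilityMeasure μ] [IsProbabilityMeasure ν]
    (hac : μ ≪ volume)
    (hμmom : ∫⁻ x, ENNReal.ofReal (n x ^ p) ∂μ < ⊤)
    (hνmom : ∫⁻ x, ENNReal.ofReal (n x ^ p) ∂ν < ⊤) :
    ∃ π, IsOptimalPlan (fun x y => n (y - x) ^ p) μ ν π ∧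
      (∀ π', IsOptimalPlan (fun x y => n (y - x) ^ p) μ ν π' → π' = π) ∧
      InducedByMap μ π := by
  let q : Seminorm ℝ (Euc N) := .of n htri fun a x ↦ by rw [hhom, Real.norm_eq_abs]
  exact strictlyConvexNorm_Lp_unique_optimal_map_general
    (strictConvexOn_seminorm_rpow (q := q) (fun x ↦ (hn0 x).1) hstrict hp)
    (fun x ↦ Real.rpow_nonneg (apply_nonneg q x) p) μ ν hac
    (minCost_seminorm_rpow_lt_top q hp.le hμmom hνmom)
end
end

section
/- Every strictly convex norm on ℝ^N is a cylinder-like convex function. -/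
open MeasureTheory Metric Set
open scoped ENNReal

noncomputable section

/-- A convex function `g : ℝ^N → [0,∞)` is cylinder-like if for every `x̄ ≠ ȳ` with
`g x̄ = g ȳ` there are `ε > 0`, `δ > 0` such that `g (x - ε(x̄ - ȳ)) ≤ g x` on `B_δ(x̄)`
and `g (y + ε(x̄ - ȳ)) ≤ g y` on `B_δ(ȳ)`. -/
def IsCylinderLike {N : ℕ} (g : Euc N → ℝ) : Prop :=
  ∀ xb yb : Euc N, xb ≠ yb → g xb = g yb →
    ∃ ε > (0 : ℝ), ∃ δ > (0 : ℝ),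
      (∀ x ∈ Metric.ball xb δ, g (x - ε • (xb - yb)) ≤ g x) ∧
      (∀ y ∈ Metric.ball yb δ, g (y + ε • (xb - yb)) ≤ g y)

/-!
Two distinct points on one level set of a strictly convex norm lie on different rays, so the norm
is strictly smaller at their midpoint. Moving half-way from either point towards the other lands
there, and by continuity the same translation still decreases the norm at all nearby points.
-/

open scoped Topology

theorem eventually_apply_add_le_of_lt {G α : Type*} [TopologicalSpace G] [Add G] [ContinuousAdd G]
    [TopologicalSpace α] [LinearOrder α] [OrderClosedTopology α] {g : G → α} (hg : Continuous g)
    {x₀ v : G} (hlt : g (x₀ + v) < g x₀) : ∀ᶠ x in 𝓝 x₀, g (x + v) ≤ g x := by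
  have hgv : Continuous fun x ↦ g (x + v) := by fun_prop
  filter_upwards [hgv.continuousAt.eventually_lt hg.continuousAt hlt] with x hx using hx.le

section Topological

variable {E : Type*} [AddCommGroup E] [Module ℝ E] [TopologicalSpace E]

/-- The cylinder-like property on a real vector space with a topology. It is `IsCylinderLike` with
neighbourhoods in place of Euclidean balls, so that it makes sense without a metric. -/
def IsTopologicallyCylinderLike (g : E → ℝ) : Prop :=
  ∀ x₀ y₀ : E, x₀ ≠ y₀ → g x₀ = g y₀ →
    ∃ ε > (0 : ℝ),
      (∀ᶠ x in 𝓝 x₀, g (x - ε • (x₀ - y₀)) ≤ g x) ∧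
      (∀ᶠ y in 𝓝 y₀, g (y + ε • (x₀ - y₀)) ≤ g y)

theorem isCylinderLike_iff_isTopologicallyCylinderLike {N : ℕ} {g : Euc N → ℝ} :
    IsCylinderLike g ↔ IsTopologicallyCylinderLike g := by
  refine forall₄_congr fun x₀ y₀ _ _ ↦ exists_congr fun ε ↦ and_congr_right fun _ ↦ ?_
  simp only [Metric.eventually_nhds_iff_ball]
  constructor
  · rintro ⟨δ, hδ, hx, hy⟩
    exact ⟨⟨δ, hδ, hx⟩, ⟨δ, hδ, hy⟩⟩
  · rintro ⟨⟨δx, hδx, hx⟩, ⟨δy, hδy, hy⟩⟩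
    exact ⟨min δx δy, lt_min hδx hδy,
      fun x hx₀ ↦ hx x (ball_subset_ball (min_le_left _ _) hx₀),
      fun y hy₀ ↦ hy y (ball_subset_ball (min_le_right _ _) hy₀)⟩

theorem isTopologicallyCylinderLike_of_midpoint_lt [ContinuousAdd E] {g : E → ℝ}
    (hg : Continuous g) (hmid : ∀ x y, x ≠ y → g x = g y → g (midpoint ℝ x y) < g x) :
    IsTopologicallyCylinderLike g := by
  intro x₀ y₀ hne heq
  have hlt : g (midpoint ℝ x₀ y₀) < g x₀ := hmid x₀ y₀ hne heq
  have hx : midpoint ℝ x₀ y₀ = x₀ + -((1 / 2 : ℝ) • (x₀ - y₀)) := by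
    rw [midpoint_eq_smul_add, invOf_eq_inv]
    module
  have hy : midpoint ℝ x₀ y₀ = y₀ + (1 / 2 : ℝ) • (x₀ - y₀) := by
    rw [midpoint_eq_smul_add, invOf_eq_inv]
    module
  refine ⟨1 / 2, one_half_pos, ?_, ?_⟩
  · simp only [sub_eq_add_neg _ ((1 / 2 : ℝ) • (x₀ - y₀))]
    exact eventually_apply_add_le_of_lt hg (hx ▸ hlt)
  · exact eventually_apply_add_le_of_lt hg (hy ▸ heq ▸ hlt)

end Topological

section PositivelyHomogeneous

variable {E : Type*} [AddCommGroup E] [Module ℝ E] {n : E → ℝ}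

theorem convexOn_univ_of_smul_of_add_le (hhom : ∀ a : ℝ, 0 ≤ a → ∀ x, n (a • x) = a * n x)
    (hadd : ∀ x y, n (x + y) ≤ n x + n y) : ConvexOn ℝ univ n := by
  refine ⟨convex_univ, fun x _ y _ a b ha hb _ ↦ ?_⟩
  calc n (a • x + b • y) ≤ n (a • x) + n (b • y) := hadd _ _
    _ = a • n x + b • n y := by rw [hhom a ha, hhom b hb, smul_eq_mul, smul_eq_mul]

theorem eq_of_sameRay_of_apply_eq (hdef : ∀ x, n x = 0 → x = 0)
    (hhom : ∀ a : ℝ, 0 ≤ a → ∀ x, n (a • x) = a * n x)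
    {x y : E} (hray : SameRay ℝ x y) (heq : n x = n y) : x = y := by
  obtain ⟨u, a, b, ha, hb, -, rfl, rfl⟩ := hray.exists_eq_smul
  rw [hhom a ha, hhom b hb, mul_eq_mul_right_iff] at heq
  obtain rfl | hu := heq
  · rfl
  · rw [hdef u hu, smul_zero, smul_zero]

theorem midpoint_lt_of_apply_eq (hdef : ∀ x, n x = 0 → x = 0)
    (hhom : ∀ a : ℝ, 0 ≤ a → ∀ x, n (a • x) = a * n x)
    (hstrict : ∀ x y : E, ¬ SameRay ℝ x y →
      ∀ t ∈ Ioo (0 : ℝ) 1, n (t • x + (1 - t) • y) < t * n x + (1 - t) * n y)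
    {x y : E} (hne : x ≠ y) (heq : n x = n y) : n (midpoint ℝ x y) < n x := by
  have hray : ¬ SameRay ℝ x y := fun h ↦ hne (eq_of_sameRay_of_apply_eq hdef hhom h heq)
  have hmid : midpoint ℝ x y = (1 / 2 : ℝ) • x + (1 - 1 / 2 : ℝ) • y := by
    rw [midpoint_eq_smul_add, invOf_eq_inv]
    module
  calc n (midpoint ℝ x y) < 1 / 2 * n x + (1 - 1 / 2) * n y :=
        hmid ▸ hstrict x y hray (1 / 2) ⟨by norm_num, by norm_num⟩
    _ = n x := by rw [← heq]; ring

end PositivelyHomogeneous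

theorem strictlyConvexNorm_isCylinderLike_general {E : Type*} [NormedAddCommGroup E]
    [NormedSpace ℝ E] [FiniteDimensional ℝ E] {n : E → ℝ}
    (hdef : ∀ x, n x = 0 → x = 0)
    (hhom : ∀ a : ℝ, 0 ≤ a → ∀ x, n (a • x) = a * n x)
    (hadd : ∀ x y, n (x + y) ≤ n x + n y)
    (hstrict : ∀ x y : E, ¬ SameRay ℝ x y →
      ∀ t ∈ Ioo (0 : ℝ) 1, n (t • x + (1 - t) • y) < t * n x + (1 - t) * n y) :
    ConvexOn ℝ univ n ∧ IsTopologicallyCylinderLike n := by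
  have hconv : ConvexOn ℝ univ n := convexOn_univ_of_smul_of_add_le hhom hadd
  have hcont : Continuous n := continuousOn_univ.mp (hconv.continuousOn isOpen_univ)
  exact ⟨hconv, isTopologicallyCylinderLike_of_midpoint_lt hcont
    fun _ _ ↦ midpoint_lt_of_apply_eq hdef hhom hstrict⟩

theorem strictlyConvexNorm_isCylinderLike {N : ℕ} (n : Euc N → ℝ)
    (hn0 : ∀ x, n x = 0 ↔ x = 0)
    (hhom : ∀ (a : ℝ) (x : Euc N), n (a • x) = |a| * n x)
    (htri : ∀ x y : Euc N, n (x + y) ≤ n x + n y)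
    (hstrict : ∀ x y : Euc N, ¬ SameRay ℝ x y →
      ∀ t ∈ Set.Ioo (0 : ℝ) 1, n (t • x + (1 - t) • y) < t * n x + (1 - t) * n y) :
    ConvexOn ℝ Set.univ n ∧ (∀ x, 0 ≤ n x) ∧ IsCylinderLike n := by
  obtain ⟨hconv, hcyl⟩ := strictlyConvexNorm_isCylinderLike_general (fun x ↦ (hn0 x).mp)
    (fun a ha x ↦ by rw [hhom, abs_of_nonneg ha]) htri hstrict
  exact ⟨hconv, apply_nonneg (Seminorm.of n htri hhom),
    isCylinderLike_iff_isTopologicallyCylinderLike.mpr hcyl⟩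
end
end

section
/- Every norm on ℝ² is a cylinder-like convex function. -/
open MeasureTheory Metric Set
open scoped ENNReal

noncomputable section

/-!
Let `p u = p v > 0`, and translate points near `u` by `-(u - v) / 2`. If `p` is smaller at the
midpoint of `u` and `v` than at `u`, continuity suffices. Otherwise `p (u + v) = p u + p v`, and the
linear functional on the span of `u` and `v` with values `p u` and `p v` there is bounded by `p`
everywhere and equal to `p` on the cone generated by `u` and `v`. In dimension at most two, every
point near `u` is `a • u + b • v` with `a` near `1` and `b` near `0`; the translation moves it into
that cone and does not change the functional.
-/

open Module Topology

section RealModule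

variable {E : Type*} [AddCommGroup E] [Module ℝ E] (p : Seminorm ℝ E) {u v : E} {a b ε : ℝ}

theorem seminorm_smul_add_smul_le (ha : 0 ≤ a) (hb : 0 ≤ b) :
    p (a • u + b • v) ≤ a * p u + b * p v := by
  simpa only [map_smul_eq_mul, Real.norm_of_nonneg ha, Real.norm_of_nonneg hb] using
    map_add_le_add p (a • u) (b • v)

/- Adding an element of the cone generated by `u` and `v` turns any `a • u + b • v` into a multiple
of `u + v`, where the inequality is the hypothesis. -/
theorem mul_add_mul_le_seminorm (hadd : p u + p v ≤ p (u + v)) (a b : ℝ) :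
    a * p u + b * p v ≤ p (a • u + b • v) := by
  obtain ⟨c, hc, hac, hbc⟩ : ∃ c, 0 ≤ c ∧ a ≤ c ∧ b ≤ c := ⟨max 0 (max a b), by simp⟩
  have complement_le : p ((c - a) • u + (c - b) • v) ≤ (c - a) * p u + (c - b) * p v :=
    seminorm_smul_add_smul_le p (sub_nonneg.2 hac) (sub_nonneg.2 hbc)
  have : c * (p u + p v) ≤ p (a • u + b • v) + p ((c - a) • u + (c - b) • v) := calc
    c * (p u + p v) ≤ c * p (u + v) := by gcongr
    _ = p (c • (u + v)) := by rw [map_smul_eq_mul, Real.norm_of_nonneg hc]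
    _ = p ((a • u + b • v) + ((c - a) • u + (c - b) • v)) := by congr 1; module
    _ ≤ p (a • u + b • v) + p ((c - a) • u + (c - b) • v) := map_add_le_add p _ _
  linarith

theorem seminorm_sub_smul_sub_le (huv : p u = p v) (hadd : p u + p v ≤ p (u + v))
    (ha : ε ≤ a) (hb : -ε ≤ b) :
    p (a • u + b • v - ε • (u - v)) ≤ p (a • u + b • v) := calc
  p (a • u + b • v - ε • (u - v)) = p ((a - ε) • u + (b + ε) • v) := by congr 1; module
  _ ≤ (a - ε) * p u + (b + ε) * p v := seminorm_smul_add_smul_le p (by linarith) (by linarith)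
  _ = a * p u + b * p v := by rw [huv]; ring
  _ ≤ p (a • u + b • v) := mul_add_mul_le_seminorm p hadd a b

theorem seminorm_sub_smul_sub_le_of_eq_zero (hu : p u = 0) (hv : p v = 0) (ε : ℝ) (x : E) :
    p (x - ε • (u - v)) ≤ p x := by
  have map_sub_eq_zero : p (u - v) = 0 :=
    le_antisymm ((map_sub_le_add p u v).trans_eq (by rw [hu, hv, add_zero])) (apply_nonneg p _)
  simpa only [map_smul_eq_mul, map_sub_eq_zero, mul_zero, add_zero] using
    map_sub_le_add p x (ε • (u - v))

theorem linearIndependent_pair_of_add_le_seminorm_add (hne : u ≠ v) (hu : p u ≠ 0)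
    (huv : p u = p v) (hadd : p u + p v ≤ p (u + v)) : LinearIndependent ℝ ![u, v] := by
  refine LinearIndependent.pair_iff.2 fun a b hab => ?_
  have hab_neg : (-a) • u + (-b) • v = 0 := by rw [← neg_eq_zero, ← hab]; module
  have nonpos := mul_add_mul_le_seminorm p hadd a b
  have nonneg := mul_add_mul_le_seminorm p hadd (-a) (-b)
  rw [hab, map_zero, ← huv] at nonpos
  rw [hab_neg, map_zero, ← huv] at nonneg
  have sum_eq_zero : a + b = 0 :=
    (mul_eq_zero.1 (by linarith : (a + b) * p u = 0)).resolve_right hu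
  obtain rfl : b = -a := by linarith
  have : a • (u - v) = 0 := by rw [← hab]; module
  simpa [sub_ne_zero.2 hne] using this

end RealModule

theorem isOpenMap_smul_add_smul {E : Type*} [AddCommGroup E] [TopologicalSpace E]
    [IsTopologicalAddGroup E] [Module ℝ E] [ContinuousSMul ℝ E] [T2Space E] {u v : E}
    (hspan : Submodule.span ℝ {u, v} = ⊤) :
    IsOpenMap fun c : ℝ × ℝ => c.1 • u + c.2 • v := by
  have : FiniteDimensional ℝ E := ⟨hspan ▸ Submodule.fg_span (toFinite {u, v})⟩
  let f := (LinearMap.toSpanSingleton ℝ E u).coprod (LinearMap.toSpanSingleton ℝ E v)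
  have f_surjective : Function.Surjective f := LinearMap.range_eq_top.1 <| by
    rw [LinearMap.range_coprod, LinearMap.range_toSpanSingleton, LinearMap.range_toSpanSingleton,
      ← Submodule.span_insert, hspan]
  exact f.isOpenMap_of_finiteDimensional f_surjective

theorem eventually_seminorm_sub_smul_sub_le_of_span_eq_top {E : Type*} [AddCommGroup E]
    [TopologicalSpace E] [IsTopologicalAddGroup E] [Module ℝ E] [ContinuousSMul ℝ E] [T2Space E]
    (p : Seminorm ℝ E) {u v : E} {ε : ℝ} (hspan : Submodule.span ℝ {u, v} = ⊤) (huv : p u = p v)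
    (hadd : p u + p v ≤ p (u + v)) (hε_pos : 0 < ε) (hε_lt : ε < 1) :
    ∀ᶠ x in 𝓝 u, p (x - ε • (u - v)) ≤ p x := by
  have nhds_le := (isOpenMap_smul_add_smul hspan).nhds_le (1, 0)
  simp only [one_smul, zero_smul, add_zero] at nhds_le
  refine nhds_le (Filter.mem_map.2 ?_)
  have coeff_u : ∀ᶠ c : ℝ × ℝ in 𝓝 (1, 0), ε < c.1 :=
    continuousAt_fst.eventually_const_lt hε_lt
  have coeff_v : ∀ᶠ c : ℝ × ℝ in 𝓝 (1, 0), -ε < c.2 :=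
    continuousAt_snd.eventually_const_lt (neg_lt_zero.2 hε_pos)
  filter_upwards [coeff_u, coeff_v] with c hc_u hc_v
  exact seminorm_sub_smul_sub_le p huv hadd hc_u.le hc_v.le

theorem eventually_seminorm_sub_half_smul_sub_le {E : Type*} [NormedAddCommGroup E]
    [NormedSpace ℝ E] [FiniteDimensional ℝ E] (hE : finrank ℝ E ≤ 2) (p : Seminorm ℝ E)
    {u v : E} (huv : p u = p v) :
    ∀ᶠ x in 𝓝 u, p (x - (1 / 2 : ℝ) • (u - v)) ≤ p x := by
  rcases eq_or_ne u v with rfl | hne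
  · simp
  rcases eq_or_ne (p u) 0 with hu | hu
  · exact .of_forall fun x => seminorm_sub_smul_sub_le_of_eq_zero p hu (huv ▸ hu) _ x
  rcases lt_or_ge (p (u - (1 / 2 : ℝ) • (u - v))) (p u) with hmid | hmid
  · have p_continuous : Continuous p := p.convexOn.locallyLipschitz.continuous
    have shifted_continuous : Continuous fun x => p (x - (1 / 2 : ℝ) • (u - v)) := by fun_prop
    exact (shifted_continuous.continuousAt.eventually_lt p_continuous.continuousAt hmid).mono
      fun _ => le_of_lt
  · have hadd : p u + p v ≤ p (u + v) := by
      have midpoint_eq : u - (1 / 2 : ℝ) • (u - v) = (1 / 2 : ℝ) • (u + v) := by module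
      rw [midpoint_eq, map_smul_eq_mul, Real.norm_of_nonneg (by norm_num)] at hmid
      linarith
    have hindep := linearIndependent_pair_of_add_le_seminorm_add p hne hu huv hadd
    have hspan := hindep.span_eq_top_of_card_eq_finrank
      (hindep.fintype_card_le_finrank.antisymm (by simpa using hE))
    rw [Matrix.range_cons_cons_empty] at hspan
    exact eventually_seminorm_sub_smul_sub_le_of_span_eq_top p hspan huv hadd (by norm_num)
      (by norm_num)

theorem norm_on_plane_isCylinderLike_general {N : ℕ} (hN : N ≤ 2) (p : Seminorm ℝ (Euc N)) :
    ConvexOn ℝ Set.univ p ∧ (∀ x, 0 ≤ p x) ∧ IsCylinderLike p := by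
  refine ⟨p.convexOn, apply_nonneg p, fun u v _ huv => ?_⟩
  have hdim : finrank ℝ (Euc N) ≤ 2 := by simpa using hN
  obtain ⟨δu, hδu, near_u⟩ := Metric.eventually_nhds_iff_ball.1
    (eventually_seminorm_sub_half_smul_sub_le hdim p huv)
  obtain ⟨δv, hδv, near_v⟩ := Metric.eventually_nhds_iff_ball.1
    (eventually_seminorm_sub_half_smul_sub_le hdim p huv.symm)
  refine ⟨1 / 2, by norm_num, min δu δv, lt_min hδu hδv, fun x hx => ?_, fun y hy => ?_⟩
  · exact near_u x (ball_subset_ball (min_le_left _ _) hx)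
  · have reversed : y + (1 / 2 : ℝ) • (u - v) = y - (1 / 2 : ℝ) • (v - u) := by module
    rw [reversed]
    exact near_v y (ball_subset_ball (min_le_right _ _) hy)

theorem norm_on_plane_isCylinderLike (n : Euc 2 → ℝ)
    (hn0 : ∀ x, n x = 0 ↔ x = 0)
    (hhom : ∀ (a : ℝ) (x : Euc 2), n (a • x) = |a| * n x)
    (htri : ∀ x y : Euc 2, n (x + y) ≤ n x + n y) :
    ConvexOn ℝ Set.univ n ∧ (∀ x, 0 ≤ n x) ∧ IsCylinderLike n :=
  norm_on_plane_isCylinderLike_general le_rfl (Seminorm.of n htri hhom)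
end
end

section
/- Let M > N be positive integers, let g : ℝ^N → [0,∞) be a cylinder-like convex function, and let p : ℝ^M → ℝ^N be the projection onto any N distinct coordinates of ℝ^M. Then g ∘ p is a cylinder-like convex function on ℝ^M. -/
open MeasureTheory Metric Set
open scoped ENNReal

noncomputable section

/-!
An affine map `p` carries the displacement `ε • (x - y)` to `ε • (p x - p y)`, so a step that does
not increase `g` near `p x` pulls back to one that does not increase `g ∘ p` near `x`. The only
pairs not covered by the condition on `g` are those with `p x = p y`, and `g ∘ p` is invariant under
translation by the difference of such a pair.
-/

open scoped Topology

theorem exists_ball_forall_and_iff_eventually {X Y : Type*} [PseudoMetricSpace X]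
    [PseudoMetricSpace Y] {P : X → Prop} {Q : Y → Prop} {x : X} {y : Y} :
    (∃ δ > 0, (∀ z ∈ ball x δ, P z) ∧ ∀ z ∈ ball y δ, Q z) ↔
      (∀ᶠ z in 𝓝 x, P z) ∧ ∀ᶠ z in 𝓝 y, Q z := by
  simp only [eventually_nhds_iff_ball]
  constructor
  · rintro ⟨δ, hδ, hP, hQ⟩
    exact ⟨⟨δ, hδ, hP⟩, δ, hδ, hQ⟩
  · rintro ⟨⟨δ₁, hδ₁, hP⟩, δ₂, hδ₂, hQ⟩
    exact ⟨min δ₁ δ₂, lt_min hδ₁ hδ₂, fun z hz ↦ hP z (ball_subset_ball (min_le_left _ _) hz),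
      fun z hz ↦ hQ z (ball_subset_ball (min_le_right _ _) hz)⟩

/-- `IsDescentStepAt g v x` says that translation by `v` does not increase `g` at points near `x`.
A cylinder-like function is one for which suitable steps of this kind exist at any two distinct
points of a level set; the radius `δ` is absorbed into the neighbourhood filter. -/
def IsDescentStepAt {E β : Type*} [TopologicalSpace E] [Add E] [LE β]
    (g : E → β) (v x : E) : Prop :=
  ∀ᶠ z in 𝓝 x, g (z + v) ≤ g z

namespace IsDescentStepAt

variable {E F β : Type*} [TopologicalSpace E]

theorem zero [AddZeroClass E] [Preorder β] (g : E → β) (x : E) : IsDescentStepAt g 0 x :=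
  .of_forall fun z ↦ by rw [add_zero]

theorem comp_of_map_add [Add E] [TopologicalSpace F] [Add F] [LE β] {g : F → β} {p : E → F}
    {v x : E} {w : F} (hg : IsDescentStepAt g w (p x)) (hp : ContinuousAt p x)
    (hpv : ∀ z, p (z + v) = p z + w) : IsDescentStepAt (g ∘ p) v x :=
  (hp.eventually hg).mono fun z hz ↦ by simpa only [Function.comp_apply, hpv] using hz

end IsDescentStepAt

theorem isCylinderLike_iff_isDescentStepAt {N : ℕ} {g : Euc N → ℝ} :
    IsCylinderLike g ↔ ∀ x y, x ≠ y → g x = g y →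
      ∃ ε > (0 : ℝ), IsDescentStepAt g (ε • (y - x)) x ∧ IsDescentStepAt g (ε • (x - y)) y := by
  have sub_step (ε : ℝ) (x y z : Euc N) : z - ε • (x - y) = z + ε • (y - x) := by module
  simp only [IsCylinderLike, sub_step, exists_ball_forall_and_iff_eventually, IsDescentStepAt]

theorem affineMap_add_smul_sub {k V W : Type*} [Ring k] [AddCommGroup V] [Module k V]
    [AddCommGroup W] [Module k W] (p : V →ᵃ[k] W) (c : k) (a b z : V) :
    p (z + c • (a - b)) = p z + c • (p a - p b) := by
  rw [add_comm, ← vadd_eq_add, p.map_vadd, map_smul, ← vsub_eq_sub, p.linearMap_vsub, vsub_eq_sub,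
    vadd_eq_add, add_comm]

theorem IsCylinderLike.comp_affineMap {M N : ℕ} {g : Euc N → ℝ} (hg : IsCylinderLike g)
    (p : Euc M →ᵃ[ℝ] Euc N) : IsCylinderLike (g ∘ p) := by
  rw [isCylinderLike_iff_isDescentStepAt] at hg ⊢
  intro x y _ hgxy
  have hp : Continuous p := p.continuous_of_finiteDimensional
  by_cases hpxy : p x = p y
  · have map_step_eq (a b : Euc M) (hab : p a = p b) (z : Euc M) :
        p (z + (1 : ℝ) • (a - b)) = p z + 0 := by
      rw [affineMap_add_smul_sub, hab, sub_self, smul_zero]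
    exact ⟨1, one_pos,
      (IsDescentStepAt.zero g _).comp_of_map_add hp.continuousAt (map_step_eq y x hpxy.symm),
      (IsDescentStepAt.zero g _).comp_of_map_add hp.continuousAt (map_step_eq x y hpxy)⟩
  · obtain ⟨ε, hε, hx, hy⟩ := hg (p x) (p y) hpxy hgxy
    exact ⟨ε, hε, hx.comp_of_map_add hp.continuousAt (affineMap_add_smul_sub p ε y x),
      hy.comp_of_map_add hp.continuousAt (affineMap_add_smul_sub p ε x y)⟩

theorem isLinearMap_of_piLp_apply_eq {R E ι κ : Type*} [Semiring R] [SeminormedAddCommGroup E]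
    [Module R E] {q r : ℝ≥0∞} {p : PiLp q (fun _ : κ ↦ E) → PiLp r (fun _ : ι ↦ E)} {σ : ι → κ}
    (hp : ∀ x i, p x i = x (σ i)) : IsLinearMap R p where
  map_add x y := by ext i; simp only [hp, PiLp.add_apply]
  map_smul c x := by ext i; simp only [hp, PiLp.smul_apply]

theorem comp_proj_isCylinderLike_general {M N : ℕ} (g : Euc N → ℝ)
    (hgconv : ConvexOn ℝ Set.univ g) (hgnonneg : ∀ x, 0 ≤ g x) (hgcyl : IsCylinderLike g)
    (p : Euc M →ᵃ[ℝ] Euc N) :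
    ConvexOn ℝ Set.univ (g ∘ p) ∧ (∀ x, 0 ≤ (g ∘ p) x) ∧ IsCylinderLike (g ∘ p) :=
  ⟨hgconv.comp_affineMap p, fun x ↦ hgnonneg (p x), hgcyl.comp_affineMap p⟩

theorem comp_proj_isCylinderLike {M N : ℕ} (hMN : N < M) (hN : 0 < N)
    (g : Euc N → ℝ)
    (hgconv : ConvexOn ℝ Set.univ g) (hgnonneg : ∀ x, 0 ≤ g x) (hgcyl : IsCylinderLike g)
    (ι : Fin N → Fin M) (hι : Function.Injective ι)
    (p : Euc M → Euc N) (hp : ∀ (x : Euc M) (i : Fin N), p x i = x (ι i)) :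
    ConvexOn ℝ Set.univ (g ∘ p) ∧ (∀ x, 0 ≤ (g ∘ p) x) ∧ IsCylinderLike (g ∘ p) :=
  comp_proj_isCylinderLike_general g hgconv hgnonneg hgcyl
    ((isLinearMap_of_piLp_apply_eq hp).mk' p).toAffineMap
end
end

section
/- The cylinder norm on ℝ³, defined by ‖(x, y, z)‖ = max{√(x² + y²), |z|}, is a cylinder-like convex function. -/
open MeasureTheory Metric Set
open scoped ENNReal

noncomputable section

/-- The cylinder norm on `ℝ³`: `‖(x, y, z)‖ = max {√(x² + y²), |z|}`. -/
noncomputable def cylinderNorm (w : Euc 3) : ℝ :=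
  max (Real.sqrt (w 0 ^ 2 + w 1 ^ 2)) |w 2|

/-!
The cylinder norm is the norm of `ℝ² × ℝ¹`, the maximum of two Euclidean norms. A Euclidean norm
does not increase under a short displacement of any point near `a` in the direction `b - a` if
`‖b‖ ≤ ‖a‖` and `b ≠ a`, because then the inner product of `a` and `b - a` is negative, and this is
an open condition on `a`. This behaviour passes to a maximum that does not increase from `a` to `b`:
a function that does increase from `a` to `b` lies strictly below the maximum at `a`, so a short
displacement keeps it below the maximum near `a`.
-/

open Filter Topology

/-- The function `f` is stably quasiconvex if `f b ≤ f a` implies `f (x + t • (b - a)) ≤ f x` for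
all `x` near `a` and all small `t > 0`; for `x = a` this is the quasiconvexity inequality. It is a
one-sided form of `IsCylinderLike` that survives taking maxima. The pair `(t, x)` is written `p`. -/
def IsStablyQuasiconvex {V : Type*} [TopologicalSpace V] [AddCommGroup V] [Module ℝ V]
    (f : V → ℝ) : Prop :=
  ∀ ⦃a b : V⦄, f b ≤ f a →
    ∀ᶠ p : ℝ × V in 𝓝[>] 0 ×ˢ 𝓝 a, f (p.2 + p.1 • (b - a)) ≤ f p.2

theorem tendsto_nhdsWithin_prod_nhds {X Y Z : Type*} [TopologicalSpace X] [TopologicalSpace Y]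
    [TopologicalSpace Z] {F : X × Y → Z} {x : X} {y : Y} (hF : ContinuousAt F (x, y)) (s : Set X) :
    Tendsto F (𝓝[s] x ×ˢ 𝓝 y) (𝓝 (F (x, y))) :=
  hF.tendsto.mono_left <| nhds_prod_eq.ge.trans' <| prod_mono_left _ nhdsWithin_le_nhds

section InnerProductSpace

variable {H : Type*} [NormedAddCommGroup H] [InnerProductSpace ℝ H]

theorem inner_sub_right_neg_of_norm_le {a b : H} (hab : ‖b‖ ≤ ‖a‖) (hne : b ≠ a) :
    inner ℝ a (b - a) < 0 := by
  have hdist : 0 < ‖b - a‖ := norm_pos_iff.mpr (sub_ne_zero.mpr hne)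
  have hsq : ‖b‖ ^ 2 = ‖a‖ ^ 2 + 2 * inner ℝ a (b - a) + ‖b - a‖ ^ 2 := by
    simpa using norm_add_sq_real a (b - a)
  have hle : ‖b‖ ^ 2 ≤ ‖a‖ ^ 2 := by gcongr
  linarith [pow_pos hdist 2]

theorem norm_add_smul_le_norm {x d : H} {t : ℝ} (ht : 0 ≤ t)
    (hd : 2 * inner ℝ x d + t * ‖d‖ ^ 2 ≤ 0) : ‖x + t • d‖ ≤ ‖x‖ := by
  refine le_of_sq_le_sq ?_ (norm_nonneg x)
  calc ‖x + t • d‖ ^ 2 = ‖x‖ ^ 2 + t * (2 * inner ℝ x d + t * ‖d‖ ^ 2) := by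
        rw [norm_add_sq_real, inner_smul_right, norm_smul, mul_pow, Real.norm_eq_abs, sq_abs]
        ring
    _ ≤ ‖x‖ ^ 2 := add_le_of_nonpos_right (mul_nonpos_of_nonneg_of_nonpos ht hd)

theorem isStablyQuasiconvex_norm : IsStablyQuasiconvex (norm : H → ℝ) := by
  intro a b hab
  obtain rfl | hne := eq_or_ne b a
  · simp
  have hlim : Tendsto (fun p : ℝ × H ↦ 2 * inner ℝ p.2 (b - a) + p.1 * ‖b - a‖ ^ 2)
      (𝓝[>] 0 ×ˢ 𝓝 a) (𝓝 (2 * inner ℝ a (b - a) + 0 * ‖b - a‖ ^ 2)) :=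
    tendsto_nhdsWithin_prod_nhds (by fun_prop) _
  have hneg : 2 * inner ℝ a (b - a) + 0 * ‖b - a‖ ^ 2 < 0 := by
    linarith [inner_sub_right_neg_of_norm_le hab hne]
  have hpos : ∀ᶠ p : ℝ × H in 𝓝[>] 0 ×ˢ 𝓝 a, 0 < p.1 :=
    tendsto_fst.eventually eventually_mem_nhdsWithin
  filter_upwards [hlim.eventually_lt_const hneg, hpos] with p hp ht
  exact norm_add_smul_le_norm ht.le hp.le

end InnerProductSpace

namespace IsStablyQuasiconvex

section Sup

variable {V : Type*} [TopologicalSpace V] [AddCommGroup V] [Module ℝ V] [ContinuousAdd V]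
  [ContinuousSMul ℝ V] {f g : V → ℝ}

theorem eventually_le_of_le (hf : IsStablyQuasiconvex f) (hfg : f ≤ g) {a b : V}
    (hfa : ContinuousAt f a) (hga : ContinuousAt g a) (hab : g b ≤ g a) :
    ∀ᶠ p : ℝ × V in 𝓝[>] 0 ×ˢ 𝓝 a, f (p.2 + p.1 • (b - a)) ≤ g p.2 := by
  by_cases hba : f b ≤ f a
  · exact (hf hba).mono fun p hp ↦ hp.trans (hfg p.2)
  have hlt : f a < g a := (not_le.mp hba).trans_le ((hfg b).trans hab)
  have hmove : Tendsto (fun p : ℝ × V ↦ p.2 + p.1 • (b - a)) (𝓝[>] 0 ×ˢ 𝓝 a) (𝓝 a) := by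
    simpa using tendsto_nhdsWithin_prod_nhds (F := fun p : ℝ × V ↦ p.2 + p.1 • (b - a))
      (x := 0) (y := a) (by fun_prop) (Ioi 0)
  exact ((hfa.tendsto.comp hmove).eventually_lt (hga.tendsto.comp tendsto_snd) hlt).mono
    fun _ ↦ le_of_lt

theorem sup (hf : IsStablyQuasiconvex f) (hg : IsStablyQuasiconvex g) (hfc : Continuous f)
    (hgc : Continuous g) : IsStablyQuasiconvex (f ⊔ g) := by
  intro a b hab
  have hc : ContinuousAt (f ⊔ g) a := (hfc.sup hgc).continuousAt
  filter_upwards [hf.eventually_le_of_le le_sup_left hfc.continuousAt hc hab,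
    hg.eventually_le_of_le le_sup_right hgc.continuousAt hc hab] with p hfp hgp
  exact sup_le hfp hgp

end Sup

theorem comp_continuousLinearMap {V W : Type*} [TopologicalSpace V] [AddCommGroup V] [Module ℝ V]
    [TopologicalSpace W] [AddCommGroup W] [Module ℝ W] {f : W → ℝ} (hf : IsStablyQuasiconvex f)
    (L : V →L[ℝ] W) : IsStablyQuasiconvex (f ∘ L) := by
  intro a b hab
  have hL : Tendsto (fun p : ℝ × V ↦ (p.1, L p.2)) (𝓝[>] 0 ×ˢ 𝓝 a) (𝓝[>] 0 ×ˢ 𝓝 (L a)) :=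
    tendsto_id.prodMap (L.continuous.tendsto a)
  simpa using hL.eventually (hf hab)

theorem prod_norm {E F : Type*} [NormedAddCommGroup E] [NormedSpace ℝ E] [NormedAddCommGroup F]
    [NormedSpace ℝ F] (hE : IsStablyQuasiconvex (norm : E → ℝ))
    (hF : IsStablyQuasiconvex (norm : F → ℝ)) : IsStablyQuasiconvex (norm : E × F → ℝ) :=
  (hE.comp_continuousLinearMap (.fst ℝ E F)).sup (hF.comp_continuousLinearMap (.snd ℝ E F))
    continuous_fst.norm continuous_snd.norm

theorem isCylinderLike {N : ℕ} {g : Euc N → ℝ} (hg : IsStablyQuasiconvex g) :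
    IsCylinderLike g := by
  intro a b _ hab
  obtain ⟨ε, hε, ha, hb⟩ := (eventually_mem_nhdsWithin.and
    ((hg hab.ge).curry.and (hg hab.le).curry)).exists
  obtain ⟨δa, hδa, ha⟩ := Metric.eventually_nhds_iff_ball.mp ha
  obtain ⟨δb, hδb, hb⟩ := Metric.eventually_nhds_iff_ball.mp hb
  refine ⟨ε, hε, min δa δb, lt_min hδa hδb, fun x hx ↦ ?_, fun y hy ↦ ?_⟩
  · rw [sub_eq_add_neg, ← smul_neg, neg_sub]
    exact ha x (Metric.ball_subset_ball (min_le_left _ _) hx)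
  · exact hb y (Metric.ball_subset_ball (min_le_right _ _) hy)

end IsStablyQuasiconvex

/-- The splitting of `ℝ³` into the horizontal plane and the vertical axis. The product carries the
supremum norm, so that the cylinder norm becomes its norm. -/
def horizontalVerticalEquiv : Euc 3 ≃L[ℝ] Euc 2 × Euc 1 :=
  EuclideanSpace.finAddEquivProd (n := 2) (m := 1)

theorem norm_comp_horizontalVerticalEquiv : norm ∘ horizontalVerticalEquiv = cylinderNorm := by
  ext w
  have hhoriz : ‖(horizontalVerticalEquiv w).1‖ = √(w 0 ^ 2 + w 1 ^ 2) := by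
    simp only [EuclideanSpace.norm_eq, Fin.sum_univ_two, Real.norm_eq_abs, sq_abs]
    rfl
  have hvert : ‖(horizontalVerticalEquiv w).2‖ = |w 2| := by
    simp only [EuclideanSpace.norm_eq, Fin.sum_univ_one, Real.norm_eq_abs, sq_abs,
      Real.sqrt_sq_eq_abs]
    rfl
  rw [Function.comp_apply, Prod.norm_def, hhoriz, hvert, cylinderNorm]

theorem cylinderNorm_isCylinderLike :
    ConvexOn ℝ Set.univ cylinderNorm ∧ (∀ w, 0 ≤ cylinderNorm w) ∧
      IsCylinderLike cylinderNorm := by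
  have hprod : IsStablyQuasiconvex (norm : Euc 2 × Euc 1 → ℝ) :=
    isStablyQuasiconvex_norm.prod_norm isStablyQuasiconvex_norm
  rw [← norm_comp_horizontalVerticalEquiv]
  exact ⟨convexOn_univ_norm.comp_linearMap (horizontalVerticalEquiv : Euc 3 →ₗ[ℝ] Euc 2 × Euc 1),
    fun w ↦ norm_nonneg (horizontalVerticalEquiv w),
    (hprod.comp_continuousLinearMap
      (horizontalVerticalEquiv : Euc 3 →L[ℝ] Euc 2 × Euc 1)).isCylinderLike⟩
end
end

section
/- The double cone norm on ℝ³, defined by ‖(x, y, z)‖ = √(x² + y²) + |z|, is NOT a cylinder-like convex function. In particular, for x̄ = (2/3, 0, 1/3) and ȳ = (1/3, 0, 2/3), one has x̄ ≠ ȳ and ‖x̄‖ = ‖ȳ‖, but there are no ε > 0 and δ > 0 such that ‖x − ε(x̄ − ȳ)‖ ≤ ‖x‖ for all x ∈ B_δ(x̄) and ‖y + ε(x̄ − ȳ)‖ ≤ ‖y‖ for all y ∈ B_δ(ȳ). -/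
open MeasureTheory Metric Set
open scoped ENNReal

noncomputable section

/-- The double cone norm on `ℝ³`: `‖(x, y, z)‖ = √(x² + y²) + |z|`. -/
noncomputable def doubleConeNorm (w : Euc 3) : ℝ :=
  Real.sqrt (w 0 ^ 2 + w 1 ^ 2) + |w 2|

/-!
The double cone norm is the `ℓ¹` sum of the Euclidean norm of a plane and the absolute value on an
axis. Since `x̄` and `ȳ` lie on a common generator of the unit double cone, translating a point by a
positive multiple of `ȳ - x̄` raises the height by exactly the length of the planar part of the
translation, while the planar norm drops by at most that length. By strict convexity of the plane
the drop is strictly smaller unless the planar part of the point lies on the ray spanned by the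
planar part of `x̄ - ȳ`, and there are points off that ray arbitrarily close to `x̄`.
-/

open scoped Topology

theorem dense_setOf_not_sameRay {E : Type*} [AddCommGroup E] [Module ℝ E] [TopologicalSpace E]
    [ContinuousAdd E] [ContinuousSMul ℝ E] (hE : 1 < Module.rank ℝ E) {u : E} (hu : u ≠ 0) :
    Dense {x : E | ¬SameRay ℝ x u} := by
  have span_ne_top : Submodule.span ℝ {u} ≠ ⊤ := fun h ↦ by
    have hle : Module.rank ℝ (Submodule.span ℝ {u}) ≤ 1 := by
      simpa using rank_span_le (R := ℝ) ({u} : Set E)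
    rw [h, rank_top] at hle
    exact hE.not_ge hle
  have dense_compl_span : Dense ((Submodule.span ℝ {u} : Set E)ᶜ) := by
    rw [← interior_eq_empty_iff_dense_compl, ← not_nonempty_iff_eq_empty]
    exact fun h ↦ span_ne_top (Submodule.eq_top_of_nonempty_interior' _ h)
  refine dense_compl_span.mono fun x (hx : x ∉ Submodule.span ℝ {u}) hray ↦ hx ?_
  obtain ⟨r, -, rfl⟩ := hray.exists_nonneg_right hu
  exact Submodule.mem_span_singleton.2 ⟨r, rfl⟩

section L1Sum

variable {E F : Type*} [NormedAddCommGroup E] [NormedSpace ℝ E] [StrictConvexSpace ℝ E]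
  [SeminormedAddCommGroup F] [NormedSpace ℝ F]

theorem norm_lt_norm_sub_of_not_sameRay_fst {x v : WithLp 1 (E × F)}
    (hfst : ¬SameRay ℝ x.fst v.fst) (hsnd : SameRay ℝ x.snd (-v.snd))
    (hle : ‖v.fst‖ ≤ ‖v.snd‖) : ‖x‖ < ‖x - v‖ := by
  have norm_fst : ‖x.fst‖ - ‖v.fst‖ < ‖x.fst - v.fst‖ := lt_norm_sub_of_not_sameRay hfst
  have norm_snd : ‖x.snd - v.snd‖ = ‖x.snd‖ + ‖v.snd‖ := by
    rw [sub_eq_add_neg, hsnd.norm_add, norm_neg]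
  simp only [WithLp.prod_norm_eq_of_L1, WithLp.sub_fst, WithLp.sub_snd]
  linarith

theorem frequently_norm_lt_norm_sub (hE : 1 < Module.rank ℝ E) {x v : WithLp 1 (E × F)}
    (hfst : v.fst ≠ 0) (hsnd : SameRay ℝ x.snd (-v.snd)) (hle : ‖v.fst‖ ≤ ‖v.snd‖) :
    ∃ᶠ y in 𝓝 x, ‖y‖ < ‖y - v‖ := by
  have frequently_fst : ∃ᶠ p in 𝓝 x.fst, ¬SameRay ℝ p v.fst :=
    mem_closure_iff_frequently.1 (dense_setOf_not_sameRay hE hfst x.fst)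
  have tendsto_slice : Filter.Tendsto (fun p ↦ WithLp.toLp 1 (p, x.snd)) (𝓝 x.fst) (𝓝 x) :=
    Continuous.tendsto (by fun_prop) x.fst
  exact tendsto_slice.frequently <| frequently_fst.mono fun p hp ↦
    norm_lt_norm_sub_of_not_sameRay_fst hp hsnd hle

end L1Sum

/-- The decomposition of `ℝ³` into the plane of the first two coordinates and the third axis. The
target carries the `ℓ¹` sum norm, whose pullback to `ℝ³` is the double cone norm. -/
def planeAxisEquiv : Euc 3 ≃L[ℝ] WithLp 1 (Euc 2 × ℝ) where
  toFun w := WithLp.toLp 1 (!₂[w 0, w 1], w 2)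
  invFun q := !₂[q.fst 0, q.fst 1, q.snd]
  map_add' v w := by
    refine WithLp.ofLp_injective 1 (Prod.ext ?_ rfl)
    ext i
    fin_cases i <;> rfl
  map_smul' c w := by
    refine WithLp.ofLp_injective 1 (Prod.ext ?_ rfl)
    ext i
    fin_cases i <;> rfl
  left_inv w := by
    ext i
    fin_cases i <;> rfl
  right_inv q := by
    refine WithLp.ofLp_injective 1 (Prod.ext ?_ rfl)
    ext i
    fin_cases i <;> rfl
  continuous_toFun := by fun_prop
  continuous_invFun := by fun_prop

theorem planeAxisEquiv_apply (w : Euc 3) :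
    planeAxisEquiv w = WithLp.toLp 1 (!₂[w 0, w 1], w 2) := rfl

theorem norm_planeAxisEquiv (w : Euc 3) : ‖planeAxisEquiv w‖ = doubleConeNorm w := by
  simp [planeAxisEquiv_apply, doubleConeNorm, WithLp.prod_norm_eq_of_L1, EuclideanSpace.norm_eq]

theorem doubleConeNorm_of_apply_one_eq_zero {w : Euc 3} (hw : w 1 = 0) :
    doubleConeNorm w = |w 0| + |w 2| := by
  simp [doubleConeNorm, hw, Real.sqrt_sq_eq_abs]

theorem frequently_doubleConeNorm_lt_sub {x v : Euc 3} (hplane : v 0 ≠ 0 ∨ v 1 ≠ 0)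
    (haxis : x 2 * v 2 ≤ 0) (hsteep : v 0 ^ 2 + v 1 ^ 2 ≤ v 2 ^ 2) :
    ∃ᶠ y in 𝓝 x, doubleConeNorm y < doubleConeNorm (y - v) := by
  have hrank : 1 < Module.rank ℝ (Euc 2) := by
    rw [← Module.finrank_eq_rank, finrank_euclideanSpace_fin]
    norm_num
  have hfst : (planeAxisEquiv v).fst ≠ 0 := fun h ↦ by
    have coord (i : Fin 2) : (planeAxisEquiv v).fst i = 0 := by rw [h, PiLp.zero_apply]
    exact hplane.elim (· (coord 0)) (· (coord 1))
  have hsnd : SameRay ℝ (x 2) (-v 2) := by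
    simpa using sameRay_smul_smul_of_mul_nonneg (v := (1 : ℝ)) (c₁ := x 2) (c₂ := -v 2)
      (by linarith)
  have hle : ‖(planeAxisEquiv v).fst‖ ≤ |v 2| := by
    simpa [planeAxisEquiv_apply, EuclideanSpace.norm_eq, Real.sqrt_sq_eq_abs] using
      Real.sqrt_le_sqrt hsteep
  have hfreq : ∃ᶠ q in 𝓝 (planeAxisEquiv x), ‖q‖ < ‖q - planeAxisEquiv v‖ :=
    frequently_norm_lt_norm_sub hrank hfst hsnd hle
  rw [← planeAxisEquiv.map_nhds_eq, Filter.frequently_map] at hfreq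
  simpa only [← map_sub, norm_planeAxisEquiv] using hfreq

theorem not_exists_forall_ball_doubleConeNorm_sub_smul_le {x v : Euc 3}
    (hplane : v 0 ≠ 0 ∨ v 1 ≠ 0) (haxis : x 2 * v 2 ≤ 0)
    (hsteep : v 0 ^ 2 + v 1 ^ 2 ≤ v 2 ^ 2) :
    ¬∃ ε > (0 : ℝ), ∃ δ > (0 : ℝ),
      ∀ y ∈ ball x δ, doubleConeNorm (y - ε • v) ≤ doubleConeNorm y := by
  rintro ⟨ε, hε, δ, hδ, hball⟩
  have hfreq : ∃ᶠ y in 𝓝 x, doubleConeNorm y < doubleConeNorm (y - ε • v) := by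
    apply frequently_doubleConeNorm_lt_sub <;> simp only [PiLp.smul_apply, smul_eq_mul]
    · simpa [hε.ne'] using hplane
    · linarith [mul_nonpos_of_nonneg_of_nonpos hε.le haxis]
    · linarith [mul_le_mul_of_nonneg_left hsteep (sq_nonneg ε)]
  obtain ⟨y, hlt, hy⟩ := (hfreq.and_eventually (ball_mem_nhds x hδ)).exists
  exact hlt.not_ge (hball y hy)

theorem doubleConeNorm_not_cylinderLike :
    ¬ IsCylinderLike doubleConeNorm ∧
    ∀ xb yb : Euc 3,
      (∀ i, xb i = ![2/3, 0, 1/3] i) → (∀ i, yb i = ![1/3, 0, 2/3] i) →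
      xb ≠ yb ∧ doubleConeNorm xb = doubleConeNorm yb ∧
        ¬ ∃ ε > (0 : ℝ), ∃ δ > (0 : ℝ),
            (∀ x ∈ Metric.ball xb δ, doubleConeNorm (x - ε • (xb - yb)) ≤ doubleConeNorm x) ∧
            (∀ y ∈ Metric.ball yb δ, doubleConeNorm (y + ε • (xb - yb)) ≤ doubleConeNorm y) := by
  rw [and_iff_right_of_imp]
  · intro xb yb hx hy
    obtain rfl : xb = !₂[2/3, 0, 1/3] := PiLp.ext hx
    obtain rfl : yb = !₂[1/3, 0, 2/3] := PiLp.ext hy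
    refine ⟨fun h ↦ ?_, ?_, ?_⟩
    · have : (2/3 : ℝ) = 1/3 := congrArg (fun w : Euc 3 ↦ w 0) h
      norm_num at this
    · rw [doubleConeNorm_of_apply_one_eq_zero rfl, doubleConeNorm_of_apply_one_eq_zero rfl]
      simp [add_comm]
    · rintro ⟨ε, hε, δ, hδ, hball, -⟩
      refine not_exists_forall_ball_doubleConeNorm_sub_smul_le ?_ ?_ ?_ ⟨ε, hε, δ, hδ, hball⟩ <;>
        simp <;> norm_num
  · intro h hcyl
    obtain ⟨hne, heq, hnot⟩ := h !₂[2/3, 0, 1/3] !₂[1/3, 0, 2/3] (fun _ ↦ rfl) (fun _ ↦ rfl)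
    exact hnot (hcyl _ _ hne heq)
end
end

section
/- Let g : ℝ^N → [0,∞) be a convex function and suppose that for every x̄, ȳ ∈ ℝ^N with x̄ ≠ ȳ, g(x̄) = g(ȳ) and g(t·x̄ + (1−t)·ȳ) = t·g(x̄) + (1−t)·g(ȳ) for all t ∈ (0,1), there exist ε > 0 and δ > 0 satisfying g(x − ε(x̄ − ȳ)) ≤ g(x) for all x ∈ B_δ(x̄) and g(y + ε(x̄ − ȳ)) ≤ g(y) for all y ∈ B_δ(ȳ). Then g is cylinder-like, i.e. the same conclusion holds for every pair x̄ ≠ ȳ with g(x̄) = g(ȳ). -/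
open MeasureTheory Metric Set
open scoped ENNReal

noncomputable section

/-!
At a flat pair there is nothing to prove. At any other pair with `g x̄ = g ȳ`, convexity makes `g`
strictly smaller at some point `t x̄ + (1 - t) ȳ` of the open segment. By continuity the strict
decrease along the fixed displacement from `x̄` to that point persists at every starting point near
`x̄`, and convexity turns it into a weak decrease along each shorter displacement in the same
direction. The same holds from `ȳ`, so `ε = min (1 - t) t` serves both points.
-/

open scoped Topology

section ConvexDescent

variable {𝕜 E β : Type*} [Field 𝕜] [LinearOrder 𝕜] [IsStrictOrderedRing 𝕜]
  [AddCommGroup E] [Module 𝕜 E]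

theorem exists_combo_lt_of_not_flat [AddCommMonoid β] [PartialOrder β] [Module 𝕜 β]
    {S : Set E} {g : E → β} {x y : E} (hg : ConvexOn 𝕜 S g) (hx : x ∈ S) (hy : y ∈ S)
    (hxy : g x = g y)
    (hflat : ¬ ∀ t ∈ Ioo (0 : 𝕜) 1, g (t • x + (1 - t) • y) = t • g x + (1 - t) • g y) :
    ∃ t ∈ Ioo (0 : 𝕜) 1, g (t • x + (1 - t) • y) < g x := by
  push Not at hflat
  obtain ⟨t, ht, hne⟩ := hflat
  have hsum : t + (1 - t) = 1 := add_sub_cancel t 1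
  refine ⟨t, ht, ?_⟩
  calc
    g (t • x + (1 - t) • y) < t • g x + (1 - t) • g y :=
      (hg.2 hx hy ht.1.le (sub_nonneg.2 ht.2.le) hsum).lt_of_ne hne
    _ = g x := by rw [← hxy, Convex.combo_self hsum]

variable [AddCommMonoid β] [LinearOrder β] [IsOrderedAddMonoid β] [Module 𝕜 β]
  [PosSMulStrictMono 𝕜 β] {g : E → β}

theorem apply_add_smul_le_of_apply_add_smul_le {S : Set E} {x v : E} {s ε : 𝕜}
    (hg : ConvexOn 𝕜 S g) (hx : x ∈ S) (hxv : x + s • v ∈ S) (hle : g (x + s • v) ≤ g x)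
    (hε : ε ∈ Icc 0 s) : g (x + ε • v) ≤ g x := by
  have hmem : x + ε • v ∈ segment 𝕜 x (x + s • v) := by
    rcases hε.1.eq_or_lt with rfl | hpos
    · simpa using left_mem_segment 𝕜 x (x + s • v)
    · have hs : 0 < s := hpos.trans_le hε.2
      rw [segment_eq_image']
      refine ⟨ε / s, ⟨div_nonneg hε.1 hs.le, (div_le_one hs).2 hε.2⟩, ?_⟩
      simp only [add_sub_cancel_left, smul_smul, div_mul_cancel₀ ε hs.ne']
  exact (hg.le_on_segment hx hxv hmem).trans (max_le le_rfl hle)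

variable [TopologicalSpace E] [ContinuousAdd E] [TopologicalSpace β] [OrderClosedTopology β]

theorem eventually_apply_add_smul_le_of_lt {p v : E} {s ε : 𝕜} (hg : ConvexOn 𝕜 univ g)
    (hcont : Continuous g) (hlt : g (p + s • v) < g p) (hε : ε ∈ Icc 0 s) :
    ∀ᶠ x in 𝓝 p, g (x + ε • v) ≤ g x := by
  have hshift : Continuous fun x ↦ g (x + s • v) := hcont.comp (continuous_add_const (s • v))
  filter_upwards [hshift.continuousAt.eventually_lt hcont.continuousAt hlt] with x hx
  exact apply_add_smul_le_of_apply_add_smul_le hg (mem_univ _) (mem_univ _) hx.le hε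

theorem exists_eventually_shift_le_of_combo_lt {x y : E} {t : 𝕜} (hg : ConvexOn 𝕜 univ g)
    (hcont : Continuous g) (ht : t ∈ Ioo 0 1) (hx : g (t • x + (1 - t) • y) < g x)
    (hy : g (t • x + (1 - t) • y) < g y) :
    ∃ ε > (0 : 𝕜), (∀ᶠ z in 𝓝 x, g (z - ε • (x - y)) ≤ g z) ∧
      ∀ᶠ z in 𝓝 y, g (z + ε • (x - y)) ≤ g z := by
  have hε : 0 < min (1 - t) t := lt_min (sub_pos.2 ht.2) ht.1
  have hfrom_x : t • x + (1 - t) • y = x + (1 - t) • -(x - y) := by module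
  have hfrom_y : t • x + (1 - t) • y = y + t • (x - y) := by module
  rw [hfrom_x] at hx
  rw [hfrom_y] at hy
  refine ⟨min (1 - t) t, hε, ?_, ?_⟩
  · simpa only [smul_neg, ← sub_eq_add_neg] using
      eventually_apply_add_smul_le_of_lt hg hcont hx ⟨hε.le, min_le_left _ _⟩
  · exact eventually_apply_add_smul_le_of_lt hg hcont hy ⟨hε.le, min_le_right _ _⟩

end ConvexDescent

theorem cylinderLike_of_flat_pairs_general {E : Type*} [SeminormedAddCommGroup E]
    [NormedSpace ℝ E] {g : E → ℝ} (hconv : ConvexOn ℝ univ g) (hcont : Continuous g)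
    (hyp : ∀ x y : E, x ≠ y → g x = g y →
      (∀ t ∈ Ioo (0 : ℝ) 1, g (t • x + (1 - t) • y) = t * g x + (1 - t) * g y) →
      ∃ ε > (0 : ℝ), ∃ δ > (0 : ℝ),
        (∀ z ∈ ball x δ, g (z - ε • (x - y)) ≤ g z) ∧
        (∀ z ∈ ball y δ, g (z + ε • (x - y)) ≤ g z))
    (x y : E) (hne : x ≠ y) (hxy : g x = g y) :
    ∃ ε > (0 : ℝ), ∃ δ > (0 : ℝ),
      (∀ z ∈ ball x δ, g (z - ε • (x - y)) ≤ g z) ∧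
      (∀ z ∈ ball y δ, g (z + ε • (x - y)) ≤ g z) := by
  by_cases hflat : ∀ t ∈ Ioo (0 : ℝ) 1, g (t • x + (1 - t) • y) = t * g x + (1 - t) * g y
  · exact hyp x y hne hxy hflat
  obtain ⟨t, ht, hlt⟩ := exists_combo_lt_of_not_flat hconv (mem_univ x) (mem_univ y) hxy hflat
  obtain ⟨ε, hε, hx, hy⟩ :=
    exists_eventually_shift_le_of_combo_lt hconv hcont ht hlt (hlt.trans_eq hxy)
  obtain ⟨δx, hδx, hballx⟩ := eventually_nhds_iff_ball.1 hx
  obtain ⟨δy, hδy, hbally⟩ := eventually_nhds_iff_ball.1 hy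
  exact ⟨ε, hε, min δx δy, lt_min hδx hδy,
    fun z hz ↦ hballx z (ball_subset_ball (min_le_left _ _) hz),
    fun z hz ↦ hbally z (ball_subset_ball (min_le_right _ _) hz)⟩

theorem cylinderLike_of_flat_pairs {N : ℕ} (g : Euc N → ℝ)
    (hconv : ConvexOn ℝ Set.univ g) (hnonneg : ∀ x, 0 ≤ g x)
    (hyp : ∀ xb yb : Euc N, xb ≠ yb → g xb = g yb →
      (∀ t ∈ Set.Ioo (0 : ℝ) 1,
        g (t • xb + (1 - t) • yb) = t * g xb + (1 - t) * g yb) →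
      ∃ ε > (0 : ℝ), ∃ δ > (0 : ℝ),
        (∀ x ∈ Metric.ball xb δ, g (x - ε • (xb - yb)) ≤ g x) ∧
        (∀ y ∈ Metric.ball yb δ, g (y + ε • (xb - yb)) ≤ g y)) :
    IsCylinderLike g :=
  cylinderLike_of_flat_pairs_general hconv
    (continuousOn_univ.1 (hconv.continuousOn isOpen_univ)) hyp
end
end

section
/- Let c : ℝ^N × ℝ^N → [0,∞) be a continuous cost function, and let μ, ν be Borel probability measures on ℝ^N with compact support and finite minimal transport cost for c. Let Π₁(μ,ν) denote the set of optimal transport plans for c, and let Π₂(μ,ν) ⊆ Π₁(μ,ν) denote the set of minimizers of π ↦ ∫ d_eu²(x,y) dπ(x,y) over Π₁(μ,ν), where d_eu is the Euclidean distance. Then every π ∈ Π₂(μ,ν) is concentrated on a set Γ ⊆ ℝ^N × ℝ^N with the property that for every (x,y), (x′,y′) ∈ Γ: (a) c(x,y) + c(x′,y′) ≤ c(x,y′) + c(x′,y), and (b) if c(x,y) + c(x′,y′) = c(x,y′) + c(x′,y), then d_eu²(x,y) + d_eu²(x′,y′) ≤ d_eu²(x,y′) + d_eu²(x′,y). -/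
open MeasureTheory Metric Set
open scoped ENNReal

noncomputable section

/-! For compactly supported marginals and every `k`, Hahn-Banach separation and the Riesz
representation theorem give a weight `l ≥ k` and continuous potentials `f`, `g` for which the slack
`l c + d - f ⊕ g` is nonnegative everywhere while its integral against the lexicographically
optimal plan `π` is a prescribed `ε > 0`. Otherwise some probability measure `γ` would have slack
integral at most `0` for all `l`, `f`, `g` for which that of `π` is `ε`. This contradicts the
optimality of `π` if `γ` has the marginals of `π`, and is impossible if it has not, since `f` and
`g` are free.

Along a sequence with `k → ∞` the slack tends to zero `π`-almost everywhere. The potentials cancel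
along a cycle of points where it does, so the changes `Δc` and `Δd` of the total costs satisfy
`l Δc + Δd ≥ -o(1)` with `l → ∞`. Hence `Δc ≥ 0`, and `Δd ≥ 0` if `Δc = 0`. Exchanging two points
is the case of a cycle of length two.
-/

open Filter Topology TopologicalSpace CompactlySupported

section PositiveFunctionals

lemma map_nonpos_of_forall_nonneg_le {E : Type*} [AddCommGroup E] [PartialOrder E] [Module ℝ E]
    [PosSMulMono ℝ E] {f : E →ₗ[ℝ] ℝ} {u : ℝ} (hf : ∀ h, 0 ≤ h → f h ≤ u) {h : E}
    (hh : 0 ≤ h) : f h ≤ 0 := by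
  by_contra! hpos
  obtain ⟨t, ht⟩ := exists_nat_gt (u / f h)
  have hle : t * f h ≤ u := by
    simpa using hf ((t : ℝ) • h) (smul_nonneg t.cast_nonneg hh)
  exact absurd hle (not_le.2 ((div_lt_iff₀ hpos).1 ht))

variable {X : Type*} [TopologicalSpace X]

lemma convex_setOf_forall_pos : Convex ℝ {h : C(X, ℝ) | ∀ x, 0 < h x} := by
  rw [ofPred_forall]
  exact convex_iInter fun x ↦
    (convex_Ioi (0 : ℝ)).linear_preimage (ContinuousMap.evalCLM ℝ x).toLinearMap

variable [CompactSpace X]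

lemma isOpen_setOf_forall_pos : IsOpen {h : C(X, ℝ) | ∀ x, 0 < h x} := by
  simpa only [range_subset_iff, mem_Ioi] using
    ContinuousMap.isOpen_setOfPred_range_subset (X := X) (isOpen_Ioi (a := (0 : ℝ)))

lemma map_le_of_forall_pos_lt {f : StrongDual ℝ C(X, ℝ)} {u : ℝ}
    (hf : ∀ h : C(X, ℝ), (∀ x, 0 < h x) → f h < u) {h : C(X, ℝ)} (hh : 0 ≤ h) : f h ≤ u := by
  have hlim : Tendsto (fun t : ℝ ↦ f (h + t • 1)) (𝓝[>] 0) (𝓝 (f h)) := by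
    have hcont : Continuous fun t : ℝ ↦ f (h + t • 1) := by fun_prop
    simpa using (hcont.tendsto 0).mono_left nhdsWithin_le_nhds
  refine le_of_tendsto hlim ?_
  filter_upwards [self_mem_nhdsWithin] with t ht
  refine (hf _ fun x ↦ ?_).le
  simpa using add_pos_of_nonneg_of_pos (hh x) ht

lemma exists_nonneg_functional_nonpos_of_convex {A : Set C(X, ℝ)} (hA : Convex ℝ A)
    (hne : A.Nonempty) (hpos : ∀ a ∈ A, ¬ ∀ x, 0 < a x) :
    ∃ Λ : C(X, ℝ) →ₗ[ℝ] ℝ, (∀ h, 0 ≤ h → 0 ≤ Λ h) ∧ Λ 1 = 1 ∧ ∀ a ∈ A, Λ a ≤ 0 := by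
  obtain ⟨f, u, hfpos, hfA⟩ := geometric_hahn_banach_open convex_setOf_forall_pos
    isOpen_setOf_forall_pos hA (disjoint_right.2 hpos)
  have hfu : ∀ h : C(X, ℝ), 0 ≤ h → f h ≤ u := fun h ↦ map_le_of_forall_pos_lt hfpos
  have hf0 : ∀ h : C(X, ℝ), 0 ≤ h → f h ≤ 0 := fun h ↦
    map_nonpos_of_forall_nonneg_le (f := f.toLinearMap) hfu
  have hu : 0 ≤ u := by simpa using hfu 0 le_rfl
  have hf1 : f 1 < 0 := by
    refine (hf0 1 zero_le_one).lt_of_ne fun h1 ↦ ?_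
    obtain ⟨a, ha⟩ := hne
    have hfa : f a ≤ 0 := by
      have hadd : (0 : C(X, ℝ)) ≤ a + ‖a‖ • 1 := fun x ↦ by
        simpa using neg_le_iff_add_nonneg.1 (neg_le_of_abs_le (a.norm_coe_le_norm x))
      simpa [h1] using hf0 _ hadd
    have hu' : f 1 < u := hfpos 1 fun _ ↦ one_pos
    linarith [hfA a ha]
  refine ⟨(f 1)⁻¹ • f.toLinearMap, fun h hh ↦ ?_, inv_mul_cancel₀ hf1.ne, fun a ha ↦ ?_⟩
  · exact mul_nonneg_of_nonpos_of_nonpos (inv_nonpos.2 hf1.le) (hf0 h hh)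
  · exact mul_nonpos_of_nonpos_of_nonneg (inv_nonpos.2 hf1.le) (hu.trans (hfA a ha))

variable [MeasurableSpace X] [BorelSpace X]

lemma integrable_continuousMap (γ : Measure X) [IsFiniteMeasure γ] (h : C(X, ℝ)) :
    Integrable h γ :=
  h.continuous.integrable_of_hasCompactSupport (.of_compactSpace _)

lemma isLinearMap_integral_continuousMap (γ : Measure X) [IsFiniteMeasure γ] :
    IsLinearMap ℝ fun h : C(X, ℝ) ↦ ∫ x, h x ∂γ where
  map_add g h := integral_add (integrable_continuousMap γ g) (integrable_continuousMap γ h)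
  map_smul r h := integral_const_mul r h

variable [T2Space X]

lemma exists_isProbabilityMeasure_integral_eq (Λ : C(X, ℝ) →ₗ[ℝ] ℝ)
    (hΛ : ∀ h, 0 ≤ h → 0 ≤ Λ h) (hΛ1 : Λ 1 = 1) :
    ∃ γ : Measure X, IsProbabilityMeasure γ ∧ ∀ h : C(X, ℝ), ∫ x, h x ∂γ = Λ h := by
  let Φ : C_c(X, ℝ) →ₚ[ℝ] ℝ := .mk₀
    { toFun h := Λ h.toContinuousMap
      map_add' g h := Λ.map_add g.toContinuousMap h.toContinuousMap
      map_smul' r h := Λ.map_smul r h.toContinuousMap } fun h ↦ hΛ h.toContinuousMap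
  have hint (h : C(X, ℝ)) : ∫ x, h x ∂(RealRMK.rieszMeasure Φ) = Λ h :=
    RealRMK.integral_rieszMeasure Φ (CompactlySupportedContinuousMap.continuousMapEquiv h)
  refine ⟨RealRMK.rieszMeasure Φ, ⟨?_⟩, hint⟩
  have hmass := (hint 1).trans hΛ1
  simpa [measureReal_def, ENNReal.toReal_eq_one_iff] using hmass

lemma exists_forall_pos_of_convex {A : Set C(X, ℝ)} (hA : Convex ℝ A) (hne : A.Nonempty)
    (h : ∀ γ : Measure X, IsProbabilityMeasure γ → ∃ a ∈ A, 0 < ∫ x, a x ∂γ) :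
    ∃ a ∈ A, ∀ x, 0 < a x := by
  by_contra! hcon
  obtain ⟨Λ, hΛ, hΛ1, hΛA⟩ := exists_nonneg_functional_nonpos_of_convex hA hne
    fun a ha ↦ by simpa using hcon a ha
  obtain ⟨γ, hγ, hint⟩ := exists_isProbabilityMeasure_integral_eq Λ hΛ hΛ1
  obtain ⟨a, ha, hpos⟩ := h γ hγ
  exact absurd (hΛA a ha) (not_le.2 (hint a ▸ hpos))

end PositiveFunctionals

section Lexicographic

variable {a b : ℝ × ℝ}

lemma exists_ge_mul_add_le_mul_add (h : toLex a ≤ toLex b) (k : ℝ) :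
    ∃ l ≥ k, l * a.1 + a.2 ≤ l * b.1 + b.2 := by
  obtain ⟨h₁, h₂⟩ := Prod.Lex.toLex_le_toLex'.1 h
  obtain heq | hlt := h₁.eq_or_lt
  · exact ⟨k, le_rfl, by rw [heq]; gcongr; exact h₂ heq⟩
  · refine ⟨max k ((a.2 - b.2) / (b.1 - a.1)), le_max_left _ _, ?_⟩
    have hmul := (div_le_iff₀ (sub_pos.2 hlt)).1 (le_max_right k ((a.2 - b.2) / (b.1 - a.1)))
    linarith

lemma toLex_le_toLex_of_tendsto {ι : Type*} {p : Filter ι} [p.NeBot] {l s : ι → ℝ}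
    (hl : Tendsto l p atTop) (hs : Tendsto s p (𝓝 0))
    (h : ∀ i, l i * a.1 + a.2 ≤ l i * b.1 + b.2 + s i) : toLex a ≤ toLex b := by
  rw [Prod.Lex.toLex_le_toLex']
  have hslack : ∀ i, a.2 - b.2 + l i * (a.1 - b.1) ≤ s i := fun i ↦ by linarith [h i]
  constructor
  · by_contra! hlt
    have htop : Tendsto s p atTop := tendsto_atTop_mono hslack <|
      tendsto_atTop_add_const_left _ _ (hl.atTop_mul_const (sub_pos.2 hlt))
    exact not_tendsto_nhds_of_tendsto_atTop htop 0 hs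
  · intro heq
    simp only [heq, sub_self, mul_zero, add_zero] at hslack
    exact sub_nonpos.1 (ge_of_tendsto' hs hslack)

end Lexicographic

lemma exists_seq_tendsto_ae_zero_of_tendsto_integral_norm {α E : Type*} [MeasurableSpace α]
    [NormedAddCommGroup E] {π : Measure α} {F : ℕ → α → E} (hF : ∀ n, Integrable (F n) π)
    (hlim : Tendsto (fun n ↦ ∫ x, ‖F n x‖ ∂π) atTop (𝓝 0)) :
    ∃ ns : ℕ → ℕ, StrictMono ns ∧
      ∀ᵐ x ∂π, Tendsto (fun k ↦ F (ns k) x) atTop (𝓝 0) := by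
  refine (tendstoInMeasure_of_tendsto_eLpNorm one_ne_zero (fun n ↦ (hF n).aestronglyMeasurable)
    aestronglyMeasurable_const ?_ : TendstoInMeasure π F atTop fun _ ↦ 0).exists_seq_tendsto_ae
  have hnorm (n : ℕ) : eLpNorm (F n - fun _ ↦ 0) 1 π = ENNReal.ofReal (∫ x, ‖F n x‖ ∂π) := by
    rw [ofReal_integral_norm_eq_lintegral_enorm (hF n), ← eLpNorm_one_eq_lintegral_enorm]
    congr 1
    exact sub_zero (F n)
  simpa only [hnorm, ENNReal.ofReal_zero] using ENNReal.tendsto_ofReal hlim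

lemma exists_integral_sub_integral_eq {X : Type*} [TopologicalSpace X] [HasOuterApproxClosed X]
    [MeasurableSpace X] [BorelSpace X] {P Q : Measure X} [IsFiniteMeasure P] [IsFiniteMeasure Q]
    (hPQ : P ≠ Q) (r : ℝ) : ∃ f : C(X, ℝ), ∫ x, f x ∂P - ∫ x, f x ∂Q = r := by
  obtain ⟨f, hf⟩ : ∃ f : BoundedContinuousFunction X ℝ, ∫ x, f x ∂P ≠ ∫ x, f x ∂Q := by
    by_contra! heq
    exact hPQ (ext_of_forall_integral_eq_of_IsFiniteMeasure heq)
  refine ⟨(r / (∫ x, f x ∂P - ∫ x, f x ∂Q)) • f.toContinuousMap, ?_⟩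
  simp only [ContinuousMap.smul_apply, BoundedContinuousFunction.coe_toContinuousMap, smul_eq_mul,
    integral_const_mul, ← mul_sub]
  exact div_mul_cancel₀ r (sub_ne_zero.2 hf)

section LexOptimal

variable {X Y : Type*}

/-- `π` minimises `(∫ c, ∫ d)` lexicographically among the measures with the same marginals as `π`.
The integrals are Bochner integrals, so the notion is meant for costs that are integrable for all
these measures. -/
def IsLexOptimal [MeasurableSpace X] [MeasurableSpace Y] (c d : X × Y → ℝ)
    (π : Measure (X × Y)) : Prop :=
  ∀ γ : Measure (X × Y), γ.fst = π.fst → γ.snd = π.snd →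
    toLex (∫ p, c p ∂π, ∫ p, d p ∂π) ≤ toLex (∫ p, c p ∂γ, ∫ p, d p ∂γ)

/-- Cyclical monotonicity of `Γ` for the costs `c` and `d` compared lexicographically: permuting
the second coordinates of finitely many points of `Γ` does not lower the pair of total costs. -/
def IsLexCyclicallyMonotone (c d : X × Y → ℝ) (Γ : Set (X × Y)) : Prop :=
  ∀ (n : ℕ) (z : Fin n → X × Y) (σ : Equiv.Perm (Fin n)), (∀ i, z i ∈ Γ) →
    toLex (∑ i, c (z i), ∑ i, d (z i)) ≤
      toLex (∑ i, c ((z i).1, (z (σ i)).2), ∑ i, d ((z i).1, (z (σ i)).2))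

lemma IsLexOptimal.of_map_prodMap [MeasurableSpace X] [MeasurableSpace Y] {X' Y' : Type*}
    [MeasurableSpace X'] [MeasurableSpace Y'] {c d : X × Y → ℝ} {i : X' → X} {j : Y' → Y}
    {π : Measure (X' × Y')} (hi : MeasurableEmbedding i) (hj : MeasurableEmbedding j)
    (h : IsLexOptimal c d (π.map (Prod.map i j))) :
    IsLexOptimal (c ∘ Prod.map i j) (d ∘ Prod.map i j) π := by
  have hij : MeasurableEmbedding (Prod.map i j) := hi.prodMap hj
  have hfst (γ : Measure (X' × Y')) : (γ.map (Prod.map i j)).fst = γ.fst.map i := by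
    rw [Measure.fst, Measure.fst, Measure.map_map measurable_fst hij.measurable,
      Measure.map_map hi.measurable measurable_fst, Prod.map_fst']
  have hsnd (γ : Measure (X' × Y')) : (γ.map (Prod.map i j)).snd = γ.snd.map j := by
    rw [Measure.snd, Measure.snd, Measure.map_map measurable_snd hij.measurable,
      Measure.map_map hj.measurable measurable_snd, Prod.map_snd']
  intro γ hγ₁ hγ₂
  have hle := h (γ.map (Prod.map i j)) (by rw [hfst, hfst, hγ₁]) (by rw [hsnd, hsnd, hγ₂])
  simpa only [hij.integral_map, Function.comp_apply] using hle

lemma IsLexCyclicallyMonotone.image {X' Y' : Type*} {c d : X × Y → ℝ} {i : X' → X} {j : Y' → Y}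
    {Γ : Set (X' × Y')}
    (h : IsLexCyclicallyMonotone (c ∘ Prod.map i j) (d ∘ Prod.map i j) Γ) :
    IsLexCyclicallyMonotone c d (Prod.map i j '' Γ) := by
  intro n z σ hz
  choose w hw hwz using hz
  obtain rfl : (fun k ↦ Prod.map i j (w k)) = z := funext hwz
  exact h n w σ hw

lemma IsLexCyclicallyMonotone.swap_le {c d : X × Y → ℝ} {Γ : Set (X × Y)}
    (h : IsLexCyclicallyMonotone c d Γ) {x x' : X} {y y' : Y} (hxy : (x, y) ∈ Γ)
    (hxy' : (x', y') ∈ Γ) :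
    c (x, y) + c (x', y') ≤ c (x, y') + c (x', y) ∧
      (c (x, y) + c (x', y') = c (x, y') + c (x', y) →
        d (x, y) + d (x', y') ≤ d (x, y') + d (x', y)) := by
  simpa [Prod.Lex.toLex_le_toLex', Fin.sum_univ_two] using
    h 2 ![(x, y), (x', y')] (Equiv.swap 0 1) (Fin.forall_fin_two.2 ⟨hxy, hxy'⟩)

end LexOptimal

section DualSlack

variable {X Y : Type*} [TopologicalSpace X] [TopologicalSpace Y]

/-- The slack `l c + d - f ⊕ g` of the potentials `f` and `g` in the dual constraint of the
transport problem with the penalised cost `l c + d`. -/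
def dualSlack (c d : C(X × Y, ℝ)) (l : ℝ) (f : C(X, ℝ)) (g : C(Y, ℝ)) : C(X × Y, ℝ) :=
  l • c + d - f.comp .fst - g.comp .snd

variable {c d : C(X × Y, ℝ)}

lemma dualSlack_apply (l : ℝ) (f : C(X, ℝ)) (g : C(Y, ℝ)) (p : X × Y) :
    dualSlack c d l f g p = l * c p + d p - f p.1 - g p.2 :=
  rfl

lemma convex_setOf_dualSlack (k : ℝ) :
    Convex ℝ {h | ∃ l ≥ k, ∃ f g, dualSlack c d l f g = h} := by
  rintro _ ⟨l, hl, f, g, rfl⟩ _ ⟨l', hl', f', g', rfl⟩ s t hs ht hst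
  refine ⟨s * l + t * l', convex_Ici k hl hl' hs ht hst, s • f + t • f', s • g + t • g', ?_⟩
  ext p
  obtain rfl : t = 1 - s := by linarith
  simp only [dualSlack_apply, ContinuousMap.add_apply, ContinuousMap.smul_apply, smul_eq_mul]
  ring

lemma sum_dualSlack_perm {ι : Type*} [Fintype ι] (l : ℝ) (f : C(X, ℝ)) (g : C(Y, ℝ))
    (z : ι → X × Y) (σ : Equiv.Perm ι) :
    l * ∑ i, c (z i) + ∑ i, d (z i) + ∑ i, dualSlack c d l f g ((z i).1, (z (σ i)).2) =
      l * ∑ i, c ((z i).1, (z (σ i)).2) + ∑ i, d ((z i).1, (z (σ i)).2) +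
        ∑ i, dualSlack c d l f g (z i) := by
  have hg : ∑ i, g (z (σ i)).2 = ∑ i, g (z i).2 := Equiv.sum_comp σ fun i ↦ g (z i).2
  simp only [dualSlack_apply, Finset.sum_sub_distrib, Finset.sum_add_distrib, Finset.mul_sum, hg]
  ring

lemma isLexCyclicallyMonotone_setOf_tendsto_dualSlack {l : ℕ → ℝ} {f : ℕ → C(X, ℝ)}
    {g : ℕ → C(Y, ℝ)} (hl : Tendsto l atTop atTop)
    (hnonneg : ∀ n, 0 ≤ dualSlack c d (l n) (f n) (g n)) :
    IsLexCyclicallyMonotone c d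
      {p | Tendsto (fun n ↦ dualSlack c d (l n) (f n) (g n) p) atTop (𝓝 0)} := by
  intro N z σ hz
  have hsum : Tendsto (fun n ↦ ∑ i, dualSlack c d (l n) (f n) (g n) (z i)) atTop (𝓝 0) := by
    simpa using tendsto_finsetSum Finset.univ fun i _ ↦ hz i
  refine toLex_le_toLex_of_tendsto hl hsum fun n ↦ ?_
  rw [← sum_dualSlack_perm (l n) (f n) (g n) z σ]
  exact le_add_of_nonneg_right (Finset.sum_nonneg fun i _ ↦ hnonneg n _)

variable [CompactSpace X] [CompactSpace Y] [MetrizableSpace Y]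
  [MeasurableSpace X] [BorelSpace X] [MeasurableSpace Y] [BorelSpace Y]

lemma integral_dualSlack (γ : Measure (X × Y)) [IsFiniteMeasure γ] (l : ℝ) (f : C(X, ℝ))
    (g : C(Y, ℝ)) :
    ∫ p, dualSlack c d l f g p ∂γ =
      l * ∫ p, c p ∂γ + ∫ p, d p ∂γ - ∫ x, f x ∂γ.fst - ∫ y, g y ∂γ.snd := by
  have hf : ∫ x, f x ∂γ.fst = ∫ p, f.comp .fst p ∂γ :=
    integral_map measurable_fst.aemeasurable f.continuous.aestronglyMeasurable
  have hg : ∫ y, g y ∂γ.snd = ∫ p, g.comp .snd p ∂γ :=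
    integral_map measurable_snd.aemeasurable g.continuous.aestronglyMeasurable
  let I := (isLinearMap_integral_continuousMap γ).mk'
  have hI : I (dualSlack c d l f g) = l * I c + I d - I (f.comp .fst) - I (g.comp .snd) := by
    simp only [dualSlack, map_sub, map_add, map_smul, smul_eq_mul]
  rw [hf, hg]
  exact hI

lemma exists_integral_dualSlack_eq (π : Measure (X × Y)) [IsProbabilityMeasure π] (l : ℝ)
    (f : C(X, ℝ)) (g : C(Y, ℝ)) (ε : ℝ) :
    ∃ f', ∫ p, dualSlack c d l f' g p ∂π = ε ∧ ∀ γ : Measure (X × Y), IsProbabilityMeasure γ →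
      ∫ p, dualSlack c d l f' g p ∂γ - ε =
        ∫ p, dualSlack c d l f g p ∂γ - ∫ p, dualSlack c d l f g p ∂π := by
  have hshift (r : ℝ) (γ : Measure (X × Y)) [IsProbabilityMeasure γ] :
      ∫ p, dualSlack c d l (f + .const X r) g p ∂γ = ∫ p, dualSlack c d l f g p ∂γ - r := by
    have hr : ∫ x, (f + .const X r) x ∂γ.fst = ∫ x, f x ∂γ.fst + r := by
      simpa using integral_add (integrable_continuousMap γ.fst f) (integrable_const r)
    rw [integral_dualSlack, integral_dualSlack, hr]
    ring
  refine ⟨f + .const X (∫ p, dualSlack c d l f g p ∂π - ε), ?_, fun γ hγ ↦ ?_⟩ <;>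
  · rw [hshift]
    ring

variable [MetrizableSpace X] {π : Measure (X × Y)}

lemma IsLexOptimal.exists_integral_dualSlack_le [IsFiniteMeasure π] (hπ : IsLexOptimal c d π)
    (γ : Measure (X × Y)) [IsFiniteMeasure γ] (k : ℝ) :
    ∃ l ≥ k, ∃ f g, ∫ p, dualSlack c d l f g p ∂π ≤ ∫ p, dualSlack c d l f g p ∂γ := by
  simp only [integral_dualSlack]
  set gap := k * ∫ p, c p ∂γ + ∫ p, d p ∂γ - (k * ∫ p, c p ∂π + ∫ p, d p ∂π)
  by_cases hfst : γ.fst = π.fst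
  · by_cases hsnd : γ.snd = π.snd
    · obtain ⟨l, hl, hle⟩ := exists_ge_mul_add_le_mul_add (hπ γ hfst hsnd) k
      exact ⟨l, hl, 0, 0, by simpa using hle⟩
    · obtain ⟨g, hg⟩ := exists_integral_sub_integral_eq hsnd gap
      exact ⟨k, le_rfl, 0, g, by simp only [ContinuousMap.zero_apply, integral_zero]; linarith⟩
  · obtain ⟨f, hf⟩ := exists_integral_sub_integral_eq hfst gap
    exact ⟨k, le_rfl, f, 0, by simp only [ContinuousMap.zero_apply, integral_zero]; linarith⟩

lemma IsLexOptimal.exists_dualSlack_nonneg [IsProbabilityMeasure π] (hπ : IsLexOptimal c d π)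
    (k : ℝ) {ε : ℝ} (hε : 0 < ε) :
    ∃ l ≥ k, ∃ f g, 0 ≤ dualSlack c d l f g ∧ ∫ p, dualSlack c d l f g p ∂π = ε := by
  let A : Set C(X × Y, ℝ) :=
    {h | ∃ l ≥ k, ∃ f g, dualSlack c d l f g = h} ∩ {h | ∫ p, h p ∂π = ε}
  have hA : Convex ℝ A :=
    (convex_setOf_dualSlack k).inter (convex_hyperplane (isLinearMap_integral_continuousMap π) ε)
  have hpos (γ : Measure (X × Y)) (hγ : IsProbabilityMeasure γ) :
      ∃ h ∈ A, 0 < ∫ p, h p ∂γ := by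
    obtain ⟨l, hl, f, g, hle⟩ := hπ.exists_integral_dualSlack_le γ k
    obtain ⟨f', hf', hshift⟩ := exists_integral_dualSlack_eq π l f g ε
    exact ⟨_, ⟨⟨l, hl, f', g, rfl⟩, hf'⟩, by linarith [hshift γ hγ]⟩
  obtain ⟨h, hhA, -⟩ := hpos π inferInstance
  obtain ⟨_, ⟨⟨l, hl, f, g, rfl⟩, hint⟩, hnonneg⟩ := exists_forall_pos_of_convex hA ⟨h, hhA⟩ hpos
  exact ⟨l, hl, f, g, fun p ↦ (hnonneg p).le, hint⟩

theorem IsLexOptimal.exists_isLexCyclicallyMonotone_of_compactSpace [IsProbabilityMeasure π]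
    (hπ : IsLexOptimal c d π) :
    ∃ Γ, (∀ᵐ p ∂π, p ∈ Γ) ∧ IsLexCyclicallyMonotone c d Γ := by
  choose l hl f g hnonneg hint using fun n : ℕ ↦
    hπ.exists_dualSlack_nonneg n (Nat.one_div_pos_of_nat (α := ℝ) (n := n))
  have hlim : Tendsto (fun n ↦ ∫ p, ‖dualSlack c d (l n) (f n) (g n) p‖ ∂π) atTop (𝓝 0) := by
    have hnorm (n : ℕ) (p : X × Y) : ‖dualSlack c d (l n) (f n) (g n) p‖ =
        dualSlack c d (l n) (f n) (g n) p := Real.norm_of_nonneg (hnonneg n p)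
    simpa only [hnorm, hint] using tendsto_one_div_add_atTop_nhds_zero_nat
  obtain ⟨ns, hns, hae⟩ := exists_seq_tendsto_ae_zero_of_tendsto_integral_norm
    (fun n ↦ integrable_continuousMap π _) hlim
  have hl_top : Tendsto l atTop atTop := tendsto_atTop_mono hl tendsto_natCast_atTop_atTop
  exact ⟨_, hae, isLexCyclicallyMonotone_setOf_tendsto_dualSlack
    (hl_top.comp hns.tendsto_atTop) fun k ↦ hnonneg (ns k)⟩

end DualSlack

theorem secondary_optimal_concentrated_on_doubly_monotone_general {X Y : Type*}
    [TopologicalSpace X] [MetrizableSpace X] [MeasurableSpace X] [BorelSpace X]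
    [TopologicalSpace Y] [MetrizableSpace Y] [MeasurableSpace Y] [BorelSpace Y]
    {K : Set X} {L : Set Y} (hK : IsCompact K) (hL : IsCompact L) {c d : X × Y → ℝ}
    (hc : ContinuousOn c (K ×ˢ L)) (hd : ContinuousOn d (K ×ˢ L)) {π : Measure (X × Y)}
    [IsProbabilityMeasure π] (hKL : ∀ᵐ p ∂π, p ∈ K ×ˢ L) (hπ : IsLexOptimal c d π) :
    ∃ Γ, (∀ᵐ p ∂π, p ∈ Γ) ∧ IsLexCyclicallyMonotone c d Γ := by
  have := isCompact_iff_compactSpace.1 hK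
  have := isCompact_iff_compactSpace.1 hL
  let e : K × L → X × Y := Prod.map (↑) (↑)
  have heK := MeasurableEmbedding.subtype_coe hK.measurableSet
  have heL := MeasurableEmbedding.subtype_coe hL.measurableSet
  have he : MeasurableEmbedding e := heK.prodMap heL
  have hrange : range e = K ×ˢ L := by
    rw [range_prodMap, Subtype.range_coe, Subtype.range_coe]
  have hmap : (π.comap e).map e = π := by
    rw [he.map_comap, hrange, Measure.restrict_eq_self_of_ae_mem hKL]
  have hprob : IsProbabilityMeasure (π.comap e) := by
    rw [← Measure.isProbabilityMeasure_map_iff he.measurable.aemeasurable, hmap]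
    infer_instance
  have hcont {h : X × Y → ℝ} (hh : ContinuousOn h (K ×ˢ L)) : Continuous (h ∘ e) :=
    hh.comp_continuous (by fun_prop) fun p ↦ ⟨p.1.2, p.2.2⟩
  obtain ⟨Γ, hΓ, hmono⟩ :=
    IsLexOptimal.exists_isLexCyclicallyMonotone_of_compactSpace (c := ⟨_, hcont hc⟩)
      (d := ⟨_, hcont hd⟩) (.of_map_prodMap heK heL (hmap.symm ▸ hπ))
  refine ⟨e '' Γ, ?_, hmono.image⟩
  rw [← hmap, he.ae_map_iff]
  filter_upwards [hΓ] with p hp using mem_image_of_mem e hp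

section Euclidean

variable {N : ℕ} {μ ν : Measure (Euc N)} {γ π : Measure (Euc N × Euc N)} {K L : Set (Euc N)}

lemma IsCoupling.ae_mem_prod (h : IsCoupling μ ν γ) (hμ : μ Kᶜ = 0) (hν : ν Lᶜ = 0) :
    ∀ᵐ p ∂γ, p ∈ K ×ˢ L := by
  obtain ⟨-, rfl, rfl⟩ := h
  have hfst : ∀ᵐ p ∂γ, p.1 ∈ K := ae_of_ae_map measurable_fst.aemeasurable hμ
  have hsnd : ∀ᵐ p ∂γ, p.2 ∈ L := ae_of_ae_map measurable_snd.aemeasurable hν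
  exact hfst.and hsnd

lemma IsCoupling.lintegral_ofReal (h : IsCoupling μ ν γ) (hK : IsCompact K) (hL : IsCompact L)
    (hμ : μ Kᶜ = 0) (hν : ν Lᶜ = 0) {k : Euc N × Euc N → ℝ} (hk : Continuous k) (hk0 : 0 ≤ k) :
    ∫⁻ p, ENNReal.ofReal (k p) ∂γ = ENNReal.ofReal (∫ p, k p ∂γ) := by
  have := h.1
  have hint : IntegrableOn k (K ×ˢ L) γ := hk.continuousOn.integrableOn_compact (hK.prod hL)
  rw [IntegrableOn, Measure.restrict_eq_self_of_ae_mem (h.ae_mem_prod hμ hν)] at hint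
  exact (ofReal_integral_eq_lintegral_ofReal hint (.of_forall hk0)).symm

lemma IsSecondaryOptimal.isLexOptimal {c : Euc N → Euc N → ℝ}
    (hπ : IsSecondaryOptimal c μ ν π) (hc : Continuous fun p : Euc N × Euc N ↦ c p.1 p.2)
    (hc0 : ∀ x y, 0 ≤ c x y) (hK : IsCompact K) (hL : IsCompact L) (hμ : μ Kᶜ = 0)
    (hν : ν Lᶜ = 0) :
    IsLexOptimal (fun p ↦ c p.1 p.2) (fun p ↦ dist p.1 p.2 ^ 2) π := by
  obtain ⟨⟨hcoup, hmin⟩, hsec⟩ := hπ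
  have hcost {γ} (hγ : IsCoupling μ ν γ) :
      planCost c γ = ENNReal.ofReal (∫ p, c p.1 p.2 ∂γ) :=
    hγ.lintegral_ofReal hK hL hμ hν hc fun p : Euc N × Euc N ↦ hc0 p.1 p.2
  have hdist {γ} (hγ : IsCoupling μ ν γ) :
      secondaryCost γ = ENNReal.ofReal (∫ p, dist p.1 p.2 ^ 2 ∂γ) :=
    hγ.lintegral_ofReal hK hL hμ hν (by fun_prop) fun p ↦ sq_nonneg _
  intro γ hfst hsnd
  have hγ : IsCoupling μ ν γ := by
    have := hcoup.1
    refine ⟨⟨?_⟩, hfst.trans hcoup.2.1, hsnd.trans hcoup.2.2⟩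
    rw [← Measure.fst_univ, hfst, measure_univ]
  rw [Prod.Lex.toLex_le_toLex']
  constructor
  · have hle : planCost c π ≤ planCost c γ := hmin.trans_le (iInf₂_le γ hγ)
    rw [hcost hcoup, hcost hγ] at hle
    exact (ENNReal.ofReal_le_ofReal_iff (integral_nonneg fun p : Euc N × Euc N ↦ hc0 p.1 p.2)).1 hle
  · intro (heq : ∫ p, c p.1 p.2 ∂π = ∫ p, c p.1 p.2 ∂γ)
    have hopt : planCost c γ = minCost c μ ν := by
      rw [hcost hγ, ← heq, ← hcost hcoup, hmin]
    have hle := hsec γ ⟨hγ, hopt⟩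
    rw [hdist hcoup, hdist hγ] at hle
    exact (ENNReal.ofReal_le_ofReal_iff (integral_nonneg fun _ ↦ sq_nonneg _)).1 hle

end Euclidean

theorem secondary_optimal_concentrated_on_doubly_monotone {N : ℕ}
    (c : Euc N → Euc N → ℝ)
    (hc : Continuous fun p : Euc N × Euc N => c p.1 p.2)
    (hcnn : ∀ x y, 0 ≤ c x y)
    (μ ν : Measure (Euc N)) [IsProbabilityMeasure μ] [IsProbabilityMeasure ν]
    (hμcpt : ∃ K : Set (Euc N), IsCompact K ∧ μ Kᶜ = 0)
    (hνcpt : ∃ K : Set (Euc N), IsCompact K ∧ ν Kᶜ = 0)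
    (hfin : minCost c μ ν ≠ ⊤)
    (π : Measure (Euc N × Euc N)) (hπ : IsSecondaryOptimal c μ ν π) :
    ∃ Γ : Set (Euc N × Euc N), π Γᶜ = 0 ∧
      ∀ x y x' y', (x, y) ∈ Γ → (x', y') ∈ Γ →
        c x y + c x' y' ≤ c x y' + c x' y ∧
        (c x y + c x' y' = c x y' + c x' y →
          dist x y ^ 2 + dist x' y' ^ 2 ≤ dist x y' ^ 2 + dist x' y ^ 2) := by
  obtain ⟨K, hK, hμK⟩ := hμcpt
  obtain ⟨L, hL, hνL⟩ := hνcpt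
  have hcoup : IsCoupling μ ν π := hπ.1.1
  have := hcoup.1
  obtain ⟨Γ, hΓ, hmono⟩ := secondary_optimal_concentrated_on_doubly_monotone_general hK hL
    hc.continuousOn (by fun_prop) (hcoup.ae_mem_prod hμK hνL)
    (hπ.isLexOptimal hc hcnn hK hL hμK hνL)
  exact ⟨Γ, hΓ, fun x y x' y' h h' ↦ hmono.swap_le h h'⟩
end
end
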